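/- arXiv:2508.02249 — 10 statements merged into one kernel-verified Lean document; each statement's English description precedes it below -/
import Mathlib

section
/- Let Δ ≥ 1 be an integer and let A ∈ ℤ^{m×n} be a Δ-modular matrix of full column rank. If n ≥ ⌈(Δ−1)/2⌉·(Δ−1) + 1, then there exists a nonzero integer vector z ∈ ℤ^n with ‖Az‖_∞ = 1; in particular, the minimum of ‖Az‖_∞ over all nonzero z ∈ ℤ^n equals 1. -/
open Matrix

/-- If all square matrices with rows in `R` have determinant at most one in absolute value, and `R`
contains vectors restricting on `J` to a star of differences `e_c - e_j`, then the coordinates in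
`J` of any vector of `R` have sum at most one in absolute value. -/
theorem abs_sum_le_one_of_star {ι : Type*} [Fintype ι] [DecidableEq ι] {R : Set (ι → ℚ)}
    (hdet : ∀ D : Matrix ι ι ℚ, (∀ i, D i ∈ R) → |D.det| ≤ 1)
    (hunit : ∀ i, Pi.single i 1 ∈ R) {J : Finset ι} {c : ι} (hc : c ∈ J)
    (hstar : ∀ j ∈ J, j ≠ c → ∃ u ∈ R, u c = 1 ∧ u j = -1 ∧ ∀ k ∈ J, k ≠ c → k ≠ j → u k = 0)
    {w : ι → ℚ} (hw : w ∈ R) : |∑ j ∈ J, w j| ≤ 1 := by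
  choose! u huR huc huj hu0 using hstar
  let D : Matrix ι ι ℚ := fun i =>
    if i = c then w else if i ∈ J then u i else Pi.single i 1
  have hDR : ∀ i, D i ∈ R := by
    intro i
    by_cases hi : i = c
    · simpa [D, hi] using hw
    · by_cases hJ : i ∈ J
      · simpa [D, hi, hJ] using huR i hJ hi
      · simpa [D, hi, hJ] using hunit i
  have hDv : D *ᵥ (fun j => if j ∈ J then 1 else 0) = Pi.single c (∑ j ∈ J, w j) := by
    funext i
    have hrow : (D *ᵥ (fun j => if j ∈ J then 1 else 0)) i = ∑ j ∈ J, D i j := by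
      simp [mulVec, dotProduct]
    rw [hrow]
    by_cases hi : i = c
    · subst hi
      simp [D]
    · rw [Pi.single_eq_of_ne hi]
      by_cases hJ : i ∈ J
      · simp only [D, hi, hJ, if_true, if_false]
        rw [Finset.sum_eq_add_of_mem c i hc hJ (Ne.symm hi)
          (fun k hk hne => hu0 i hJ hi k hk hne.1 hne.2), huc i hJ hi, huj i hJ hi]
        norm_num
      · simp only [D, hi, hJ, if_false]
        refine Finset.sum_eq_zero fun k hk => Pi.single_eq_of_ne ?_ _
        rintro rfl
        exact hJ hk
  set E := D.updateRow c (Pi.single c 1) with hE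
  have hErow : ∀ i, E i = if i ∈ J ∧ i ≠ c then u i else Pi.single i 1 := by
    intro i
    by_cases hi : i = c
    · subst hi
      simp [hE]
    · rw [hE, updateRow_ne hi]
      simp [D, hi]
  have hEE : E * E = 1 := by
    ext i k
    rw [mul_apply]
    by_cases hi : i ∈ J ∧ i ≠ c
    · have hterm : ∀ l, E i l * E l k =
          (if l = k then u i l else 0) - (if l = i then u i k - (1 : Matrix ι ι ℚ) i k else 0) := by
        intro l
        rw [hErow i, if_pos hi, hErow l]
        by_cases hl : l ∈ J ∧ l ≠ c
        · rw [if_pos hl]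
          by_cases hli : l = i
          · subst hli
            rw [huj l hi.1 hi.2]
            by_cases hlk : l = k
            · subst hlk
              simp [huj l hi.1 hi.2]
            · simp [hlk]
          · rw [hu0 i hi.1 hi.2 l hl.1 hl.2 hli]
            simp [hli]
        · have hli : l ≠ i := by
            rintro rfl
            exact hl hi
          rw [if_neg hl]
          by_cases hlk : l = k
          · subst hlk
            simp [hli]
          · simp [hlk, hli, Ne.symm hlk]
      simp only [hterm, Finset.sum_sub_distrib, Finset.sum_ite_eq', Finset.mem_univ, if_true]
      ring
    · have hEi : E i = Pi.single i 1 := by rw [hErow i, if_neg hi]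
      simp [hEi, Pi.single_apply, one_apply, eq_comm]
  have hEdet : |E.det| = 1 := by
    have h : E.det * E.det = 1 := by rw [← det_mul, hEE, det_one]
    rcases mul_self_eq_one_iff.mp h with h | h <;> simp [h]
  have hdetD : D.det = E.det * ∑ j ∈ J, w j := by
    have h := congrFun (congrArg (fun v => D.adjugate *ᵥ v) hDv) c
    simpa [mulVec_mulVec, adjugate_mul, smul_mulVec, hc, adjugate_apply, ← hE] using h
  have := hdet D hDR
  rwa [hdetD, abs_mul, hEdet, one_mul] at this

/-- Either a difference of two coordinates in `J`, or the sum of all of them, is bounded by one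
on `R`. -/
theorem exists_short_combination {ι : Type*} [Fintype ι] [DecidableEq ι] {R : Set (ι → ℚ)}
    (hdet : ∀ D : Matrix ι ι ℚ, (∀ i, D i ∈ R) → |D.det| ≤ 1)
    (hunit : ∀ i, Pi.single i 1 ∈ R) (hneg : ∀ w ∈ R, -w ∈ R) {J : Finset ι} (hJ : J.Nonempty)
    (hint : ∀ w ∈ R, ∀ i ∈ J, ∀ j ∈ J, ∃ k : ℤ, w i - w j = k) :
    (∃ i ∈ J, ∃ j ∈ J, i ≠ j ∧ ∀ w ∈ R, |w i - w j| ≤ 1) ∨ ∀ w ∈ R, |∑ j ∈ J, w j| ≤ 1 := by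
  by_cases hpair : ∃ i ∈ J, ∃ j ∈ J, i ≠ j ∧ ∀ w ∈ R, |w i - w j| ≤ 1
  · exact Or.inl hpair
  right
  push Not at hpair
  have hentry : ∀ w ∈ R, ∀ i, |w i| ≤ 1 := fun w hw i => by
    simpa using abs_sum_le_one_of_star hdet hunit (Finset.mem_singleton_self i)
      (by simp) hw
  have hedge : ∀ i ∈ J, ∀ j ∈ J, i ≠ j → ∃ u ∈ R, u i = 1 ∧ u j = -1 := by
    intro i hi j hj hij
    obtain ⟨w, hw, hgt⟩ := hpair i hi j hj hij
    obtain ⟨k, hk⟩ := hint w hw i hi j hj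
    have h1 := abs_le.mp (hentry w hw i)
    have h2 := abs_le.mp (hentry w hw j)
    rw [lt_abs] at hgt
    rcases hgt with h | h
    · rw [hk] at h
      have : (2 : ℚ) ≤ k := by exact_mod_cast (show (2 : ℤ) ≤ k by exact_mod_cast h)
      exact ⟨w, hw, by linarith, by linarith⟩
    · rw [hk] at h
      have : (2 : ℚ) ≤ -k := by exact_mod_cast (show (2 : ℤ) ≤ -k by exact_mod_cast h)
      refine ⟨-w, hneg w hw, ?_, ?_⟩ <;> simp only [Pi.neg_apply] <;> linarith
  have hadd : ∀ i ∈ J, ∀ j ∈ J, i ≠ j → ∀ w ∈ R, |w i + w j| ≤ 1 := by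
    intro i hi j hj hij w hw
    obtain ⟨u, hu, hui, huj⟩ := hedge i hi j hj hij
    rw [← Finset.sum_pair hij]
    refine abs_sum_le_one_of_star hdet hunit (Finset.mem_insert_self i {j}) ?_ hw
    intro k hk hki
    have hkj : k = j := by simpa [hki] using hk
    subst hkj
    refine ⟨u, hu, hui, huj, fun l hl hli hlk => ?_⟩
    simp [hli, hlk] at hl
  obtain ⟨c, hc⟩ := hJ
  intro w hw
  refine abs_sum_le_one_of_star hdet hunit hc (fun j hj hjc => ?_) hw
  obtain ⟨u, hu, huc, huj⟩ := hedge c hc j hj hjc.symm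
  refine ⟨u, hu, huc, huj, fun k hk hkc hkj => ?_⟩
  have h1 := abs_le.mp (hadd c hc k hk hkc.symm u hu)
  have h2 := abs_le.mp (hadd j hj k hk hkj.symm u hu)
  linarith

/-- A long sequence in a finite abelian group takes, up to sign, some value at least as many times
as its order. -/
theorem exists_addOrderOf_le_card {G : Type*} [AddCommGroup G] [Fintype G] [DecidableEq G]
    {n : ℕ} (c : Fin n → G)
    (hn : ((Fintype.card G - 1) + 1) / 2 * (Fintype.card G - 1) + 1 ≤ n) :
    ∃ g : G, addOrderOf g ≤ (Finset.univ.filter fun i => c i = g ∨ c i = -g).card := by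
  by_contra! hlt
  have hne : ∀ i, c i ≠ 0 := by
    intro i hi
    have h := hlt 0
    simp only [addOrderOf_zero, neg_zero, or_self, Nat.lt_one_iff, Finset.card_eq_zero,
      Finset.filter_eq_empty_iff] at h
    exact h (Finset.mem_univ i) hi
  set S : Finset G := Finset.univ.erase 0
  have hcount : ∑ g ∈ S, (Finset.univ.filter fun i => c i = g).card = n := by
    rw [← Finset.card_eq_sum_card_fiberwise (s := Finset.univ) (f := c) (t := S)]
    · simp
    · intro i _
      simp [S, hne i]
  have hcount_neg : ∑ g ∈ S, (Finset.univ.filter fun i => c i = -g).card = n := by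
    have h : ∀ g, (Finset.univ.filter fun i => c i = -g) =
        (Finset.univ.filter fun i => -c i = g) := fun g => by
      ext i
      simp [neg_eq_iff_eq_neg]
    simp only [h]
    rw [← Finset.card_eq_sum_card_fiberwise (s := Finset.univ) (f := fun i => -c i) (t := S)]
    · simp
    · intro i _
      simp [S, hne i]
  have hbound : ∀ g ∈ S, (Finset.univ.filter fun i => c i = g).card +
      (Finset.univ.filter fun i => c i = -g).card ≤ max 2 (Fintype.card G - 1) := by
    intro g _
    have hg := hlt g
    by_cases hgg : -g = g
    · simp only [hgg, or_self] at hg ⊢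
      have : addOrderOf g ≤ 2 := by
        refine addOrderOf_le_of_nsmul_eq_zero two_pos ?_
        rw [two_nsmul]
        nth_rewrite 1 [← hgg]
        exact neg_add_cancel g
      omega
    · rw [Finset.filter_or, Finset.card_union_of_disjoint] at hg
      · have := addOrderOf_le_card_univ (x := g)
        omega
      · refine Finset.disjoint_filter.mpr fun i _ h1 h2 => hgg ?_
        exact h2.symm.trans h1
  have htotal := Finset.sum_le_card_nsmul S _ _ hbound
  rw [Finset.sum_add_distrib, hcount, hcount_neg, Finset.card_erase_of_mem (Finset.mem_univ _),
    Finset.card_univ, smul_eq_mul] at htotal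
  generalize Fintype.card G - 1 = d at *
  rcases le_or_gt d 1 with hd | hd
  · interval_cases d <;> omega
  · rw [max_eq_right hd] at htotal
    have : d ≤ 2 * ((d + 1) / 2) := by omega
    nlinarith

/-- The lattice spanned by the columns of `B` has index `|det B|`. -/
theorem card_quotient_range_mulVecLin {n : ℕ} (B : Matrix (Fin n) (Fin n) ℤ) (hB : B.det ≠ 0) :
    Nat.card ((Fin n → ℤ) ⧸ LinearMap.range B.mulVecLin) = B.det.natAbs := by
  have hinj : Function.Injective B.mulVecLin := by
    rw [← LinearMap.ker_eq_bot, LinearMap.ker_eq_bot']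
    exact fun z hz => eq_zero_of_mulVec_eq_zero hB hz
  let e := LinearEquiv.ofInjective B.mulVecLin hinj
  rw [← Submodule.natAbs_det_equiv (LinearMap.range B.mulVecLin) e, ← LinearMap.det_toLin' B]
  rfl

/-- If the signed unit vectors `ε j • e_j`, `j ∈ J`, are congruent modulo the column lattice of a
maximal submatrix of `A` and their sum lies in it, then `‖A z‖_∞ ≤ 1` for some nonzero `z`. -/
theorem exists_mulVec_le_one_of_signed_classes {n m Δ : ℕ} (hΔ : 1 ≤ Δ) (A : Matrix (Fin m) (Fin n) ℤ)
    (hub : ∀ f : Fin n → Fin m, Function.Injective f → |(A.submatrix f id).det| ≤ (Δ : ℤ))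
    {b : Fin n → Fin m} (hb : |(A.submatrix b id).det| = (Δ : ℤ)) {ε : Fin n → ℤ}
    (hε : ∀ i, |ε i| = 1) {J : Finset (Fin n)} (hJ : J.Nonempty)
    (hdiff : ∀ i ∈ J, ∀ j ∈ J, Pi.single i (ε i) - Pi.single j (ε j) ∈
      LinearMap.range (A.submatrix b id).mulVecLin)
    (hsum : ∑ j ∈ J, Pi.single j (ε j) ∈ LinearMap.range (A.submatrix b id).mulVecLin) :
    ∃ z : Fin n → ℤ, z ≠ 0 ∧ ∀ r, |(A *ᵥ z) r| ≤ 1 := by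
  set B := A.submatrix b id
  have hBdet : B.det ≠ 0 := by
    intro h
    rw [h, abs_zero] at hb
    omega
  let castQ : ℤ →+* ℚ := Int.castRingHom ℚ
  let Bq : Matrix (Fin n) (Fin n) ℚ := B.map castQ
  have hBqdet : Bq.det = (B.det : ℚ) := (castQ.map_det B).symm
  have hBqunit : IsUnit Bq.det := by
    rw [hBqdet]
    exact isUnit_iff_ne_zero.mpr (by exact_mod_cast hBdet)
  let W : Matrix (Fin m) (Fin n) ℚ := A.map castQ * Bq⁻¹
  have hWB : W * Bq = A.map castQ := nonsing_inv_mul_cancel_right Bq _ hBqunit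
  have hWz : ∀ z r, (∑ i, W r i * ((B *ᵥ z) i : ℚ)) = ((A *ᵥ z) r : ℚ) := by
    intro z r
    have h := congrFun (congrArg (fun M => M *ᵥ (fun i => castQ (z i))) hWB) r
    simp only [← mulVec_mulVec] at h
    have hB' : Bq *ᵥ (fun i => castQ (z i)) = fun i => castQ ((B *ᵥ z) i) := by
      funext i
      exact (castQ.map_mulVec B z i).symm
    have hA' : (A.map castQ *ᵥ (fun i => castQ (z i))) r = castQ ((A *ᵥ z) r) :=
      (castQ.map_mulVec A z r).symm
    rw [hB', hA'] at h
    exact h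
  have hWb : ∀ i, W (b i) = Pi.single i 1 := by
    intro i
    have h : W.submatrix b id = 1 := by
      have : W.submatrix b id * Bq = 1 * Bq := by
        rw [one_mul]
        ext i j
        exact congrFun (congrFun hWB (b i)) j
      exact (isUnit_iff_isUnit_det Bq |>.mpr hBqunit).mul_left_injective this
    funext j
    have := congrFun (congrFun h i) j
    simpa [one_apply, Pi.single_apply, eq_comm] using this
  have hWdet : ∀ f : Fin n → Fin m, |(W.submatrix f id).det| ≤ 1 := by
    intro f
    have hmul : (W.submatrix f id).det * B.det = ((A.submatrix f id).det : ℚ) := by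
      have h : W.submatrix f id * Bq = (A.submatrix f id).map castQ := by
        ext i j
        exact congrFun (congrFun hWB (f i)) j
      rw [← hBqdet, ← det_mul, h]
      exact (castQ.map_det _).symm
    have hle : |(A.submatrix f id).det| ≤ (Δ : ℤ) := by
      by_cases hf : Function.Injective f
      · exact hub f hf
      · obtain ⟨i, j, hij, hne⟩ := Function.not_injective_iff.mp hf
        rw [det_zero_of_row_eq hne (by funext k; simp [hij])]
        simp
    have hΔq : (0 : ℚ) < Δ := by exact_mod_cast hΔ
    have hbq : |(B.det : ℚ)| = Δ := by exact_mod_cast hb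
    have habs : |(W.submatrix f id).det| * Δ ≤ 1 * Δ := by
      rw [← hbq, ← abs_mul, hmul, hbq, one_mul]
      exact_mod_cast hle
    exact le_of_mul_le_mul_right habs hΔq
  have hεq : ∀ i, |(ε i : ℚ)| = 1 := fun i => by exact_mod_cast hε i
  let R : Set (Fin n → ℚ) := {w | ∃ r, ∃ s : ℚ, |s| = 1 ∧ w = fun i => s * (W r i * ε i)}
  have hRdet : ∀ D : Matrix (Fin n) (Fin n) ℚ, (∀ i, D i ∈ R) → |D.det| ≤ 1 := by
    intro D hD
    choose f s hs hDf using hD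
    have : D = diagonal s * (W.submatrix f id * diagonal fun i => (ε i : ℚ)) := by
      ext i j
      rw [diagonal_mul, mul_diagonal, hDf i]
      rfl
    rw [this, det_mul, det_mul, det_diagonal, det_diagonal, abs_mul, abs_mul, Finset.abs_prod,
      Finset.abs_prod]
    simpa [hs, hεq] using hWdet f
  have hRunit : ∀ i, Pi.single i 1 ∈ R := by
    intro i
    refine ⟨b i, ε i, hεq i, ?_⟩
    funext j
    rw [hWb i]
    by_cases hij : j = i
    · subst hij
      have : (ε j : ℚ) * ε j = 1 := by rw [← abs_mul_abs_self, hεq, one_mul]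
      simp [this]
    · simp [hij]
  have hRneg : ∀ w ∈ R, -w ∈ R := by
    rintro w ⟨r, s, hs, rfl⟩
    refine ⟨r, -s, by rwa [abs_neg], ?_⟩
    funext i
    simp
  have hsingle : ∀ r i, ∑ k, W r k * ((Pi.single i (ε i) : Fin n → ℤ) k : ℚ) = W r i * ε i := by
    intro r i
    simp [Pi.single_apply]
  have hpair : ∀ r i j z, B *ᵥ z = Pi.single i (ε i) - Pi.single j (ε j) →
      W r i * ε i - W r j * ε j = ((A *ᵥ z) r : ℚ) := by
    intro r i j z hz
    rw [← hWz, hz, ← hsingle, ← hsingle, ← Finset.sum_sub_distrib]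
    simp [mul_sub]
  have hRint : ∀ w ∈ R, ∀ i ∈ J, ∀ j ∈ J, ∃ k : ℤ, w i - w j = k := by
    rintro w ⟨r, s, hs, rfl⟩ i hi j hj
    obtain ⟨z, hz⟩ := hdiff i hi j hj
    have h := hpair r i j z hz
    rcases (abs_eq zero_le_one).mp hs with rfl | rfl
    · exact ⟨(A *ᵥ z) r, by rw [← h]; ring⟩
    · exact ⟨-(A *ᵥ z) r, by push_cast; rw [← h]; ring⟩
  have hWR : ∀ r, (fun i => W r i * (ε i : ℚ)) ∈ R := fun r => ⟨r, 1, abs_one, by simp⟩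
  have hεne : ∀ i, ε i ≠ 0 := fun i h => by simpa [h] using hε i
  have hznz : ∀ z : Fin n → ℤ, ∀ y, B *ᵥ z = y → y ≠ 0 → z ≠ 0 := by
    rintro z _ rfl hy rfl
    exact hy (mulVec_zero B)
  rcases exists_short_combination hRdet hRunit hRneg hJ hRint with ⟨i, hi, j, hj, hij, hle⟩ | hle
  · obtain ⟨z, hz⟩ := hdiff i hi j hj
    refine ⟨z, hznz z _ hz fun h => hεne i ?_, fun r => ?_⟩
    · simpa [hij] using congrFun h i
    · have := hle _ (hWR r)
      rw [hpair r i j z hz] at this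
      exact_mod_cast this
  · obtain ⟨z, hz⟩ := hsum
    obtain ⟨c, hc⟩ := hJ
    refine ⟨z, hznz z _ hz fun h => hεne c ?_, fun r => ?_⟩
    · simpa [Finset.sum_apply, Pi.single_apply, hc] using congrFun h c
    · have := hle _ (hWR r)
      have heq : ∑ j ∈ J, W r j * (ε j : ℚ) = ((A *ᵥ z) r : ℚ) := by
        rw [mulVecLin_apply] at hz
        rw [← hWz, hz]
        simp only [← hsingle]
        rw [Finset.sum_comm]
        simp only [Finset.sum_apply, Int.cast_sum, Finset.mul_sum]
      rw [heq] at this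
      exact_mod_cast this

/-- Let `Δ ≥ 1` and let `A ∈ ℤ^{m×n}` be a `Δ`-modular matrix of full
column rank (every `n×n` submatrix has `|det| ≤ Δ` and one attains `Δ`).
If `n ≥ ⌈(Δ−1)/2⌉·(Δ−1) + 1`, then there is a nonzero `z ∈ ℤ^n` with `‖Az‖_∞ = 1`;
in particular the minimum of `‖Az‖_∞` over nonzero integer `z` equals `1`. -/
theorem shortest_vector_threshold (Δ m n : ℕ) (hΔ : 1 ≤ Δ)
    (A : Matrix (Fin m) (Fin n) ℤ)
    (hrank : A.rank = n)
    (hub : ∀ f : Fin n → Fin m, Function.Injective f →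
      |(A.submatrix f id).det| ≤ (Δ : ℤ))
    (hattain : ∃ f : Fin n → Fin m, Function.Injective f ∧
      |(A.submatrix f id).det| = (Δ : ℤ))
    (hn : ((Δ - 1) + 1) / 2 * (Δ - 1) + 1 ≤ n) :
    (∃ z : Fin n → ℤ, z ≠ 0 ∧ (∀ i, |A.mulVec z i| ≤ 1) ∧ (∃ i, |A.mulVec z i| = 1)) ∧
    (∀ z : Fin n → ℤ, z ≠ 0 → ∃ i, 1 ≤ |A.mulVec z i|) := by
  obtain ⟨b, -, hb⟩ := hattain
  set B := A.submatrix b id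
  have hBdet : B.det ≠ 0 := by
    intro h
    rw [h, abs_zero] at hb
    omega
  have hlower : ∀ z : Fin n → ℤ, z ≠ 0 → ∃ i, 1 ≤ |A.mulVec z i| := by
    intro z hz
    by_contra! hlt
    refine hz (eq_zero_of_mulVec_eq_zero hBdet ?_)
    funext i
    exact Int.abs_lt_one_iff.mp (hlt (b i))
  refine ⟨?_, hlower⟩
  suffices h : ∃ z : Fin n → ℤ, z ≠ 0 ∧ ∀ r, |(A *ᵥ z) r| ≤ 1 by
    obtain ⟨z, hz, hle⟩ := h
    obtain ⟨i, hi⟩ := hlower z hz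
    exact ⟨z, hz, hle, i, le_antisymm (hle i) hi⟩
  classical
  set L := LinearMap.range B.mulVecLin
  have hcard : Nat.card ((Fin n → ℤ) ⧸ L) = Δ := by
    rw [card_quotient_range_mulVecLin B hBdet]
    rw [Int.abs_eq_natAbs] at hb
    exact_mod_cast hb
  have : Finite ((Fin n → ℤ) ⧸ L) := Nat.finite_of_card_ne_zero (by omega)
  have : Fintype ((Fin n → ℤ) ⧸ L) := Fintype.ofFinite _
  rw [Nat.card_eq_fintype_card] at hcard
  let c : Fin n → (Fin n → ℤ) ⧸ L := fun i => L.mkQ (Pi.single i 1)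
  obtain ⟨g, hg⟩ := exists_addOrderOf_le_card c (by rwa [hcard])
  obtain ⟨J, hJsub, hJcard⟩ := Finset.exists_subset_card_eq hg
  let ε : Fin n → ℤ := fun i => if c i = g then 1 else -1
  have hclass : ∀ i ∈ J, L.mkQ (Pi.single i (ε i)) = g := by
    intro i hi
    have hsmul : (Pi.single i (ε i) : Fin n → ℤ) = ε i • Pi.single i 1 := by
      rw [← Pi.single_smul, smul_eq_mul, mul_one]
    rw [hsmul, map_smul]
    change ε i • c i = g
    rcases (Finset.mem_filter.mp (hJsub hi)).2 with h | h
    · simp [ε, h]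
    · by_cases hcg : c i = g
      · simp [ε, hcg]
      · simp only [ε, hcg, if_false]
        rw [h, neg_smul, one_smul, neg_neg]
  refine exists_mulVec_le_one_of_signed_classes hΔ A hub hb (ε := ε) (J := J) (fun i => ?_)
    ?_ (fun i hi j hj => ?_) ?_
  · by_cases h : c i = g <;> simp [ε, h]
  · rw [← Finset.card_pos, hJcard]
    exact addOrderOf_pos g
  · rw [← Submodule.ker_mkQ (LinearMap.range _), LinearMap.mem_ker, map_sub]
    exact sub_eq_zero.mpr ((hclass i hi).trans (hclass j hj).symm)
  · rw [← Submodule.ker_mkQ (LinearMap.range _), LinearMap.mem_ker, map_sum]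
    refine (Finset.sum_congr rfl hclass).trans ?_
    rw [Finset.sum_const, hJcard, addOrderOf_nsmul_eq_zero]
end

section
/- For every integer Δ ≥ 2 there exist m ∈ ℕ and a Δ-modular matrix A ∈ ℤ^{m×(Δ−1)} of full column rank such that ‖Az‖_∞ ≥ 2 for every nonzero integer vector z ∈ ℤ^{Δ−1}. (Consequently the threshold dimension below which shortest Δ-modular lattice vectors can have infinity norm at least 2 is itself at least Δ − 1.) -/
/-- A vector whose entries, and sums of two distinct entries, all lie in `{-1, 0, 1}`:
equivalently it is `0`, `± eᵢ` or `eᵢ - eⱼ`. -/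
def IsNetworkRow {n : ℕ} (v : Fin n → ℤ) : Prop :=
  ∀ k, |v k| ≤ 1 ∧ ∀ l, l ≠ k → |v k + v l| ≤ 1

/-- A network row with nonzero sum has at most one nonzero entry. -/
lemma IsNetworkRow.eq_zero_of_sum_ne_zero {n : ℕ} {v : Fin n → ℤ} (hv : IsNetworkRow v)
    (hs : ∑ k, v k ≠ 0) {a b : Fin n} (ha : v a ≠ 0) (hab : b ≠ a) : v b = 0 := by
  by_contra hb
  apply hs
  have ha₁ := abs_le.1 (hv a).1
  have hb₁ := abs_le.1 (hv b).1
  have hab₁ := abs_le.1 ((hv a).2 b hab)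
  rw [Fintype.sum_eq_add a b hab.symm]
  · omega
  · rintro c ⟨hca, hcb⟩
    have h₁ := abs_le.1 ((hv a).2 c hca)
    have h₂ := abs_le.1 ((hv b).2 c hcb)
    omega

/-- A square matrix all of whose rows are network rows has determinant in `{-1, 0, 1}`. -/
lemma abs_det_le_one_of_isNetworkRow {n : ℕ} (M : Matrix (Fin n) (Fin n) ℤ)
    (hM : ∀ i, IsNetworkRow (M i)) : |M.det| ≤ 1 := by
  induction n with
  | zero => simp
  | succ n ih =>
    by_cases h : ∀ i, ∑ k, M i k = 0
    · have h0 : M.det = 0 := by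
        refine Matrix.exists_mulVec_eq_zero_iff.1 ⟨fun _ => 1, ?_, ?_⟩
        · exact fun h1 => one_ne_zero (congrFun h1 0)
        · ext i
          simpa [Matrix.mulVec, dotProduct] using h i
      simp [h0]
    · push Not at h
      obtain ⟨i, hi⟩ := h
      obtain ⟨a, -, ha⟩ := Finset.exists_ne_zero_of_sum_ne_zero hi
      rw [Matrix.det_succ_row M i, Fintype.sum_eq_single a]
      · have hminor := ih (M.submatrix i.succAbove a.succAbove) fun r k =>
          ⟨(hM _ _).1, fun l hl => (hM _ _).2 _ fun h => hl (Fin.succAbove_right_injective h)⟩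
        rw [abs_mul, abs_mul, abs_pow, abs_neg, abs_one, one_pow, one_mul]
        exact mul_le_one₀ (hM i a).1 (abs_nonneg _) hminor
      · intro b hb
        simp [(hM i).eq_zero_of_sum_ne_zero hi ha hb]

/-- The matrix with rows `eᵢ` (at `(i, i)`) and `eᵢ - eⱼ` (at `(i, j)`, `i ≠ j`). -/
def networkMatrix (n : ℕ) : Matrix (Fin n × Fin n) (Fin n) ℤ :=
  fun p => if p.1 = p.2 then Pi.single p.1 1 else Pi.single p.1 1 - Pi.single p.2 1

lemma isNetworkRow_networkMatrix {n : ℕ} (p : Fin n × Fin n) :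
    IsNetworkRow (networkMatrix n p) := by
  intro k
  simp only [networkMatrix, abs_le]
  split_ifs <;> simp only [Pi.sub_apply, Pi.single_apply] <;> grind

/-- The identity plus the all-ones matrix; its columns have sum `n + 1`. -/
def onePlusOnes (n : ℕ) : Matrix (Fin n) (Fin n) ℤ :=
  1 + Matrix.of fun _ _ => 1

lemma det_onePlusOnes (n : ℕ) : (onePlusOnes n).det = n + 1 := by
  have h : onePlusOnes n = 1 + Matrix.replicateCol Unit (fun _ : Fin n => (1 : ℤ)) *
      Matrix.replicateRow Unit (fun _ : Fin n => (1 : ℤ)) := by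
    ext i j
    simp [onePlusOnes, Matrix.mul_apply]
  rw [h, Matrix.det_one_add_replicateCol_mul_replicateRow]
  simp [dotProduct, add_comm]

lemma onePlusOnes_mulVec {n : ℕ} (z : Fin n → ℤ) (i : Fin n) :
    (onePlusOnes n).mulVec z i = z i + ∑ k, z k := by
  simp [onePlusOnes, Matrix.mulVec, dotProduct, Matrix.one_apply, add_mul,
    Finset.sum_add_distrib]

lemma networkMatrix_mulVec_self {n : ℕ} (x : Fin n → ℤ) (i : Fin n) :
    (networkMatrix n).mulVec x (i, i) = x i := by
  simp [networkMatrix, Matrix.mulVec]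

lemma networkMatrix_mulVec_of_ne {n : ℕ} (x : Fin n → ℤ) {i j : Fin n} (h : i ≠ j) :
    (networkMatrix n).mulVec x (i, j) = x i - x j := by
  simp [networkMatrix, Matrix.mulVec, h, dotProduct, sub_mul, Finset.sum_sub_distrib,
    Pi.single_apply]

/-- A vector with entries and differences of entries in `{-1, 0, 1}` whose sum is divisible
by `n + 1` has sum zero, hence vanishes. -/
lemma eq_zero_of_sum_eq_succ_mul {n : ℕ} {x : Fin n → ℤ} {s : ℤ} (hx : ∀ i, |x i| ≤ 1)
    (hd : ∀ i j, i ≠ j → |x i - x j| ≤ 1) (hs : ∑ i, x i = (n + 1) * s) : s = 0 ∧ x = 0 := by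
  have hle : |∑ i, x i| ≤ n :=
    (Finset.abs_sum_le_sum_abs _ _).trans
      ((Finset.sum_le_sum fun i _ => hx i).trans_eq (by simp))
  have hs0 : s = 0 := by
    rw [hs, abs_le] at hle
    by_contra h
    rcases lt_or_gt_of_ne h with h | h <;> nlinarith
  refine ⟨hs0, ?_⟩
  rw [hs0, mul_zero] at hs
  by_cases hpos : ∃ i, 0 < x i
  · obtain ⟨i, hi⟩ := hpos
    have hnn : ∀ j, 0 ≤ x j := fun j => by
      rcases eq_or_ne i j with rfl | hij
      · exact hi.le
      · have := abs_le.1 (hd i j hij)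
        omega
    exact (Fintype.sum_eq_zero_iff_of_nonneg hnn).1 hs
  · push Not at hpos
    exact (Fintype.sum_eq_zero_iff_of_nonpos hpos).1 hs

lemma exists_two_le_abs_mulVec {n : ℕ} {z : Fin n → ℤ} (hz : z ≠ 0) :
    ∃ p, 2 ≤ |(networkMatrix n * onePlusOnes n).mulVec z p| := by
  by_contra! h
  simp only [← Matrix.mulVec_mulVec] at h
  set x := (onePlusOnes n).mulVec z with hx
  have hsum : ∑ i, x i = (n + 1) * ∑ k, z k := by
    simp only [hx, onePlusOnes_mulVec, Finset.sum_add_distrib, Finset.sum_const,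
      Finset.card_univ, Fintype.card_fin, nsmul_eq_mul]
    ring
  obtain ⟨hs, hx0⟩ := eq_zero_of_sum_eq_succ_mul
    (fun i => by have := h (i, i); rw [networkMatrix_mulVec_self] at this; omega)
    (fun i j hij => by have := h (i, j); rw [networkMatrix_mulVec_of_ne _ hij] at this; omega)
    hsum
  apply hz
  ext i
  have hi := onePlusOnes_mulVec z i
  rw [← hx, hx0, hs] at hi
  simpa using hi.symm

lemma exists_modular_matrix (n : ℕ) :
    ∃ (m : ℕ) (A : Matrix (Fin m) (Fin n) ℤ),
      A.rank = n ∧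
      (∀ f : Fin n → Fin m, Function.Injective f → |(A.submatrix f id).det| ≤ (n : ℤ) + 1) ∧
      (∃ f : Fin n → Fin m, Function.Injective f ∧
        |(A.submatrix f id).det| = (n : ℤ) + 1) ∧
      (∀ z : Fin n → ℤ, z ≠ 0 → ∃ i, 2 ≤ |A.mulVec z i|) := by
  let e : Fin (n * n) ≃ Fin n × Fin n := finProdFinEquiv.symm
  let A := (networkMatrix n * onePlusOnes n).submatrix e id
  have hdet (f : Fin n → Fin (n * n)) : |(A.submatrix f id).det| =
      |((networkMatrix n).submatrix (e ∘ f) id).det| * ((n : ℤ) + 1) := by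
    have hmul : A.submatrix f id =
        (networkMatrix n).submatrix (e ∘ f) id * onePlusOnes n := rfl
    rw [hmul, Matrix.det_mul, abs_mul, det_onePlusOnes,
      abs_of_nonneg (show (0 : ℤ) ≤ n + 1 by positivity)]
  have hshort (z : Fin n → ℤ) (hz : z ≠ 0) : ∃ i, 2 ≤ |A.mulVec z i| := by
    obtain ⟨p, hp⟩ := exists_two_le_abs_mulVec hz
    refine ⟨e.symm p, hp.trans_eq ?_⟩
    simp [A, Matrix.mulVec, Matrix.submatrix]
  refine ⟨n * n, A, ?_, fun f _ => ?_, ⟨fun i => e.symm (i, i), fun i j h => ?_, ?_⟩, hshort⟩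
  · have hinj : Function.Injective A.mulVecLin := by
      refine (injective_iff_map_eq_zero _).2 fun z hz => ?_
      by_contra hz0
      obtain ⟨i, hi⟩ := hshort z hz0
      rw [Matrix.mulVecLin_apply] at hz
      simp [hz] at hi
    rw [Matrix.rank, LinearMap.finrank_range_of_inj hinj, Module.finrank_fin_fun]
  · rw [hdet]
    exact mul_le_of_le_one_left (by positivity)
      (abs_det_le_one_of_isNetworkRow _ fun i => isNetworkRow_networkMatrix _)
  · simpa using h
  · have hone : (networkMatrix n).submatrix (e ∘ fun i => e.symm (i, i)) id = 1 := by
      ext i j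
      simp [networkMatrix, Matrix.one_apply, Pi.single_apply, eq_comm]
    rw [hdet, hone, Matrix.det_one, abs_one, one_mul]

/-- For every integer `Δ ≥ 2` there exist `m ∈ ℕ` and a `Δ`-modular
matrix `A ∈ ℤ^{m×(Δ−1)}` of full column rank such that `‖Az‖_∞ ≥ 2` for every
nonzero integer vector `z ∈ ℤ^{Δ−1}`. -/
theorem lower_bound_threshold (Δ : ℕ) (hΔ : 2 ≤ Δ) :
    ∃ (m : ℕ) (A : Matrix (Fin m) (Fin (Δ - 1)) ℤ),
      A.rank = Δ - 1 ∧
      (∀ f : Fin (Δ - 1) → Fin m, Function.Injective f →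
        |(A.submatrix f id).det| ≤ (Δ : ℤ)) ∧
      (∃ f : Fin (Δ - 1) → Fin m, Function.Injective f ∧
        |(A.submatrix f id).det| = (Δ : ℤ)) ∧
      (∀ z : Fin (Δ - 1) → ℤ, z ≠ 0 → ∃ i, 2 ≤ |A.mulVec z i|) := by
  have h := exists_modular_matrix (Δ - 1)
  rwa [show ((Δ - 1 : ℕ) : ℤ) + 1 = Δ by omega] at h
end

section
/- Let A ∈ ℤ^{m×n} have full column rank and let B be an invertible n×n submatrix of A, say B = A_R for a set R ⊆ [m] of row indices with |R| = n. Let I ⊆ [m] and J ⊆ [n] with |I| = |J|. Let a_{i_1}, …, a_{i_{|I|}} denote the rows of A indexed by I and let b_{j_1}, …, b_{j_{n−|J|}} denote the rows of B whose (row) index in B does not lie in J. Then |det (A·B^{−1})_{I,J}| = |det(a_{i_1}, …, a_{i_{|I|}}, b_{j_1}, …, b_{j_{n−|J|}})| / |det B|, where (A·B^{−1})_{I,J} denotes the submatrix of A·B^{−1} with rows indexed by I and columns indexed by J, and the matrix on the right-hand side is the n×n matrix whose rows are the listed vectors. -/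
/-- A minor of `C * B⁻¹` times `det B` is the determinant of the chosen rows of `C` stacked on
the rows of `B` complementary to the chosen columns. -/
theorem Matrix.det_submatrix_mul_inv_mul_det {K l n p q : Type*} [CommRing K]
    [Fintype n] [DecidableEq n] [Fintype p] [DecidableEq p] [Fintype q] [DecidableEq q]
    (C : Matrix l n K) (B : Matrix n n K) (hB : IsUnit B.det) (r : p → l) (f : p ⊕ q ≃ n) :
    ((C * B⁻¹).submatrix r (f ∘ Sum.inl)).det * B.det =
      ((Matrix.fromRows (C.submatrix r id) (B.submatrix (f ∘ Sum.inr) id)).submatrix id f).det := by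
  have key : (Matrix.fromRows (C.submatrix r id) (B.submatrix (f ∘ Sum.inr) id)).submatrix id f =
      Matrix.fromBlocks ((C * B⁻¹).submatrix r (f ∘ Sum.inl))
        ((C * B⁻¹).submatrix r (f ∘ Sum.inr)) 0 1 * B.submatrix f f := by
    ext (i | i) j
    · have hC : C (r i) (f j) = (C * B⁻¹ * B) (r i) (f j) := by
        rw [Matrix.nonsing_inv_mul_cancel_right _ _ hB]
      simp only [Matrix.submatrix_apply, id, Matrix.fromRows_apply_inl]
      rw [hC, Matrix.mul_apply, Matrix.mul_apply, ← f.sum_comp]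
      simp
    · simp [Matrix.mul_apply, Matrix.one_apply]
  rw [key, Matrix.det_mul, Matrix.det_fromBlocks_zero₂₁, Matrix.det_one, mul_one,
    Matrix.det_submatrix_equiv_self]

/-- Let `A ∈ ℤ^{m×n}` have full column rank and let `B = A_R` be an
invertible `n×n` submatrix of `A` (rows selected by the injection `R`). Let `I ⊆ [m]`
and `J ⊆ [n]` with `|I| = |J| = k` (enumerated by injections `ι`, `κ`), and let
`e` enumerate the row indices of `B` not lying in `J`. Then
`|det (A·B⁻¹)_{I,J}| = |det(a_{i_1},…,a_{i_k}, b_{j_1},…,b_{j_{n−k}})| / |det B|`,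
where the matrix on the right has as rows the rows of `A` indexed by `I` followed by
the rows of `B` not indexed by `J`. -/
theorem submatrix_determinants (m n k : ℕ)
    (A : Matrix (Fin m) (Fin n) ℤ) (hrank : A.rank = n)
    (R : Fin n → Fin m) (hR : Function.Injective R)
    (hB : (A.submatrix R id).det ≠ 0)
    (ι : Fin k → Fin m) (hι : Function.Injective ι)
    (κ : Fin k → Fin n) (hκ : Function.Injective κ)
    (e : Fin (n - k) → Fin n) (he : Function.Injective e)
    (hdisj : ∀ i j, e i ≠ κ j) :
    |(((A.map (Int.cast : ℤ → ℚ)) *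
        ((A.submatrix R id).map (Int.cast : ℤ → ℚ))⁻¹).submatrix ι κ).det| =
      |(Matrix.of (fun i j : Fin n =>
          if h : (i : ℕ) < k then ((A (ι ⟨(i : ℕ), h⟩) j : ℤ) : ℚ)
          else (((A.submatrix R id) (e ⟨(i : ℕ) - k, by have := i.isLt; omega⟩) j : ℤ) : ℚ))).det| /
        |((A.submatrix R id).det : ℚ)| := by
  have hk : k ≤ n := by simpa using Fintype.card_le_of_injective κ hκ
  have hf : Function.Bijective (Sum.elim κ e) :=
    (Fintype.bijective_iff_injective_and_card _).2
      ⟨hκ.sumElim he fun i j => (hdisj j i).symm, by simp [hk]⟩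
  let f := Equiv.ofBijective _ hf
  let g : Fin k ⊕ Fin (n - k) ≃ Fin n :=
    finSumFinEquiv.trans (finCongr (Nat.add_sub_cancel' hk))
  have hdet : ((A.submatrix R id).map (Int.cast : ℤ → ℚ)).det = ((A.submatrix R id).det : ℚ) :=
    ((Int.castRingHom ℚ).map_det _).symm
  have hB' : ((A.submatrix R id).det : ℚ) ≠ 0 := Int.cast_ne_zero.2 hB
  have key := Matrix.det_submatrix_mul_inv_mul_det (A.map (Int.cast : ℤ → ℚ))
    ((A.submatrix R id).map (Int.cast : ℤ → ℚ)) (hdet ▸ hB'.isUnit) ι f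
  rw [hdet] at key
  rw [eq_div_iff (abs_ne_zero.2 hB'), ← abs_mul, ← Matrix.abs_det_submatrix_equiv_equiv g f]
  refine congrArg abs (key.trans (congrArg Matrix.det ?_))
  ext (i | i) j <;> simp [g, f]
end

section
/- Let Δ ≥ 1, let A ∈ ℤ^{m×n} be Δ-modular of full column rank, let b ∈ ℤ^m, and let P = {x ∈ ℝ^n : Ax ≤ b}. Then every vertex of the convex hull of P ∩ ℤ^n lies on a face of P of dimension at most ⌈(Δ−1)/2⌉·(Δ−1). -/
open Matrix

section MaximalBasis

variable {ι : Type*} [Fintype ι] [DecidableEq ι]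

/-- The coordinates of `r` with respect to the rows of `v`. -/
noncomputable def rowCoord (v : Matrix ι ι ℚ) (r : ι → ℚ) : ι → ℚ := r ᵥ* v⁻¹

/-- The rows of `v` form a basis whose members indexed by `T` lie in `R`, and whose determinant
cannot be increased in absolute value by exchanging rows indexed by `T` for elements of `R`. -/
structure IsMaxBasis (R : Set (ι → ℚ)) (T : Finset ι) (v : Matrix ι ι ℚ) : Prop where
  det_ne_zero : v.det ≠ 0
  row_mem : ∀ i ∈ T, v i ∈ R
  det_le : ∀ w : Matrix ι ι ℚ, (∀ i ∈ T, w i ∈ R) → (∀ i ∉ T, w i = v i) → |w.det| ≤ |v.det|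

lemma rowCoord_vecMul {v : Matrix ι ι ℚ} (hv : v.det ≠ 0) (r : ι → ℚ) :
    rowCoord v r ᵥ* v = r := by
  rw [rowCoord, vecMul_vecMul, nonsing_inv_mul _ (isUnit_iff_ne_zero.mpr hv), vecMul_one]

lemma rowCoord_eq {v : Matrix ι ι ℚ} (hv : v.det ≠ 0) {x r : ι → ℚ} (h : x ᵥ* v = r) :
    rowCoord v r = x := by
  rw [rowCoord, ← h, vecMul_vecMul, mul_nonsing_inv _ (isUnit_iff_ne_zero.mpr hv), vecMul_one]

lemma rowCoord_neg (v : Matrix ι ι ℚ) (r : ι → ℚ) : rowCoord v (-r) = -rowCoord v r := by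
  rw [rowCoord, rowCoord, neg_vecMul]

lemma dotProduct_eq_rowCoord {v : Matrix ι ι ℚ} (hv : v.det ≠ 0) (r z : ι → ℚ) :
    r ⬝ᵥ z = rowCoord v r ⬝ᵥ (v *ᵥ z) := by
  rw [dotProduct_mulVec, rowCoord_vecMul hv]

lemma det_updateRow_eq_rowCoord {v : Matrix ι ι ℚ} (hv : v.det ≠ 0) (r : ι → ℚ) (i : ι) :
    (v.updateRow i r).det = rowCoord v r i * v.det := by
  conv_lhs => rw [← rowCoord_vecMul hv r, vecMul_eq_sum]
  exact det_updateRow_sum v i _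

lemma vecMul_updateRow (v : Matrix ι ι ℚ) (i : ι) (p x : ι → ℚ) :
    x ᵥ* v.updateRow i p = x ᵥ* v + x i • (p - v i) := by
  simp only [vecMul_eq_sum]
  rw [← Finset.add_sum_erase _ _ (Finset.mem_univ i),
    ← Finset.add_sum_erase Finset.univ (fun k => x k • v k) (Finset.mem_univ i),
    Finset.sum_congr rfl (g := fun k => x k • v k)]
  · rw [show v.updateRow i p i = p from updateRow_self, smul_sub]
    abel
  · intro k hk
    rw [show v.updateRow i p k = v k from updateRow_ne (Finset.ne_of_mem_erase hk)]

namespace IsMaxBasis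

variable {R : Set (ι → ℚ)} {T : Finset ι} {v : Matrix ι ι ℚ}

lemma abs_rowCoord_le (h : IsMaxBasis R T v) {r : ι → ℚ} (hr : r ∈ R) {i : ι} (hi : i ∈ T) :
    |rowCoord v r i| ≤ 1 := by
  have hle := h.det_le (v.updateRow i r) (fun j hj => ?_) (fun j hj => ?_)
  · rw [det_updateRow_eq_rowCoord h.det_ne_zero, abs_mul] at hle
    exact le_of_mul_le_mul_right (by simpa using hle) (abs_pos.mpr h.det_ne_zero)
  · by_cases hji : j = i
    · subst hji
      rwa [show v.updateRow j r j = r from updateRow_self]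
    · rw [show v.updateRow i r j = v j from updateRow_ne hji]
      exact h.row_mem j hj
  · exact updateRow_ne (fun hji => hj (hji ▸ hi))

/-- Exchanging a basis row for an element of `R` with coordinate `1` preserves maximality. -/
lemma pivot (h : IsMaxBasis R T v) {p : ι → ℚ} (hp : p ∈ R) {i : ι} (hi : i ∈ T)
    (hpi : rowCoord v p i = 1) : IsMaxBasis R T (v.updateRow i p) := by
  have hdet : (v.updateRow i p).det = v.det := by
    rw [det_updateRow_eq_rowCoord h.det_ne_zero, hpi, one_mul]
  refine ⟨hdet ▸ h.det_ne_zero, fun j hj => ?_, fun w hw hw' => ?_⟩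
  · by_cases hji : j = i
    · subst hji
      rwa [show v.updateRow j p j = p from updateRow_self]
    · rw [show v.updateRow i p j = v j from updateRow_ne hji]
      exact h.row_mem j hj
  · rw [hdet]
    refine h.det_le w hw fun j hj => ?_
    rw [hw' j hj]
    exact updateRow_ne (fun hji => hj (hji ▸ hi))

lemma rowCoord_pivot (h : IsMaxBasis R T v) {p : ι → ℚ} {i : ι}
    (hpi : rowCoord v p i = 1) (r : ι → ℚ) :
    rowCoord (v.updateRow i p) r
      = rowCoord v r - rowCoord v r i • (rowCoord v p - Pi.single i 1) := by
  apply rowCoord_eq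
  · rw [det_updateRow_eq_rowCoord h.det_ne_zero, hpi, one_mul]
    exact h.det_ne_zero
  · rw [vecMul_updateRow, sub_vecMul, smul_vecMul, sub_vecMul, rowCoord_vecMul h.det_ne_zero,
      rowCoord_vecMul h.det_ne_zero, single_one_vecMul]
    simp [hpi, Matrix.row]

lemma rowCoord_pivot_ne (h : IsMaxBasis R T v) {p : ι → ℚ} {i j : ι}
    (hpi : rowCoord v p i = 1) (r : ι → ℚ) (hj : j ≠ i) :
    rowCoord (v.updateRow i p) r j = rowCoord v r j - rowCoord v r i * rowCoord v p j := by
  simp [h.rowCoord_pivot hpi, hj]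

lemma abs_rowCoord_sub_le (h : IsMaxBasis R T v) {p r : ι → ℚ} (hp : p ∈ R) (hr : r ∈ R)
    {i j : ι} (hi : i ∈ T) (hj : j ∈ T) (hji : j ≠ i) (hpi : rowCoord v p i = 1) :
    |rowCoord v r j - rowCoord v r i * rowCoord v p j| ≤ 1 := by
  rw [← h.rowCoord_pivot_ne hpi r hji]
  exact (h.pivot hp hi hpi).abs_rowCoord_le hr hj

/-- If `R` contains, for each `i ∈ S`, a row equal to `e_i - e_s` on the coordinates in
`insert s S`, then coordinate sums over `insert s S` of elements of `R` are at most `1`. -/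
lemma abs_sum_rowCoord_le {s : ι} (hs : s ∈ T) {r : ι → ℚ} (hr : r ∈ R) (p : ι → ι → ℚ)
    (S : Finset ι) : ∀ {v : Matrix ι ι ℚ}, IsMaxBasis R T v → S ⊆ T → s ∉ S →
    (∀ i ∈ S, p i ∈ R ∧ rowCoord v (p i) i = 1 ∧ rowCoord v (p i) s = -1 ∧
      ∀ j ∈ S, j ≠ i → rowCoord v (p i) j = 0) →
    |rowCoord v r s + ∑ i ∈ S, rowCoord v r i| ≤ 1 := by
  induction S using Finset.induction_on with
  | empty =>
    intro v h _ _ _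
    simpa using h.abs_rowCoord_le hr hs
  | insert a S ha ih =>
    intro v h hST hsS hp
    obtain ⟨hpR, hpa, hps, hp0⟩ := hp a (Finset.mem_insert_self a S)
    have hsa : s ≠ a := fun e => hsS (e ▸ Finset.mem_insert_self a S)
    have haT : a ∈ T := hST (Finset.mem_insert_self a S)
    have hne : ∀ i ∈ S, i ≠ a := fun i hi e => ha (e ▸ hi)
    have hcoord : ∀ x, ∀ i ∈ S, rowCoord (v.updateRow a (p a)) x i = rowCoord v x i := by
      intro x i hi
      rw [h.rowCoord_pivot_ne hpa x (hne i hi), hp0 i (Finset.mem_insert_of_mem hi) (hne i hi),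
        mul_zero, sub_zero]
    have key := ih (h.pivot hpR haT hpa) (fun i hi => hST (Finset.mem_insert_of_mem hi))
      (fun hi => hsS (Finset.mem_insert_of_mem hi)) (fun i hi => ?_)
    · rw [Finset.sum_congr rfl (hcoord r), h.rowCoord_pivot_ne hpa r hsa, hps] at key
      rw [Finset.sum_insert ha]
      convert key using 2
      ring
    · obtain ⟨hiR, hii, his, hi0⟩ := hp i (Finset.mem_insert_of_mem hi)
      refine ⟨hiR, ?_, ?_, fun j hj hji => ?_⟩
      · rw [hcoord _ i hi, hii]
      · rw [h.rowCoord_pivot_ne hpa _ hsa, his,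
          hi0 a (Finset.mem_insert_self a S) (hne i hi).symm, zero_mul, sub_zero]
      · rw [hcoord _ j hj, hi0 j (Finset.mem_insert_of_mem hj) hji]

/-- Scaling rows indexed by `T` by signs preserves maximality if `R` is symmetric. -/
lemma sign_smul (h : IsMaxBasis R T v) (hR : ∀ r ∈ R, -r ∈ R) (σ : ι → ℚ)
    (hσ : ∀ i, σ i = 1 ∨ σ i = -1) (hσT : ∀ i ∉ T, σ i = 1) :
    IsMaxBasis R T (of fun i j => σ i * v i j) := by
  have habs : |(of fun i j => σ i * v i j).det| = |v.det| := by
    rw [det_mul_column, abs_mul, Finset.abs_prod, Finset.prod_eq_one, one_mul]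
    intro i _
    rcases hσ i with hi | hi <;> simp [hi]
  refine ⟨?_, fun i hi => ?_, fun w hw hw' => ?_⟩
  · rw [← abs_ne_zero, habs]
    exact abs_ne_zero.mpr h.det_ne_zero
  · rcases hσ i with hσi | hσi
    · convert h.row_mem i hi using 1
      ext j
      simp [hσi]
    · convert hR _ (h.row_mem i hi) using 1
      ext j
      simp [hσi]
  · rw [habs]
    refine h.det_le w hw fun i hi => ?_
    rw [hw' i hi]
    ext j
    simp [hσT i hi]

/-- If the unit vectors indexed by `S` agree modulo the lattice `v ℤ^ι` and sum to zero there,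
then some nonzero integer vector has all products with `R` in `[-1, 1]`. -/
lemma exists_short_of_class (h : IsMaxBasis R T v) (hR : ∀ r ∈ R, -r ∈ R)
    (hint : ∀ r ∈ R, ∀ z : ι → ℤ, ∃ k : ℤ, r ⬝ᵥ (fun i => (z i : ℚ)) = k)
    {S : Finset ι} (hST : S ⊆ T) (hS : S.Nonempty)
    (hdiff : ∀ i ∈ S, ∀ j ∈ S, i ≠ j → ∃ z : ι → ℤ,
      v *ᵥ (fun i => (z i : ℚ)) = Pi.single i 1 - Pi.single j 1)
    (hsum : ∃ z : ι → ℤ, v *ᵥ (fun i => (z i : ℚ)) = ∑ i ∈ S, Pi.single i 1) :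
    ∃ z : ι → ℤ, z ≠ 0 ∧ (∀ i ∉ T, v i ⬝ᵥ (fun i => (z i : ℚ)) = 0) ∧
      ∀ r ∈ R, |r ⬝ᵥ (fun i => (z i : ℚ))| ≤ 1 := by
  by_contra hcon
  push Not at hcon
  have sep : ∀ i ∈ S, ∀ j ∈ S, i ≠ j →
      ∃ p ∈ R, rowCoord v p i = 1 ∧ rowCoord v p j = -1 := by
    intro i hi j hj hij
    obtain ⟨z, hz⟩ := hdiff i hi j hj hij
    obtain ⟨p, hp, hlt⟩ := hcon z (by
      rintro rfl
      have := congrFun hz i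
      simp [hij, mulVec, dotProduct] at this) (by
      intro k hk
      have hki : k ≠ i := fun e => hk (e ▸ hST hi)
      have hkj : k ≠ j := fun e => hk (e ▸ hST hj)
      have := congrFun hz k
      simpa [hki, hkj, mulVec] using this)
    have hval : p ⬝ᵥ (fun i => (z i : ℚ)) = rowCoord v p i - rowCoord v p j := by
      rw [dotProduct_eq_rowCoord h.det_ne_zero, hz, dotProduct_sub]
      simp
    have hpi := abs_le.mp (h.abs_rowCoord_le hp (hST hi))
    have hpj := abs_le.mp (h.abs_rowCoord_le hp (hST hj))
    obtain ⟨k, hk⟩ := hint p hp z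
    have hk2 : (2 : ℤ) ≤ |k| := by
      rw [hk] at hlt
      exact_mod_cast hlt
    rw [hk] at hval
    rcases le_abs'.mp hk2 with hk2 | hk2
    · have : (k : ℚ) ≤ -2 := by exact_mod_cast hk2
      refine ⟨-p, hR p hp, ?_, ?_⟩ <;> rw [rowCoord_neg, Pi.neg_apply] <;> linarith
    · have : (2 : ℚ) ≤ k := by exact_mod_cast hk2
      refine ⟨p, hp, ?_, ?_⟩ <;> linarith
  have zero : ∀ i ∈ S, ∀ j ∈ S, i ≠ j → ∀ p ∈ R, rowCoord v p i = 1 → rowCoord v p j = -1 →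
      ∀ k ∈ S, k ≠ i → k ≠ j → rowCoord v p k = 0 := by
    intro i hi j hj hij p hp hpi hpj k hk hki hkj
    obtain ⟨q, hq, hqi, hqk⟩ := sep i hi k hk hki.symm
    obtain ⟨t, ht, htj, htk⟩ := sep j hj k hk hkj.symm
    have h1 := abs_le.mp (h.abs_rowCoord_sub_le hp hq (hST hi) (hST hk) hki hpi)
    have h2 := abs_le.mp (h.abs_rowCoord_sub_le ht hp (hST hj) (hST hk) hkj htj)
    rw [hqi, hqk] at h1
    rw [hpj, htk] at h2
    linarith [h1.1, h2.2]
  obtain ⟨s, hs⟩ := hS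
  obtain ⟨z, hz⟩ := hsum
  have hz' : ∀ k, v k ⬝ᵥ (fun i => (z i : ℚ)) = if k ∈ S then 1 else 0 := by
    intro k
    have := congrFun hz k
    simpa [mulVec, Finset.sum_apply, Pi.single_apply] using this
  obtain ⟨r, hr, hlt⟩ := hcon z (by
    rintro rfl
    have := hz' s
    simp [hs, dotProduct] at this) (fun k hk => by
    rw [hz', if_neg (fun hkS => hk (hST hkS))])
  have hval : r ⬝ᵥ (fun i => (z i : ℚ)) = ∑ i ∈ S, rowCoord v r i := by
    rw [dotProduct_eq_rowCoord h.det_ne_zero, hz, dotProduct_sum]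
    simp
  choose! p hpR hpi hps using fun i hi his => sep i hi s hs his
  have hmem : ∀ i ∈ S.erase s, i ∈ S ∧ i ≠ s := fun i hi =>
    ⟨Finset.mem_of_mem_erase hi, Finset.ne_of_mem_erase hi⟩
  have key := abs_sum_rowCoord_le (hST hs) hr p (S.erase s) h
    (fun i hi => hST (hmem i hi).1) (Finset.notMem_erase s S) (fun i hi => by
      obtain ⟨hiS, his⟩ := hmem i hi
      refine ⟨hpR i hiS his, hpi i hiS his, hps i hiS his, fun j hj hji => ?_⟩
      exact zero i hiS s hs his (p i) (hpR i hiS his) (hpi i hiS his) (hps i hiS his) j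
        (hmem j hj).1 hji (hmem j hj).2)
  rw [Finset.add_sum_erase _ _ hs, ← hval] at key
  exact absurd hlt (not_lt.mpr key)

end IsMaxBasis

end MaximalBasis
section Counting

/-- A large enough family of elements of a finite abelian group contains a nonempty subfamily `S`
of elements equal up to sign to one `g` with `|S| • g = 0`. -/
lemma exists_subset_sign_class {ι G : Type*} [DecidableEq ι] [AddCommGroup G] [Finite G]
    (T : Finset ι) (e : ι → G) (Δ : ℕ) (hG : Nat.card G ≤ Δ) (hT : Δ / 2 * (Δ - 1) < T.card) :
    ∃ S ⊆ T, S.Nonempty ∧ ∃ g : G, (∀ i ∈ S, e i = g ∨ e i = -g) ∧ S.card • g = 0 := by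
  classical
  have := Fintype.ofFinite G
  by_contra! hcon
  have hzero : ∀ i ∈ T, e i ≠ 0 := by
    intro i hi h0
    exact hcon {i} (by simpa using hi) (by simp) 0 (by simpa using h0) (by simp)
  have hw0 : (T.filter fun i => e i = 0).card + (T.filter fun i => e i = -0).card = 0 := by
    simp only [neg_zero, Nat.add_eq_zero_iff, and_self, Finset.card_eq_zero,
      Finset.filter_eq_empty_iff]
    exact fun i hi => hzero i hi
  have hw : ∀ g : G, g ≠ 0 →
      (T.filter fun i => e i = g).card + (T.filter fun i => e i = -g).card
        ≤ max 2 (Nat.card G - 1) := by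
    intro g hg
    by_cases hgg : g = -g
    · rw [← hgg]
      have : (T.filter fun i => e i = g).card ≤ 1 := by
        by_contra! hlt
        obtain ⟨S, hS, hcard⟩ := Finset.exists_subset_card_eq hlt
        have hcard2 : S.card = 2 := hcard
        refine hcon S (hS.trans (Finset.filter_subset _ _)) (Finset.card_pos.mp (by omega)) g
          (fun i hi => Or.inl (Finset.mem_filter.mp (hS hi)).2) ?_
        rw [hcard2, two_nsmul]
        nth_rewrite 2 [hgg]
        exact add_neg_cancel g
      omega
    · have hdisj : Disjoint (T.filter fun i => e i = g) (T.filter fun i => e i = -g) := by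
        rw [Finset.disjoint_filter]
        intro i _ h1 h2
        exact hgg (h1.symm.trans h2)
      rw [← Finset.card_union_of_disjoint hdisj, ← Finset.filter_or]
      have : (T.filter fun i => e i = g ∨ e i = -g).card < Nat.card G := by
        by_contra! hle
        obtain ⟨S, hS, hcard⟩ := Finset.exists_subset_card_eq hle
        refine hcon S (hS.trans (Finset.filter_subset _ _))
          (Finset.card_pos.mp (hcard ▸ Nat.card_pos)) g
          (fun i hi => (Finset.mem_filter.mp (hS hi)).2) ?_
        rw [hcard]
        exact card_nsmul_eq_zero'
      omega
  have hsum : ∑ g : G, ((T.filter fun i => e i = g).card + (T.filter fun i => e i = -g).card)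
      = 2 * T.card := by
    have h1 : ∑ g : G, (T.filter fun i => e i = g).card = T.card :=
      (Finset.card_eq_sum_card_fiberwise fun _ _ => Finset.mem_univ _).symm
    have h2 : ∑ g : G, (T.filter fun i => e i = -g).card = T.card := by
      rw [← h1]
      exact Equiv.sum_comp (Equiv.neg G) fun g => (T.filter fun i => e i = g).card
    rw [Finset.sum_add_distrib, h1, h2, two_mul]
  rw [← Finset.add_sum_erase _ _ (Finset.mem_univ (0 : G)), hw0, zero_add] at hsum
  have hle := Finset.sum_le_card_nsmul (Finset.univ.erase (0 : G)) _ _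
    fun g hg => hw g (Finset.ne_of_mem_erase hg)
  rw [hsum, Finset.card_erase_of_mem (Finset.mem_univ _), Finset.card_univ,
    ← Nat.card_eq_fintype_card, smul_eq_mul] at hle
  set N := Nat.card G
  have hN : 0 < N := Nat.card_pos
  obtain hN1 | hN2 | hN3 : N = 1 ∨ N = 2 ∨ 3 ≤ N := by omega
  · rw [hN1] at hle
    omega
  · rw [hN2] at hle
    have : 1 * 1 ≤ Δ / 2 * (Δ - 1) := Nat.mul_le_mul (by omega) (by omega)
    norm_num at hle
    omega
  · rw [max_eq_right (by omega)] at hle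
    have h1 : (N - 1) * (N - 1) ≤ (2 * (Δ / 2)) * (Δ - 1) :=
      Nat.mul_le_mul (by omega) (by omega)
    rw [mul_assoc] at h1
    omega

end Counting

section Lattice

variable {ι : Type*} [Fintype ι] [DecidableEq ι]

lemma card_quotient_range_mulVecLin_s4 (V : Matrix ι ι ℤ) (hV : V.det ≠ 0) :
    Nat.card ((ι → ℤ) ⧸ LinearMap.range V.mulVecLin) = V.det.natAbs := by
  have hinj : Function.Injective V.mulVecLin := by
    rw [← LinearMap.ker_eq_bot, LinearMap.ker_eq_bot']
    intro z hz
    by_contra hne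
    exact hV (exists_mulVec_eq_zero_iff.mp ⟨z, hne, hz⟩)
  rw [← Submodule.natAbs_det_equiv _ (LinearEquiv.ofInjective V.mulVecLin hinj)]
  have : (LinearMap.range V.mulVecLin).subtype ∘ₗ AddMonoidHom.toIntLinearMap
      ((LinearEquiv.ofInjective V.mulVecLin hinj : (ι → ℤ) ≃ₗ[ℤ] _) : (ι → ℤ) →+ _)
      = Matrix.toLin' V := by
    ext
    simp
  rw [this, LinearMap.det_toLin']

/-- A nonzero integer vector orthogonal to the rows outside `T` whose products with `R` lie in
`[-1, 1]` exists as soon as `T` is large compared to the determinant. -/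
lemma IsMaxBasis.exists_short {R : Set (ι → ℚ)} {T : Finset ι} {V : Matrix ι ι ℤ}
    (h : IsMaxBasis R T (V.map (Int.cast : ℤ → ℚ))) (hR : ∀ r ∈ R, -r ∈ R)
    (hint : ∀ r ∈ R, ∀ z : ι → ℤ, ∃ k : ℤ, r ⬝ᵥ (fun i => (z i : ℚ)) = k)
    {Δ : ℕ} (hdet : V.det.natAbs ≤ Δ) (hT : Δ / 2 * (Δ - 1) < T.card) :
    ∃ z : ι → ℤ, z ≠ 0 ∧ (∀ i ∉ T, V i ⬝ᵥ z = 0) ∧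
      ∀ r ∈ R, |r ⬝ᵥ (fun i => (z i : ℚ))| ≤ 1 := by
  have hV : V.det ≠ 0 := by
    intro h0
    apply h.det_ne_zero
    have := Int.cast_det (R := ℚ) V
    rw [h0, Int.cast_zero] at this
    exact this.symm
  have hcard := card_quotient_range_mulVecLin_s4 V hV
  have : Finite ((ι → ℤ) ⧸ LinearMap.range V.mulVecLin) :=
    Nat.finite_of_card_ne_zero (by rw [hcard]; exact Int.natAbs_ne_zero.mpr hV)
  let π := (LinearMap.range V.mulVecLin).mkQ
  obtain ⟨S, hST, hS, g, hSg, hg⟩ := exists_subset_sign_class T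
    (fun i => π (Pi.single i 1)) Δ (hcard ▸ hdet) hT
  obtain ⟨σ, hσ, hσS, hσg⟩ : ∃ σ : ι → ℤ, (∀ i, σ i = 1 ∨ σ i = -1) ∧ (∀ i ∉ S, σ i = 1) ∧
      ∀ i ∈ S, π (Pi.single i (σ i)) = g := by
    classical
    refine ⟨fun i => if i ∈ S ∧ π (Pi.single i 1) ≠ g then -1 else 1, fun i => ?_, fun i hi => ?_,
      fun i hi => ?_⟩
    · dsimp only
      split_ifs <;> simp
    · simp [hi]
    · by_cases hig : π (Pi.single i 1) = g
      · simp [hig]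
      · have hneg := (hSg i hi).resolve_left hig
        simp only [hi, hig, ne_eq, not_false_eq_true, and_self, if_true, Pi.single_neg, map_neg]
        rw [hneg, neg_neg]
  have hlift : ∀ u : ι → ℤ, π u = 0 → ∃ z : ι → ℤ,
      (of fun i j => (σ i : ℚ) * V.map (Int.cast : ℤ → ℚ) i j) *ᵥ (fun i => (z i : ℚ))
        = fun i => (σ i * u i : ℚ) := by
    intro u hu
    obtain ⟨z, hz⟩ := (Submodule.Quotient.mk_eq_zero _).mp hu
    refine ⟨z, ?_⟩
    ext i
    have hzi : ∑ j, V i j * z j = u i := congrFun hz i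
    simp only [mulVec, dotProduct, of_apply, map_apply, ← hzi, mul_assoc, ← Finset.mul_sum]
    push_cast
    rfl
  have hσσ : ∀ i, (σ i : ℚ) * σ i = 1 := by
    intro i
    rcases hσ i with hi | hi <;> simp [hi]
  have hσσS : ∀ i k, (σ k : ℚ) * ((Pi.single i (σ i) : ι → ℤ) k : ℤ)
      = (Pi.single i 1 : ι → ℚ) k := by
    intro i k
    by_cases hki : k = i
    · subst hki
      simp [hσσ]
    · simp [hki]
  have hmax := h.sign_smul hR (fun i => (σ i : ℚ))
    (fun i => by rcases hσ i with hi | hi <;> simp [hi])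
    (fun i hi => by simp [hσS i fun hiS => hi (hST hiS)])
  obtain ⟨z, hz0, hzT, hzR⟩ := hmax.exists_short_of_class hR hint hST hS
    (fun i hi j hj _ => by
      obtain ⟨z, hz⟩ := hlift (Pi.single i (σ i) - Pi.single j (σ j))
        (by rw [map_sub, hσg i hi, hσg j hj, sub_self])
      refine ⟨z, hz.trans ?_⟩
      ext k
      rw [Pi.sub_apply, Pi.sub_apply, ← hσσS i k, ← hσσS j k]
      push_cast
      ring)
    (by
      obtain ⟨z, hz⟩ := hlift (∑ i ∈ S, Pi.single i (σ i))
        (by rw [map_sum, Finset.sum_congr rfl hσg, Finset.sum_const, hg])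
      refine ⟨z, hz.trans ?_⟩
      ext k
      rw [Finset.sum_apply, Finset.sum_apply, ← Finset.sum_congr rfl fun i _ => hσσS i k,
        Int.cast_sum, Finset.mul_sum])
  refine ⟨z, hz0, fun i hi => ?_, hzR⟩
  have := hzT i hi
  have hi1 : σ i = 1 := hσS i fun hiS => hi (hST hiS)
  simp only [dotProduct, of_apply, map_apply, hi1, Int.cast_one, one_mul] at this
  exact_mod_cast this

end Lattice
section Polyhedron

variable {m n : ℕ}

/-- There is a nonsingular choice of rows which uses as few rows outside `I` as possible and
has maximal determinant subject to that. -/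
lemma exists_optimal_rows (A : Matrix (Fin m) (Fin n) ℤ) (I : Finset (Fin m))
    (hA : ∃ f : Fin n → Fin m, (A.submatrix f id).det ≠ 0) :
    ∃ f : Fin n → Fin m, (A.submatrix f id).det ≠ 0 ∧
      (∀ f' : Fin n → Fin m, (∀ i, f i ∈ I → f' i = f i) →
        |(A.submatrix f' id).det| ≤ |(A.submatrix f id).det|) ∧
      ∀ q ∈ I, ∀ i, f i ∉ I → (A.submatrix (Function.update f i q) id).det = 0 := by
  classical
  let T : (Fin n → Fin m) → Finset (Fin n) := fun f => Finset.univ.filter fun i => f i ∉ I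
  obtain ⟨f₀, hf₀⟩ := hA
  obtain ⟨f₁, hf₁, hmin⟩ := Finset.exists_min_image
    (Finset.univ.filter fun f : Fin n → Fin m => (A.submatrix f id).det ≠ 0)
    (fun f => (T f).card) ⟨f₀, by simpa using hf₀⟩
  obtain ⟨f, hf, hmax⟩ := Finset.exists_max_image
    (Finset.univ.filter fun f : Fin n → Fin m =>
      (A.submatrix f id).det ≠ 0 ∧ (T f).card ≤ (T f₁).card)
    (fun f => |(A.submatrix f id).det|) ⟨f₁, by simpa using hf₁⟩
  simp only [Finset.mem_filter, Finset.mem_univ, true_and] at hf hmin hmax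
  refine ⟨f, hf.1, fun f' hf' => ?_, fun q hq i hi => ?_⟩
  · by_cases h0 : (A.submatrix f' id).det = 0
    · simp [h0]
    · refine hmax f' ⟨h0, (Finset.card_le_card fun i => ?_).trans hf.2⟩
      simp only [T, Finset.mem_filter, Finset.mem_univ, true_and]
      intro h1 h2
      exact h1 (by rwa [hf' i h2])
  · by_contra h0
    have hlt : (T (Function.update f i q)).card < (T f).card := by
      apply Finset.card_lt_card
      rw [Finset.ssubset_iff_of_subset]
      · exact ⟨i, by simpa [T] using hi, by simpa [T] using hq⟩
      · intro j
        simp only [T, Finset.mem_filter, Finset.mem_univ, true_and]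
        by_cases hji : j = i
        · subst hji
          simp [hq]
        · simp [hji]
    have := hmin _ h0
    omega

lemma exists_rows_card_le_or_exists_short (A : Matrix (Fin m) (Fin n) ℤ) (I : Finset (Fin m))
    (hA : ∃ f : Fin n → Fin m, (A.submatrix f id).det ≠ 0) (Δ : ℕ)
    (hub : ∀ f : Fin n → Fin m, Function.Injective f → |(A.submatrix f id).det| ≤ (Δ : ℤ)) :
    ∃ f : Fin n → Fin m, (A.submatrix f id).det ≠ 0 ∧
      ((Finset.univ.filter fun i => f i ∉ I).card ≤ Δ / 2 * (Δ - 1) ∨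
        ∃ z : Fin n → ℤ, z ≠ 0 ∧ (∀ q ∈ I, A q ⬝ᵥ z = 0) ∧ ∀ q, |A q ⬝ᵥ z| ≤ 1) := by
  classical
  obtain ⟨f, hf, hmax, hzero⟩ := exists_optimal_rows A I hA
  refine ⟨f, hf, or_iff_not_imp_left.mpr fun hT => ?_⟩
  set T := Finset.univ.filter fun i => f i ∉ I with hTdef
  have memT : ∀ i, i ∈ T ↔ f i ∉ I := fun i => by simp [hTdef]
  have hdetΔ : (A.submatrix f id).det.natAbs ≤ Δ := by
    have hinj : Function.Injective f := by
      intro i j hij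
      by_contra hne
      refine hf (det_zero_of_row_eq hne ?_)
      ext k
      simp [hij]
    have := hub f hinj
    rw [Int.abs_eq_natAbs] at this
    exact_mod_cast this
  let c : Fin m → Fin n → ℚ := fun q j => (A q j : ℚ)
  let R : Set (Fin n → ℚ) := {r | ∃ q, r = c q ∨ r = -c q}
  have hcast : ∀ q (z : Fin n → ℤ), c q ⬝ᵥ (fun i => (z i : ℚ)) = ((A q ⬝ᵥ z : ℤ) : ℚ) := by
    intro q z
    simp [c, dotProduct]
  have hbase : IsMaxBasis R T ((A.submatrix f id).map (Int.cast : ℤ → ℚ)) := by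
    refine ⟨?_, fun i _ => ⟨f i, Or.inl rfl⟩, fun w hw hw' => ?_⟩
    · rw [← Int.cast_det]
      exact_mod_cast hf
    · have hrow : ∀ i, ∃ q, ∃ s : ℚ, |s| = 1 ∧ w i = s • c q ∧ (f i ∈ I → q = f i) := by
        intro i
        by_cases hi : i ∈ T
        · have hi' := (memT i).mp hi
          obtain ⟨q, hq | hq⟩ := hw i hi
          · exact ⟨q, 1, by simp, by simp [hq], fun h => absurd h hi'⟩
          · exact ⟨q, -1, by simp, by simp [hq], fun h => absurd h hi'⟩
        · exact ⟨f i, 1, by simp, by rw [hw' i hi, one_smul]; rfl, fun _ => rfl⟩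
      choose f' s hs hws hf' using hrow
      have hwdet : w = of fun i j => s i * ((A.submatrix f' id).map (Int.cast : ℤ → ℚ)) i j := by
        ext i j
        rw [hws i]
        rfl
      rw [hwdet, det_mul_column, abs_mul, Finset.abs_prod, Finset.prod_eq_one fun i _ => hs i,
        one_mul, ← Int.cast_det, ← Int.cast_det]
      exact_mod_cast hmax f' hf'
  obtain ⟨z, hz0, hzT, hzR⟩ := hbase.exists_short
    (by
      rintro r ⟨q, rfl | rfl⟩
      · exact ⟨q, Or.inr rfl⟩
      · exact ⟨q, Or.inl (neg_neg _)⟩)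
    (by
      rintro r ⟨q, rfl | rfl⟩ z
      · exact ⟨_, hcast q z⟩
      · exact ⟨-(A q ⬝ᵥ z), by rw [neg_dotProduct, hcast, Int.cast_neg]⟩)
    hdetΔ (not_le.mp hT)
  refine ⟨z, hz0, fun q hq => ?_, fun q => ?_⟩
  · have hq0 : c q ⬝ᵥ (fun i => (z i : ℚ)) = 0 := by
      rw [dotProduct_eq_rowCoord hbase.det_ne_zero]
      refine Finset.sum_eq_zero fun i _ => ?_
      by_cases hi : i ∈ T
      · have hup : ((A.submatrix f id).map (Int.cast : ℤ → ℚ)).updateRow i (c q)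
            = (A.submatrix (Function.update f i q) id).map (Int.cast : ℤ → ℚ) := by
          ext k j
          by_cases hki : k = i
          · subst hki
            simp [c]
          · simp [hki]
        have hdet := det_updateRow_eq_rowCoord hbase.det_ne_zero (c q) i
        rw [hup, ← Int.cast_det, hzero q hq i ((memT i).mp hi), Int.cast_zero, eq_comm,
          mul_eq_zero, or_iff_left hbase.det_ne_zero] at hdet
        rw [hdet, zero_mul]
      · have hi0 : c (f i) ⬝ᵥ (fun i => (z i : ℚ)) = 0 := by
          rw [hcast]
          exact_mod_cast hzT i hi
        exact mul_eq_zero_of_right _ hi0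
    rw [hcast] at hq0
    exact_mod_cast hq0
  · have := hzR (c q) ⟨q, Or.inl rfl⟩
    rw [hcast] at this
    exact_mod_cast this

/-- The vectors annihilated by all rows of a nonsingular matrix outside `T` form a space of
dimension at most `|T|`. -/
lemma finrank_le_card_of_forall_mulVec_eq_zero {ι : Type*} [Fintype ι] [DecidableEq ι]
    (v : Matrix ι ι ℝ) (hv : v.det ≠ 0) (T : Finset ι) (K : Submodule ℝ (ι → ℝ))
    (hK : ∀ x ∈ K, ∀ i ∉ T, (v *ᵥ x) i = 0) : Module.finrank ℝ K ≤ T.card := by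
  let φ : K →ₗ[ℝ] (T → ℝ) :=
    LinearMap.funLeft ℝ ℝ (Subtype.val : T → ι) ∘ₗ v.mulVecLin ∘ₗ K.subtype
  have hφ : Function.Injective φ := by
    rw [← LinearMap.ker_eq_bot, LinearMap.ker_eq_bot']
    intro x hx
    by_contra hne
    refine hv (exists_mulVec_eq_zero_iff.mp ⟨x.1, fun h => hne (Subtype.ext h), ?_⟩)
    ext i
    by_cases hi : i ∈ T
    · exact congrFun hx ⟨i, hi⟩
    · exact hK x x.2 i hi
  simpa using LinearMap.finrank_le_finrank_of_injective hφ

end Polyhedron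

/-- Let `Δ ≥ 1`, let `A ∈ ℤ^{m×n}` be `Δ`-modular of full column rank,
`b ∈ ℤ^m`, and `P = {x ∈ ℝ^n : Ax ≤ b}`. Then every vertex (extreme point) of the
convex hull of `P ∩ ℤ^n` lies on a face (exposed face) of `P` of dimension at most
`⌈(Δ−1)/2⌉·(Δ−1)`. -/
theorem vertices_integer_hull (Δ m n : ℕ) (hΔ : 1 ≤ Δ)
    (A : Matrix (Fin m) (Fin n) ℤ) (hrank : A.rank = n)
    (hub : ∀ f : Fin n → Fin m, Function.Injective f →
      |(A.submatrix f id).det| ≤ (Δ : ℤ))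
    (hattain : ∃ f : Fin n → Fin m, Function.Injective f ∧
      |(A.submatrix f id).det| = (Δ : ℤ))
    (b : Fin m → ℤ)
    (P : Set (Fin n → ℝ))
    (hP : P = {x | ∀ i, (A.map (Int.cast : ℤ → ℝ)).mulVec x i ≤ (b i : ℝ)})
    (y : Fin n → ℝ)
    (hy : y ∈ Set.extremePoints ℝ
      (convexHull ℝ (P ∩ {x : Fin n → ℝ | ∀ i, ∃ zi : ℤ, x i = (zi : ℝ)}))) :
    ∃ F : Set (Fin n → ℝ), IsExposed ℝ P F ∧ y ∈ F ∧
      Module.finrank ℝ (affineSpan ℝ F).direction ≤ ((Δ - 1) + 1) / 2 * (Δ - 1) := by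
  classical
  obtain ⟨hyP, hyZ⟩ := extremePoints_convexHull_subset hy
  choose u hu using hyZ
  obtain rfl : y = fun i => (u i : ℝ) := funext hu
  set M := A.map (Int.cast : ℤ → ℝ) with hM
  have hcast : ∀ (z : Fin n → ℤ) q, (M *ᵥ fun i => (z i : ℝ)) q = ((A q ⬝ᵥ z : ℤ) : ℝ) := by
    intro z q
    simp [hM, mulVec, dotProduct]
  have memP : ∀ x, x ∈ P ↔ ∀ q, (M *ᵥ x) q ≤ b q := fun x => by rw [hP]; rfl
  have memP' : ∀ z : Fin n → ℤ, (fun i => (z i : ℝ)) ∈ P ↔ ∀ q, A q ⬝ᵥ z ≤ b q := by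
    intro z
    rw [memP]
    refine forall_congr' fun q => ?_
    rw [hcast]
    norm_cast
  let I : Finset (Fin m) := Finset.univ.filter fun q => A q ⬝ᵥ u = b q
  have memI : ∀ q, q ∈ I ↔ A q ⬝ᵥ u = b q := fun q => by simp [I]
  obtain ⟨f, hf, hcase⟩ := exists_rows_card_le_or_exists_short A I
    (by
      obtain ⟨f, -, hf⟩ := hattain
      refine ⟨f, fun h0 => ?_⟩
      rw [h0, abs_zero] at hf
      omega) Δ hub
  have hcard : (Finset.univ.filter fun i => f i ∉ I).card ≤ Δ / 2 * (Δ - 1) := by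
    refine hcase.resolve_right ?_
    rintro ⟨z, hz0, hzI, hz1⟩
    have hmem : ∀ s : ℤ, |s| ≤ 1 → (fun i => ((u + s • z) i : ℝ)) ∈
        convexHull ℝ (P ∩ {x : Fin n → ℝ | ∀ i, ∃ zi : ℤ, x i = (zi : ℝ)}) := by
      intro s hs
      refine subset_convexHull ℝ _ ⟨(memP' _).mpr fun q => ?_, fun i => ⟨_, rfl⟩⟩
      rw [dotProduct_add, dotProduct_smul, smul_eq_mul]
      have hq := (memP' u).mp hyP q
      by_cases hqI : q ∈ I
      · rw [hzI q hqI, mul_zero, add_zero]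
        exact hq
      · have hne : A q ⬝ᵥ u ≠ b q := fun h => hqI ((memI q).mpr h)
        have hmul : |s * (A q ⬝ᵥ z)| ≤ 1 := by
          rw [abs_mul]
          exact mul_le_one₀ hs (abs_nonneg _) (hz1 q)
        have := (abs_le.mp hmul).2
        omega
    have hext := hy.2 (hmem 1 (by simp)) (hmem (-1) (by simp))
      ⟨1 / 2, 1 / 2, by norm_num, by norm_num, by norm_num, by
        ext i
        simp only [Pi.add_apply, Pi.smul_apply, smul_eq_mul]
        push_cast
        ring⟩
    apply hz0
    ext i
    have hi := congrFun hext i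
    simp only [Pi.add_apply, Pi.smul_apply, smul_eq_mul, one_mul] at hi
    have hi' : u i + z i = u i := by exact_mod_cast hi
    simpa using hi'
  let l : StrongDual ℝ (Fin n → ℝ) :=
    LinearMap.toContinuousLinearMap (∑ q ∈ I, LinearMap.proj q ∘ₗ M.mulVecLin)
  have hl : ∀ x, l x = ∑ q ∈ I, (M *ᵥ x) q := fun x => by simp [l]
  have htight : ∀ q ∈ I, (M *ᵥ fun i => (u i : ℝ)) q = b q := fun q hq => by
    rw [hcast, (memI q).mp hq]
  have hFtight : ∀ x ∈ l.toExposed P, ∀ q ∈ I, (M *ᵥ x) q = b q := by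
    rintro x ⟨hxP, hx⟩
    have hle := hx _ hyP
    rw [hl, hl, Finset.sum_congr rfl htight] at hle
    have hxle : ∀ q ∈ I, (M *ᵥ x) q ≤ b q := fun q _ => (memP x).mp hxP q
    exact (Finset.sum_eq_sum_iff_of_le hxle).mp (le_antisymm (Finset.sum_le_sum hxle) hle)
  have hyF : (fun i => (u i : ℝ)) ∈ l.toExposed P := by
    refine ⟨hyP, fun x hx => ?_⟩
    rw [hl, hl, Finset.sum_congr rfl htight]
    exact Finset.sum_le_sum fun q _ => (memP x).mp hx q
  refine ⟨l.toExposed P, ContinuousLinearMap.toExposed.isExposed, hyF, ?_⟩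
  rw [Nat.sub_add_cancel hΔ]
  refine le_trans ?_ hcard
  refine finrank_le_card_of_forall_mulVec_eq_zero ((A.submatrix f id).map (Int.cast : ℤ → ℝ))
    ?_ _ _ fun x hx i hi => ?_
  · rw [← Int.cast_det]
    exact_mod_cast hf
  · have hiI : f i ∈ I := by simpa using hi
    suffices (affineSpan ℝ (l.toExposed P)).direction
        ≤ LinearMap.ker (LinearMap.proj (f i) ∘ₗ M.mulVecLin) from this hx
    rw [direction_affineSpan, vectorSpan_def, Submodule.span_le]
    rintro _ ⟨x₁, hx₁, x₂, hx₂, rfl⟩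
    simp [mulVec_sub, hFtight x₁ hx₁ _ hiI, hFtight x₂ hx₂ _ hiI]
end

section
/- Let A ∈ ℤ^{m×n} have full row rank and suppose every m×m submatrix of A has determinant of absolute value at most Δ. Let b ∈ ℤ^m and c ∈ ℤ^n. If the integer program max{c^T x : Ax = b, x ≥ 0, x ∈ ℤ^n} has an optimal solution, then it has an optimal solution z* with |supp(z*)| ≤ m + ⌈(Δ−1)/2⌉·(Δ−1). -/
open scoped Matrix

namespace SparseOptimal

section Minors

variable {ι κ : Type*} [Fintype ι] [DecidableEq ι] [DecidableEq κ]

/-- If the rows `l i` of `U`, restricted to the columns `insert i₀ P`, are those of the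
incidence matrix of a star centred at `i₀`, then the sum of these columns is bounded by `1` in
every other row. -/
theorem abs_sum_le_one_of_star {U : Matrix ι κ ℚ} {e : ι → κ} (he : U.submatrix id e = 1)
    (hdet : ∀ g : ι → κ, |(U.submatrix id g).det| ≤ 1) {P : Finset κ} {i₀ : κ}
    (l : κ → ι) (hl : ∀ i ∈ P, |U (l i) i| = 1) (hl₀ : ∀ i ∈ P, U (l i) i₀ = -U (l i) i)
    (hl' : ∀ i ∈ P, ∀ j ∈ P, j ≠ i → U (l i) j = 0) {r : ι} (hr : ∀ i ∈ P, l i ≠ r) :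
    |U r i₀ + ∑ i ∈ P, U r i| ≤ 1 := by
  classical
  have hinj : ∀ i ∈ P, ∀ j ∈ P, l i = l j → i = j := by
    intro i hi j hj hij
    by_contra hne
    have h0 := hl' i hi j hj (Ne.symm hne)
    have h1 := hl j hj
    rw [← hij, h0] at h1
    simp at h1
  have hU : ∀ a b, U a (e b) = (1 : Matrix ι ι ℚ) a b := fun a b => by
    rw [← he]; rfl
  set L : Finset ι := P.image l with hL
  have hrL : r ∉ L := by simpa [hL] using hr
  let inv : ι → κ := fun a => if h : ∃ i ∈ P, l i = a then h.choose else i₀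
  have hinv : ∀ i ∈ P, inv (l i) = i := by
    intro i hi
    have h : ∃ j ∈ P, l j = l i := ⟨i, hi, rfl⟩
    simp only [inv, dif_pos h]
    exact hinj _ h.choose_spec.1 _ hi h.choose_spec.2
  let g : ι → κ := fun a => if a = r then i₀ else if a ∈ L then inv a else e a
  have hgr : g r = i₀ := by simp [g]
  have hgl : ∀ i ∈ P, g (l i) = i := by
    intro i hi
    have h : l i ∈ L := Finset.mem_image_of_mem l hi
    simp [g, hr i hi, h, hinv i hi]
  have hge : ∀ a, a ≠ r → a ∉ L → g a = e a := by
    intro a h1 h2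
    simp [g, h1, h2]
  set W := U.submatrix id g with hW
  let s : ι → ℚ := fun a => U a i₀ + ∑ i ∈ P, U a i
  let y : ι → ℚ := fun a => if a = r ∨ a ∈ L then 1 else 0
  have hWy : W *ᵥ y = s := by
    ext a
    have : ∀ b, W a b * y b = if b ∈ insert r L then U a (g b) else 0 := by
      intro b
      simp [y, hW]
    simp only [Matrix.mulVec, dotProduct, this, s]
    rw [Finset.sum_ite_mem, Finset.univ_inter, Finset.sum_insert hrL, hgr, hL,
      Finset.sum_image (fun i hi j hj h => hinj i hi j hj h)]
    congr 1
    exact Finset.sum_congr rfl fun i hi => by rw [hgl i hi]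
  have hcol : W.det = (W.updateCol r s).det := by
    rw [← Matrix.cramer_apply, ← hWy, Matrix.cramer_eq_adjugate_mulVec, Matrix.mulVec_mulVec,
      Matrix.adjugate_mul, Matrix.smul_mulVec, Matrix.one_mulVec]
    simp [y]
  have hsl : ∀ i ∈ P, s (l i) = 0 := by
    intro i hi
    simp only [s]
    rw [Finset.sum_eq_single_of_mem i hi (fun j hj hne => hl' i hi j hj hne), hl₀ i hi]
    ring
  let p : ι → Prop := fun a => ∃ i ∈ P, l i = a
  have hrp : ¬p r := fun h => hrL (Finset.mem_image.2 h)
  have hblock := Matrix.twoBlockTriangular_det' (W.updateCol r s) p (by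
    intro a ha b hb
    obtain ⟨i, hi, rfl⟩ := ha
    by_cases hbr : b = r
    · subst hbr
      simp [hsl i hi]
    · rw [Matrix.updateCol_ne hbr]
      simp only [hW, Matrix.submatrix_apply, id, hge b hbr (fun h => hb (Finset.mem_image.1 h)), hU]
      exact Matrix.one_apply_ne (fun h => hb (h ▸ ⟨i, hi, rfl⟩)))
  have hone : ((W.updateCol r s).toSquareBlockProp p) =
      Matrix.diagonal fun a : {a // p a} => U a (g a) := by
    ext ⟨a, ha⟩ ⟨b, hb⟩
    obtain ⟨i, hi, rfl⟩ := ha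
    obtain ⟨j, hj, rfl⟩ := hb
    rw [Matrix.toSquareBlockProp_def, Matrix.of_apply, Matrix.updateCol_ne (hr j hj)]
    simp only [hW, Matrix.submatrix_apply, id, hgl j hj, Matrix.diagonal_apply, hgl i hi]
    by_cases hij : i = j
    · simp [hij]
    · rw [if_neg, hl' i hi j hj (Ne.symm hij)]
      simpa using fun h => hij (hinj i hi j hj h)
  have htwo : ((W.updateCol r s).toSquareBlockProp fun a => ¬p a) =
      (1 : Matrix {a // ¬p a} {a // ¬p a} ℚ).updateCol ⟨r, hrp⟩ (fun a => s a) := by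
    ext ⟨a, ha⟩ ⟨b, hb⟩
    rw [Matrix.toSquareBlockProp_def, Matrix.of_apply]
    by_cases hbr : b = r
    · subst hbr
      simp
    · rw [Matrix.updateCol_ne hbr, Matrix.updateCol_ne (by simpa using hbr)]
      simp only [hW, Matrix.submatrix_apply, id, hge b hbr (fun h => hb (Finset.mem_image.1 h)), hU, Matrix.one_apply,
        Subtype.mk.injEq]
  have hdone : |((W.updateCol r s).toSquareBlockProp p).det| = 1 := by
    rw [hone, Matrix.det_diagonal, Finset.abs_prod]
    refine Finset.prod_eq_one ?_
    rintro ⟨a, ha⟩ -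
    obtain ⟨i, hi, rfl⟩ := ha
    simp only [hgl i hi, hl i hi]
  have hdtwo : ((W.updateCol r s).toSquareBlockProp fun a => ¬p a).det = s r := by
    rw [htwo, ← Matrix.cramer_apply, Matrix.cramer_one]
    rfl
  have := hdet g
  rw [← hW, hcol, hblock, abs_mul, hdone, hdtwo, one_mul] at this
  exact this

/-- Columns which are pairwise congruent modulo `1` but pairwise far apart have a small sum. -/
theorem abs_sum_le_one_of_pairwise_far {U : Matrix ι κ ℚ} {e : ι → κ}
    (he : U.submatrix id e = 1) (hdet : ∀ g : ι → κ, |(U.submatrix id g).det| ≤ 1)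
    {P : Finset κ} (hcongr : ∀ i ∈ P, ∀ j ∈ P, ∀ r, ∃ k : ℤ, U r i - U r j = k)
    (hfar : ∀ i ∈ P, ∀ j ∈ P, i ≠ j → ∃ r, 1 < |U r i - U r j|) (r : ι) :
    |∑ i ∈ P, U r i| ≤ 1 := by
  have hentry : ∀ r i, |U r i| ≤ 1 := fun r i => by
    simpa using abs_sum_le_one_of_star he hdet (P := ∅) (i₀ := i) (fun _ => r)
      (by simp) (by simp) (by simp) (r := r) (by simp)
  have hopp : ∀ i ∈ P, ∀ j ∈ P, i ≠ j → ∃ r, |U r j| = 1 ∧ U r i = -U r j := by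
    intro i hi j hj hij
    obtain ⟨r, hr⟩ := hfar i hi j hj hij
    refine ⟨r, ?_⟩
    obtain ⟨k, hk⟩ := hcongr i hi j hj r
    have h1 := abs_le.1 (hentry r i)
    have h2 := abs_le.1 (hentry r j)
    rw [hk] at hr
    have hk1 : 1 < |k| := by exact_mod_cast hr
    rcases lt_abs.1 hk1 with h | h
    · have : (2 : ℚ) ≤ k := by exact_mod_cast h
      have e1 : U r i = 1 := by linarith
      have e2 : U r j = -1 := by linarith
      rw [e1, e2]; norm_num
    · have : (k : ℚ) ≤ -2 := by exact_mod_cast (by omega : k ≤ -2)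
      have e1 : U r i = -1 := by linarith
      have e2 : U r j = 1 := by linarith
      rw [e1, e2]; norm_num
  have hpair : ∀ i ∈ P, ∀ j ∈ P, i ≠ j → ∀ r, |U r i + U r j| ≤ 1 := by
    intro i hi j hj hij r
    obtain ⟨t, ht, ht'⟩ := hopp i hi j hj hij
    by_cases htr : t = r
    · subst htr
      simp [ht']
    · simpa using abs_sum_le_one_of_star he hdet (P := {j}) (i₀ := i) (fun _ => t)
        (by simpa using ht) (by simpa using ht') (by simp) (r := r) (by simpa using htr)
  rcases P.eq_empty_or_nonempty with rfl | ⟨i₀, hi₀⟩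
  · simp
  have hex : ∀ i, ∃ t, i ∈ P.erase i₀ → |U t i| = 1 ∧ U t i₀ = -U t i := by
    intro i
    by_cases h : i ∈ P.erase i₀
    · obtain ⟨t, ht⟩ := hopp i₀ hi₀ i (Finset.mem_of_mem_erase h) (Finset.ne_of_mem_erase h).symm
      exact ⟨t, fun _ => ht⟩
    · exact ⟨r, fun h' => absurd h' h⟩
  choose l hl using hex
  have hzero : ∀ i ∈ P.erase i₀, ∀ j ∈ P.erase i₀, j ≠ i → U (l i) j = 0 := by
    intro i hi j hj hji
    obtain ⟨h1, h2⟩ := hl i hi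
    have hiP := Finset.mem_of_mem_erase hi
    have hjP := Finset.mem_of_mem_erase hj
    have p1 := abs_le.1 (hpair i hiP j hjP hji.symm (l i))
    have p2 := abs_le.1 (hpair i₀ hi₀ j hjP (Finset.ne_of_mem_erase hj).symm (l i))
    rw [h2] at p2
    rcases (abs_eq zero_le_one).1 h1 with h | h <;> rw [h] at p1 p2 <;> linarith
  rw [← Finset.add_sum_erase P (U r) hi₀]
  by_cases hr : ∃ i ∈ P.erase i₀, l i = r
  · obtain ⟨i, hi, rfl⟩ := hr
    rw [Finset.sum_eq_single_of_mem i hi (fun j hj hne => hzero i hi j hj hne), (hl i hi).2]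
    simp
  · push Not at hr
    exact abs_sum_le_one_of_star he hdet l (fun i hi => (hl i hi).1) (fun i hi => (hl i hi).2)
      hzero hr

end Minors

section Dissociated

variable {ι κ : Type*} [Fintype ι]

/-- The columns of `A` are dissociated: they satisfy no nontrivial linear relation with
coefficients in `{-1, 0, 1}`. -/
def Dissociated [Fintype κ] (A : Matrix ι κ ℤ) : Prop :=
  ∀ x : κ → ℤ, (∀ j, |x j| ≤ 1) → A *ᵥ x = 0 → x = 0

theorem Dissociated.eq_zero_of_mulVec_eq [Fintype κ] {A : Matrix ι κ ℤ} (hA : Dissociated A) {e : ι → κ}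
    (he : Function.Injective e) {x : κ → ℤ} (hx : ∀ j, |x j| ≤ 1) (hxe : ∀ i, x (e i) = 0)
    {y : ι → ℤ} (hy : ∀ i, |y i| ≤ 1) (hxy : A *ᵥ x = A.submatrix id e *ᵥ y) : x = 0 := by
  classical
  let w : κ → ℤ := x - ∑ i, Pi.single (e i) (y i)
  have hwe : ∀ i, w (e i) = -y i := by
    intro i
    simp [w, hxe, Finset.sum_apply, Pi.single_apply, he.eq_iff]
  have hwn : ∀ j, (∀ i, e i ≠ j) → w j = x j := by
    intro j hj
    simp only [w, Pi.sub_apply, Finset.sum_apply, Pi.single_apply]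
    rw [Finset.sum_eq_zero (fun i _ => if_neg (hj i).symm), sub_zero]
  have hw : w = 0 := by
    refine hA w (fun j => ?_) ?_
    · by_cases hj : ∃ i, e i = j
      · obtain ⟨i, rfl⟩ := hj
        rw [hwe, abs_neg]
        exact hy i
      · push Not at hj
        rw [hwn j hj]
        exact hx j
    · rw [Matrix.mulVec_sub, hxy, sub_eq_zero, Matrix.mulVec_sum]
      ext r
      simp [Matrix.mulVec, dotProduct, Finset.sum_apply, mul_comm]
  ext j
  by_cases hj : ∃ i, e i = j
  · obtain ⟨i, rfl⟩ := hj
    exact hxe i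
  · push Not at hj
    rw [← hwn j hj, hw]

/-- The class of a column of `A` modulo the lattice generated by the columns selected by `e`. -/
def colClass (A : Matrix ι κ ℤ) (e : ι → κ) (j : κ) :
    (ι → ℤ) ⧸ LinearMap.range (A.submatrix id e).mulVecLin :=
  Submodule.Quotient.mk (A.col j)

theorem exists_mulVec_eq_of_sum_colClass [Fintype κ] {A : Matrix ι κ ℤ} {e : ι → κ} {x : κ → ℤ} (hx : ∑ j, x j • colClass A e j = 0) :
    ∃ y : ι → ℤ, A *ᵥ x = A.submatrix id e *ᵥ y := by
  have h : (Submodule.Quotient.mk (A *ᵥ x) :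
      (ι → ℤ) ⧸ LinearMap.range (A.submatrix id e).mulVecLin) = 0 := by
    rw [← hx, Matrix.mulVec_eq_sum, ← Submodule.mkQ_apply, map_sum]
    refine Finset.sum_congr rfl fun j _ => ?_
    rw [colClass, ← Submodule.Quotient.mk_smul, Submodule.mkQ_apply]
    congr 1
    ext r
    simp [mul_comm]
  rw [Submodule.Quotient.mk_eq_zero] at h
  obtain ⟨y, hy⟩ := h
  exact ⟨y, hy.symm⟩

variable [DecidableEq ι]

theorem injective_of_det_submatrix_ne_zero {A : Matrix ι κ ℤ} {e : ι → κ}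
    (hD : (A.submatrix id e).det ≠ 0) : Function.Injective e := by
  intro i j hij
  by_contra hne
  exact hD (Matrix.det_zero_of_column_eq hne fun r => by simp [hij])

theorem natCard_quotient_range_mulVecLin {B : Matrix ι ι ℤ} (hB : B.det ≠ 0) :
    Nat.card ((ι → ℤ) ⧸ LinearMap.range B.mulVecLin) = B.det.natAbs := by
  have hinj : Function.Injective B.mulVecLin := Matrix.mulVec_injective_of_det_ne_zero hB
  rw [← Submodule.natAbs_det_equiv _ (LinearEquiv.ofInjective B.mulVecLin hinj)]
  rw [← LinearMap.det_toLin' B]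
  congr 2

/-- The coordinates of the columns of `A` with respect to the basis of columns selected
by `e`. -/
noncomputable def coords (A : Matrix ι κ ℤ) (e : ι → κ) : Matrix ι κ ℚ :=
  ((A.submatrix id e).map (Int.cast : ℤ → ℚ))⁻¹ * A.map (Int.cast : ℤ → ℚ)

variable {A : Matrix ι κ ℤ} {e : ι → κ}

theorem det_map_intCast (B : Matrix ι ι ℤ) :
    (B.map (Int.cast : ℤ → ℚ)).det = (B.det : ℚ) :=
  ((Int.castRingHom ℚ).map_det B).symm

theorem isUnit_det_map_intCast {B : Matrix ι ι ℤ} (hB : B.det ≠ 0) :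
    IsUnit (B.map (Int.cast : ℤ → ℚ)).det := by
  rw [det_map_intCast, isUnit_iff_ne_zero]
  exact_mod_cast hB

theorem coords_submatrix_self (hD : (A.submatrix id e).det ≠ 0) :
    (coords A e).submatrix id e = 1 := by
  rw [coords, Matrix.submatrix_mul _ _ id id e Function.bijective_id, Matrix.submatrix_id_id]
  exact Matrix.nonsing_inv_mul _ (isUnit_det_map_intCast hD)

theorem abs_det_coords_submatrix_le (hD : (A.submatrix id e).det ≠ 0)
    (hmax : ∀ g : ι → κ, |(A.submatrix id g).det| ≤ |(A.submatrix id e).det|) (g : ι → κ) :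
    |((coords A e).submatrix id g).det| ≤ 1 := by
  rw [coords, Matrix.submatrix_mul _ _ id id g Function.bijective_id, Matrix.submatrix_id_id,
    Matrix.det_mul, Matrix.det_nonsing_inv, det_map_intCast, Matrix.submatrix_map,
    det_map_intCast, Ring.inverse_eq_inv', abs_mul, abs_inv, inv_mul_le_one₀]
  · exact_mod_cast hmax g
  · exact abs_pos.2 (by exact_mod_cast hD)

theorem coords_mulVec [Fintype κ] (hD : (A.submatrix id e).det ≠ 0) {x : κ → ℤ} {y : ι → ℤ}
    (hxy : A *ᵥ x = A.submatrix id e *ᵥ y) (r : ι) :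
    ∑ j, coords A e r j * x j = y r := by
  have h : A.map (Int.cast : ℤ → ℚ) *ᵥ (fun j => (x j : ℚ)) =
      (A.submatrix id e).map (Int.cast : ℤ → ℚ) *ᵥ (fun j => (y j : ℚ)) := by
    ext r
    have := congrArg (Int.cast : ℤ → ℚ) (congrFun hxy r)
    simpa [Matrix.mulVec, dotProduct] using this
  have h2 : coords A e *ᵥ (fun j => (x j : ℚ)) = fun j => (y j : ℚ) := by
    rw [coords, ← Matrix.mulVec_mulVec, h, Matrix.mulVec_mulVec,
      Matrix.nonsing_inv_mul _ (isUnit_det_map_intCast hD), Matrix.one_mulVec]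
  exact congrFun h2 r

/-- A relation between column classes whose coordinates are small is trivial. -/
theorem Dissociated.eq_zero_of_sum_colClass [Fintype κ] (hA : Dissociated A)
    (hD : (A.submatrix id e).det ≠ 0) {x : κ → ℤ} (hx : ∀ j, |x j| ≤ 1)
    (hxe : ∀ i, x (e i) = 0) (hsum : ∑ j, x j • colClass A e j = 0)
    (hsmall : ∀ r, |∑ j, coords A e r j * x j| ≤ 1) : x = 0 := by
  obtain ⟨y, hy⟩ := exists_mulVec_eq_of_sum_colClass hsum
  refine hA.eq_zero_of_mulVec_eq (injective_of_det_submatrix_ne_zero hD) hx hxe (fun r => ?_) hy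
  have := hsmall r
  rw [coords_mulVec hD hy r] at this
  exact_mod_cast this

end Dissociated

section Counting

variable {ι κ : Type*} [Fintype ι] [DecidableEq ι] [Fintype κ] [DecidableEq κ]
  {A : Matrix ι κ ℤ} {e : ι → κ}

open scoped Classical in
theorem Dissociated.card_colClass_lt (hA : Dissociated A) (hD : (A.submatrix id e).det ≠ 0)
    (hmax : ∀ g : ι → κ, |(A.submatrix id g).det| ≤ |(A.submatrix id e).det|)
    {γ : (ι → ℤ) ⧸ LinearMap.range (A.submatrix id e).mulVecLin} (hγ : 0 < addOrderOf γ) :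
    (Finset.univ.filter fun j => (∀ i, e i ≠ j) ∧
      (colClass A e j = γ ∨ colClass A e j = -γ)).card < addOrderOf γ := by
  by_contra! hcard
  obtain ⟨Q, hQ, hQcard⟩ := Finset.exists_subset_card_eq hcard
  have hQe : ∀ i, e i ∉ Q := fun i hi => (Finset.mem_filter.1 (hQ hi)).2.1 i rfl
  let σ : κ → ℤ := fun j => if j ∈ Q ∧ colClass A e j ≠ γ then -1 else 1
  have hσ : ∀ j, σ j = 1 ∨ σ j = -1 := by
    intro j
    by_cases h : j ∈ Q ∧ colClass A e j ≠ γ <;> simp [σ, h]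
  have hσe : ∀ i, σ (e i) = 1 := fun i => by simp [σ, hQe i]
  have hσQ : ∀ j ∈ Q, σ j • colClass A e j = γ := by
    intro j hj
    by_cases h : colClass A e j = γ
    · simp [σ, h]
    · have := (Finset.mem_filter.1 (hQ hj)).2.2.resolve_left h
      simp only [σ, hj, h, true_and, ne_eq, not_false_eq_true, if_true]
      simp [this]
  let U : Matrix ι κ ℚ := Matrix.of fun r j => coords A e r j * σ j
  have hUe : U.submatrix id e = 1 := by
    rw [← coords_submatrix_self hD]
    ext r i
    simp [U, hσe]
  have hUdet : ∀ g : ι → κ, |(U.submatrix id g).det| ≤ 1 := by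
    intro g
    have : U.submatrix id g =
        (coords A e).submatrix id g * Matrix.diagonal fun i => (σ (g i) : ℚ) := by
      ext r i
      simp [U]
    rw [this, Matrix.det_mul, Matrix.det_diagonal, abs_mul, Finset.abs_prod,
      Finset.prod_eq_one, mul_one]
    · exact abs_det_coords_submatrix_le hD hmax g
    · intro i _
      rcases hσ (g i) with h | h <;> simp [h]
  have hclass : ∀ x : κ → ℤ, (∀ j ∉ Q, x j = 0) → (∑ j, x j) • γ = 0 →
      ∑ j, (x j * σ j) • colClass A e j = 0 := by
    intro x hx hsum
    rw [← hsum, Finset.sum_smul]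
    refine Finset.sum_congr rfl fun j _ => ?_
    by_cases hj : j ∈ Q
    · rw [mul_smul, hσQ j hj]
    · simp [hx j hj]
  have hUx : ∀ (x : κ → ℤ) r,
      ∑ j, coords A e r j * ((x j * σ j : ℤ) : ℚ) = ∑ j, U r j * x j := by
    intro x r
    refine Finset.sum_congr rfl fun j _ => ?_
    simp only [U, Matrix.of_apply]
    push_cast
    ring
  have hsmall : ∀ x : κ → ℤ, (∀ j ∉ Q, x j = 0) → (∀ j, |x j| ≤ 1) → (∑ j, x j) • γ = 0 →
      (∀ r, |∑ j, U r j * x j| ≤ 1) → ∀ j, x j = 0 := by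
    intro x hx hx1 hsum hU j
    have h := congrFun (hA.eq_zero_of_sum_colClass hD (x := fun j => x j * σ j)
      (fun j => by rcases hσ j with h | h <;> simpa [h] using hx1 j)
      (fun i => by simp [hx _ (hQe i)]) (hclass x hx hsum)
      (fun r => by rw [hUx]; exact hU r)) j
    rcases hσ j with h' | h' <;> simpa [h'] using h
  have hdiff : ∀ i ∈ Q, ∀ j ∈ Q, i ≠ j → ∃ x : κ → ℤ, (∀ j ∉ Q, x j = 0) ∧
      (∀ j, |x j| ≤ 1) ∧ ∑ j, x j = 0 ∧ (∀ r, ∑ j, U r j * x j = U r i - U r j) ∧ x i = 1 := by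
    intro i hi j hj hij
    refine ⟨Pi.single i 1 - Pi.single j 1, ?_, ?_, ?_, ?_, ?_⟩
    · intro k hk
      have h1 : k ≠ i := fun h => hk (h ▸ hi)
      have h2 : k ≠ j := fun h => hk (h ▸ hj)
      simp [h1, h2]
    · intro k
      by_cases h1 : k = i
      · subst h1; simp [hij]
      · by_cases h2 : k = j
        · subst h2; simp [h1]
        · simp [h1, h2]
    · simp
    · intro r
      simp [mul_sub, Pi.single_apply]
    · simp [hij]
  have hsum := abs_sum_le_one_of_pairwise_far hUe hUdet (P := Q) (by
      intro i hi j hj r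
      by_cases hij : i = j
      · exact ⟨0, by simp [hij]⟩
      obtain ⟨x, hx, -, hx0, hxU, -⟩ := hdiff i hi j hj hij
      obtain ⟨y, hy⟩ := exists_mulVec_eq_of_sum_colClass (hclass x hx (by simp [hx0]))
      exact ⟨y r, by rw [← hxU, ← hUx, coords_mulVec hD hy]⟩) (by
      intro i hi j hj hij
      by_contra! hle
      obtain ⟨x, hx, hx1, hx0, hxU, hxi⟩ := hdiff i hi j hj hij
      have := hsmall x hx hx1 (by simp [hx0]) (fun r => by rw [hxU]; exact hle r) i
      omega)
  obtain ⟨j, hj⟩ : Q.Nonempty := Finset.card_pos.1 (hQcard ▸ hγ)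
  have := hsmall (fun j => if j ∈ Q then 1 else 0) (fun j hj => by simp [hj])
    (fun j => by by_cases h : j ∈ Q <;> simp [h])
    (by simp [hQcard, addOrderOf_nsmul_eq_zero])
    (fun r => by simpa using hsum r) j
  simp [hj] at this

open scoped Classical in
/-- If the columns of `A` are dissociated, then there are few of them. -/
theorem Dissociated.card_le (hA : Dissociated A) (hD : (A.submatrix id e).det ≠ 0)
    (hmax : ∀ g : ι → κ, |(A.submatrix id g).det| ≤ |(A.submatrix id e).det|) {Δ : ℕ}
    (hΔ : |(A.submatrix id e).det| ≤ Δ) :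
    Fintype.card κ ≤ Fintype.card ι + ((Δ - 1) + 1) / 2 * (Δ - 1) := by
  have he : Function.Injective e := injective_of_det_submatrix_ne_zero hD
  have hG := natCard_quotient_range_mulVecLin hD
  have hpos : 0 < (A.submatrix id e).det.natAbs := Int.natAbs_pos.2 hD
  have hfin : Finite ((ι → ℤ) ⧸ LinearMap.range (A.submatrix id e).mulVecLin) :=
    Nat.finite_of_card_ne_zero (by omega)
  have := Fintype.ofFinite ((ι → ℤ) ⧸ LinearMap.range (A.submatrix id e).mulVecLin)
  set G := (ι → ℤ) ⧸ LinearMap.range (A.submatrix id e).mulVecLin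
  set δ := (A.submatrix id e).det.natAbs
  have hδΔ : δ ≤ Δ := by
    rw [Int.abs_eq_natAbs] at hΔ
    exact_mod_cast hΔ
  let N : Finset κ := Finset.univ.filter fun j => ∀ i, e i ≠ j
  let f : G → ℕ := fun γ => (N.filter fun j => colClass A e j = γ).card
  let p : G → ℕ := fun γ =>
    (N.filter fun j => colClass A e j = γ ∨ colClass A e j = -γ).card
  have hp : ∀ γ : G, p γ + 1 ≤ addOrderOf γ := by
    intro γ
    have := hA.card_colClass_lt hD hmax (γ := γ) (addOrderOf_pos γ)
    simp only [p, N, Finset.filter_filter]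
    exact this
  have hpδ : ∀ γ : G, p γ ≤ δ - 1 := by
    intro γ
    have h1 := hp γ
    have h2 : addOrderOf γ ≤ Nat.card G := addOrderOf_le_card
    omega
  have hfp : ∀ γ : G, f γ ≤ p γ := fun γ =>
    Finset.card_le_card (Finset.monotone_filter_right _ fun j _ h => Or.inl h)
  have hf0 : f 0 = 0 := by
    have h1 := hp 0
    have h2 := hfp 0
    rw [addOrderOf_zero] at h1
    omega
  have hNf : N.card = ∑ γ ∈ Finset.univ.erase (0 : G), f γ := by
    rw [Finset.card_eq_sum_card_fiberwise (f := colClass A e) (t := Finset.univ) (by simp),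
      ← Finset.add_sum_erase _ _ (Finset.mem_univ (0 : G))]
    change f 0 + _ = _
    rw [hf0, zero_add]
  have hcardG : (Finset.univ.erase (0 : G)).card = δ - 1 := by
    rw [Finset.card_erase_of_mem (Finset.mem_univ _), Finset.card_univ, ← Nat.card_eq_fintype_card,
      hG]
  have hNneg : N.card = ∑ γ ∈ Finset.univ.erase (0 : G), f (-γ) := by
    rw [hNf]
    exact Finset.sum_nbij' (fun γ => -γ) (fun γ => -γ) (by simp) (by simp)
      (fun γ _ => neg_neg γ) (fun γ _ => neg_neg γ) (fun γ _ => congrArg f (neg_neg γ).symm)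
  have hpair : ∀ γ ∈ Finset.univ.erase (0 : G), f γ + f (-γ) ≤ max (δ - 1) 2 := by
    intro γ hγ
    by_cases hγ2 : γ = -γ
    · have h2 : addOrderOf γ ≤ 2 := by
        refine addOrderOf_le_of_nsmul_eq_zero two_pos ?_
        rw [two_nsmul]
        nth_rewrite 2 [hγ2]
        simp
      rw [← hγ2]
      have := hfp γ
      have := hp γ
      omega
    · have : f γ + f (-γ) = p γ := by
        simp only [f, p]
        rw [Finset.filter_or, Finset.card_union_of_disjoint]
        exact Finset.disjoint_filter.2 fun j _ h h' => hγ2 (h.symm.trans h')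
      have := hpδ γ
      omega
  have hNle : N.card ≤ (Δ - 1 + 1) / 2 * (Δ - 1) := by
    by_cases h3 : 3 ≤ δ
    · have h1 : N.card + N.card ≤ (δ - 1) * (δ - 1) := by
        nth_rewrite 1 [hNf]
        rw [hNneg, ← Finset.sum_add_distrib, ← hcardG]
        refine (Finset.sum_le_card_nsmul _ _ (δ - 1) fun γ hγ => ?_).trans (by simp [hcardG])
        exact (hpair γ hγ).trans (by omega)
      have h2 : (δ - 1) * (δ - 1) ≤ (Δ - 1) * (Δ - 1) := by gcongr
      have h4 : Δ - 1 ≤ 2 * ((Δ - 1 + 1) / 2) := by omega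
      nlinarith [Nat.mul_le_mul_right (Δ - 1) h4]
    · have h1 : N.card ≤ (δ - 1) * (δ - 1) := by
        rw [hNf]
        exact (Finset.sum_le_card_nsmul _ _ (δ - 1) fun γ _ => (hfp γ).trans (hpδ γ)).trans
          (by simp [hcardG])
      have h2 : (δ - 1) * (δ - 1) ≤ (δ - 1 + 1) / 2 * (δ - 1) := by
        have : δ = 1 ∨ δ = 2 := by omega
        rcases this with h | h <;> simp [h]
      refine h1.trans (h2.trans ?_)
      gcongr
  have hcard : Fintype.card κ = Fintype.card ι + N.card := by
    have : N = (Finset.univ.image e)ᶜ := by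
      ext j
      simp [N]
    rw [this, Finset.card_compl, Finset.card_image_of_injective _ he, Finset.card_univ]
    have := Fintype.card_le_of_injective e he
    omega
  omega

end Counting

section Rank

theorem span_range_col_eq_top {m : ℕ} {κ : Type*} [Fintype κ] {A : Matrix (Fin m) κ ℤ}
    (hrank : A.rank = m) :
    Submodule.span ℚ (Set.range (A.map (Int.cast : ℤ → ℚ)).col) = ⊤ := by
  obtain ⟨f, hf⟩ := exists_linearIndependent_of_le_finrank (R := ℤ)
    (M := LinearMap.range A.mulVecLin) hrank.ge
  let φ : (Fin m → ℤ) →ₗ[ℤ] (Fin m → ℚ) := (Algebra.linearMap ℤ ℚ).compLeft (Fin m)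
  have hφ : ∀ x, φ x = fun r => (x r : ℚ) := fun x => by
    ext r
    simp [φ]
  have hφinj : Function.Injective φ := by
    intro x y hxy
    ext r
    have := congrFun hxy r
    simpa [hφ] using this
  have hli : LinearIndependent ℤ fun i => φ (f i) :=
    (hf.map' _ (Submodule.ker_subtype _)).map' φ (LinearMap.ker_eq_bot.2 hφinj)
  rw [LinearIndependent.iff_fractionRing ℤ ℚ] at hli
  rw [eq_top_iff, ← hli.span_eq_top_of_card_eq_finrank' (by simp), Submodule.span_le]
  rintro _ ⟨i, rfl⟩
  obtain ⟨x, hx⟩ := (f i).2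
  have : φ (f i) = ∑ j, (x j : ℚ) • (A.map (Int.cast : ℤ → ℚ)).col j := by
    rw [← hx, hφ]
    ext r
    simp [Matrix.mulVec, dotProduct, mul_comm]
  simp only [this]
  exact Submodule.sum_mem _ fun j _ =>
    Submodule.smul_mem _ _ (Submodule.subset_span ⟨j, rfl⟩)

theorem exists_det_submatrix_ne_zero {m : ℕ} {κ : Type*} {A : Matrix (Fin m) κ ℤ}
    (hspan : Submodule.span ℚ (Set.range (A.map (Int.cast : ℤ → ℚ)).col) = ⊤) :
    ∃ e : Fin m → κ, (A.submatrix id e).det ≠ 0 := by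
  obtain ⟨τ, a, -, hsp, hli⟩ := exists_linearIndependent' ℚ (A.map (Int.cast : ℤ → ℚ)).col
  let b := Module.Basis.mk hli (by rw [hsp, hspan])
  have hτ : Finite τ := Module.Finite.finite_basis b
  have := Fintype.ofFinite τ
  have hcard : Fintype.card τ = m := by
    rw [← Module.finrank_eq_card_basis b]
    simp
  let ε : Fin m ≃ τ := (Fintype.equivFinOfCardEq hcard).symm
  refine ⟨a ∘ ε, fun h => ?_⟩
  have hli' : LinearIndependent ℚ ((A.submatrix id (a ∘ ε)).map (Int.cast : ℤ → ℚ)).col :=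
    hli.comp ε ε.injective
  rw [Matrix.linearIndependent_cols_iff_isUnit, Matrix.isUnit_iff_isUnit_det, det_map_intCast,
    h] at hli'
  simp at hli'

/-- A set of dissociated columns of a matrix of full row rank is small. -/
theorem card_le_of_dissociated {Δ m n : ℕ} {A : Matrix (Fin m) (Fin n) ℤ} (hrank : A.rank = m)
    (hub : ∀ g : Fin m → Fin n, Function.Injective g → |(A.submatrix id g).det| ≤ (Δ : ℤ))
    {S : Finset (Fin n)}
    (hS : ∀ x : Fin n → ℤ, (∀ j ∉ S, x j = 0) → (∀ j, |x j| ≤ 1) → A *ᵥ x = 0 → x = 0) :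
    S.card ≤ m + ((Δ - 1) + 1) / 2 * (Δ - 1) := by
  obtain ⟨T, hST, hT⟩ := Finite.exists_le_maximal (p := fun T : Finset (Fin n) =>
    ∀ x : Fin n → ℤ, (∀ j ∉ T, x j = 0) → (∀ j, |x j| ≤ 1) → A *ᵥ x = 0 → x = 0) hS
  let C : Matrix (Fin m) T ℤ := A.submatrix id Subtype.val
  have hspan : Submodule.span ℚ (Set.range (C.map (Int.cast : ℤ → ℚ)).col) = ⊤ := by
    rw [eq_top_iff, ← span_range_col_eq_top hrank, Submodule.span_le]
    rintro _ ⟨j, rfl⟩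
    by_contra hj
    have hjT : j ∉ T := fun h => hj (Submodule.subset_span ⟨⟨j, h⟩, rfl⟩)
    refine hjT (hT.2 (y := insert j T) ?_ (Finset.subset_insert j T) (Finset.mem_insert_self j T))
    intro x hx hx1 hAx
    refine hT.1 x (fun k hk => ?_) hx1 hAx
    by_cases hkj : k = j
    · subst hkj
      by_contra hxk
      apply hj
      have hsum : (x k : ℚ) • (A.map (Int.cast : ℤ → ℚ)).col k =
          -∑ i : T, (x i : ℚ) • (C.map (Int.cast : ℤ → ℚ)).col i := by
        ext r
        have h := congrArg (Int.cast : ℤ → ℚ) (congrFun hAx r)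
        simp only [Matrix.mulVec, dotProduct, Pi.zero_apply] at h
        rw [← Finset.sum_subset (Finset.subset_univ (insert k T))
          (fun i _ hi => by rw [hx i hi, mul_zero]), Finset.sum_insert hjT,
          ← Finset.sum_coe_sort T] at h
        push_cast at h
        simp only [Pi.smul_apply, Pi.neg_apply, Finset.sum_apply, Matrix.col_apply,
          Matrix.map_apply, smul_eq_mul, C, Matrix.submatrix_apply, id]
        simp only [mul_comm (x _ : ℚ)]
        linarith
      have hxk' : (x k : ℚ) ≠ 0 := by exact_mod_cast hxk
      rw [SetLike.mem_coe, ← Submodule.smul_mem_iff _ hxk', hsum]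
      exact Submodule.neg_mem _ (Submodule.sum_mem _ fun i _ =>
        Submodule.smul_mem _ _ (Submodule.subset_span ⟨i, rfl⟩))
    · exact hx k (by simp [hkj, hk])
  obtain ⟨e₀, he₀⟩ := exists_det_submatrix_ne_zero hspan
  have : Nonempty (Fin m → T) := ⟨e₀⟩
  obtain ⟨e, he⟩ := Finite.exists_max fun g : Fin m → T => |(C.submatrix id g).det|
  have hD : (C.submatrix id e).det ≠ 0 := abs_pos.1 ((abs_pos.2 he₀).trans_le (he e₀))
  have hC : Dissociated C := by
    intro x hx hCx
    let w : Fin n → ℤ := fun j => if h : j ∈ T then x ⟨j, h⟩ else 0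
    have hw : w = 0 := by
      refine hT.1 w (fun j hj => dif_neg hj) (fun j => ?_) ?_
      · by_cases h : j ∈ T
        · simpa [w, h] using hx ⟨j, h⟩
        · simp [w, h]
      · rw [← hCx]
        ext r
        simp only [Matrix.mulVec, dotProduct]
        rw [← Finset.sum_subset (Finset.subset_univ T)
          (fun i _ hi => by simp [w, hi]), ← Finset.sum_coe_sort T]
        exact Finset.sum_congr rfl fun i _ => by simp [w, C]
    ext j
    simpa [w] using congrFun hw j
  have := hC.card_le hD he (hub (Subtype.val ∘ e)
    (Subtype.val_injective.comp (injective_of_det_submatrix_ne_zero hD)))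
  simp only [Fintype.card_coe, Fintype.card_fin] at this
  exact (Finset.card_le_card hST).trans this

end Rank

/-- If a feasible point `z` is optimal and has minimal support among optimal points, then the
columns in its support are dissociated. -/
theorem eq_zero_of_minimal_support {m n : ℕ} {A : Matrix (Fin m) (Fin n) ℤ} {b : Fin m → ℤ}
    {c z : Fin n → ℤ} (hz : A *ᵥ z = b) (hz0 : ∀ i, 0 ≤ z i)
    (hopt : ∀ x : Fin n → ℤ, A *ᵥ x = b → (∀ i, 0 ≤ x i) → c ⬝ᵥ x ≤ c ⬝ᵥ z)
    (hmin : ∀ y : Fin n → ℤ, A *ᵥ y = b → (∀ i, 0 ≤ y i) → c ⬝ᵥ y = c ⬝ᵥ z →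
      (Finset.univ.filter fun i => z i ≠ 0).card ≤ (Finset.univ.filter fun i => y i ≠ 0).card)
    {x : Fin n → ℤ} (hx : ∀ j, z j = 0 → x j = 0) (hx1 : ∀ j, |x j| ≤ 1) (hAx : A *ᵥ x = 0) :
    x = 0 := by
  have hnonneg : ∀ y : Fin n → ℤ, (∀ j, z j = 0 → y j = 0) → (∀ j, |y j| ≤ 1) → A *ᵥ y = 0 →
      c ⬝ᵥ y = 0 → ∀ j, 0 ≤ y j := by
    intro y hy hy1 hAy hcy
    by_contra! hneg
    obtain ⟨j₀, hj₀⟩ := hneg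
    obtain ⟨j, hj, hjmin⟩ := Finset.exists_min_image
      (Finset.univ.filter fun j => y j < 0) z ⟨j₀, by simpa using hj₀⟩
    have hval : ∀ i, y i < 0 → y i = -1 := fun i hi => by
      have := (abs_le.1 (hy1 i)).1
      omega
    have hyj : y j < 0 := (Finset.mem_filter.1 hj).2
    have hcard := hmin (z + z j • y)
      (by rw [Matrix.mulVec_add, Matrix.mulVec_smul, hAy, hz, smul_zero, add_zero])
      (fun i => by
        simp only [Pi.add_apply, Pi.smul_apply, smul_eq_mul]
        by_cases hi : y i < 0
        · have := hjmin i (by simpa using hi)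
          rw [hval i hi]
          linarith
        · have := mul_nonneg (hz0 j) (not_lt.1 hi)
          linarith [hz0 i])
      (by rw [dotProduct_add, dotProduct_smul, hcy, smul_zero, add_zero])
    refine hcard.not_gt (Finset.card_lt_card (Finset.ssubset_iff_of_subset ?_ |>.2 ⟨j, ?_, ?_⟩))
    · intro i hi
      simp only [Finset.mem_filter, Finset.mem_univ, true_and] at hi ⊢
      exact fun h => hi (by simp [h, hy i h])
    · simp only [Finset.mem_filter, Finset.mem_univ, true_and]
      exact fun h => hyj.ne (hy j h)
    · simp [hval j hyj]
  have hle : ∀ j, |x j| ≤ z j := fun j => by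
    rcases (hz0 j).eq_or_lt with h | h
    · simp [hx j h.symm, ← h]
    · exact (hx1 j).trans h
  have hcx : c ⬝ᵥ x = 0 := by
    have h1 := hopt (z + x) (by rw [Matrix.mulVec_add, hAx, hz, add_zero]) fun j => by
      have := (abs_le.1 (hle j)).1
      simp only [Pi.add_apply]
      linarith
    have h2 := hopt (z - x) (by rw [Matrix.mulVec_sub, hAx, hz, sub_zero]) fun j => by
      have := (abs_le.1 (hle j)).2
      simp only [Pi.sub_apply]
      linarith
    rw [dotProduct_add] at h1
    rw [dotProduct_sub] at h2
    linarith
  have hpos := hnonneg x hx hx1 hAx hcx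
  have hneg := hnonneg (-x) (fun j hj => by simp [hx j hj]) (fun j => by simpa using hx1 j)
    (by rw [Matrix.mulVec_neg, hAx, neg_zero]) (by rw [dotProduct_neg, hcx, neg_zero])
  ext j
  exact le_antisymm (neg_nonneg.1 (hneg j)) (hpos j)

end SparseOptimal

/-- Let `A ∈ ℤ^{m×n}` have full row rank with every `m×m` submatrix
having `|det| ≤ Δ`, and let `b ∈ ℤ^m`, `c ∈ ℤ^n`. If the integer program
`max{cᵀx : Ax = b, x ≥ 0, x ∈ ℤ^n}` has an optimal solution, then it has an optimal
solution `z*` with `|supp(z*)| ≤ m + ⌈(Δ−1)/2⌉·(Δ−1)`. -/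
theorem sparse_optimal_solution (Δ m n : ℕ)
    (A : Matrix (Fin m) (Fin n) ℤ) (hrank : A.rank = m)
    (hub : ∀ g : Fin m → Fin n, Function.Injective g →
      |(A.submatrix id g).det| ≤ (Δ : ℤ))
    (b : Fin m → ℤ) (c : Fin n → ℤ)
    (hopt : ∃ z : Fin n → ℤ, (A.mulVec z = b ∧ ∀ i, 0 ≤ z i) ∧
      ∀ x : Fin n → ℤ, A.mulVec x = b → (∀ i, 0 ≤ x i) → c ⬝ᵥ x ≤ c ⬝ᵥ z) :
    ∃ z : Fin n → ℤ, (A.mulVec z = b ∧ ∀ i, 0 ≤ z i) ∧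
      (∀ x : Fin n → ℤ, A.mulVec x = b → (∀ i, 0 ≤ x i) → c ⬝ᵥ x ≤ c ⬝ᵥ z) ∧
      (Finset.univ.filter (fun i => z i ≠ 0)).card ≤ m + ((Δ - 1) + 1) / 2 * (Δ - 1) := by
  let opt : (Fin n → ℤ) → Prop := fun z => (A.mulVec z = b ∧ ∀ i, 0 ≤ z i) ∧
    ∀ x : Fin n → ℤ, A.mulVec x = b → (∀ i, 0 ≤ x i) → c ⬝ᵥ x ≤ c ⬝ᵥ z
  let k : (Fin n → ℤ) → ℕ := fun z => (Finset.univ.filter fun i => z i ≠ 0).card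
  obtain ⟨z, hz, hmin⟩ := exists_minimalFor_of_wellFoundedLT opt k hopt
  refine ⟨z, hz.1, hz.2, SparseOptimal.card_le_of_dissociated hrank hub fun x hx hx1 hAx => ?_⟩
  refine SparseOptimal.eq_zero_of_minimal_support hz.1.1 hz.1.2 hz.2 ?_
    (fun j hj => hx j (by simpa using hj)) hx1 hAx
  intro y hy hy0 hcy
  have hyopt : opt y := ⟨⟨hy, hy0⟩, fun x h1 h2 => hcy ▸ hz.2 x h1 h2⟩
  by_contra! hlt
  exact hlt.not_ge (hmin hyopt hlt.le)
end

section
/- Let A ∈ ℤ^{m×n} have full row rank and let W ∈ ℤ^{n×(n−m)} have full column rank with A·W = 0. Then for every subset I ⊆ [n] with |I| = m one has (1/gcd(A))·|det A_{·,I}| = (1/gcd(W))·|det W_{Ī,·}|, where Ī = [n] \ I, A_{·,I} is the m×m submatrix of A with columns indexed by I, W_{Ī,·} is the (n−m)×(n−m) submatrix of W with rows indexed by Ī, and gcd(M) denotes the greatest common divisor of all determinants of maximal square submatrices (full rank subdeterminants) of M. -/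
open Matrix

/-- Rank-nullity for integer matrices. -/
theorem Matrix.rank_add_finrank_ker_int {m n : Type*} [Fintype n] (M : Matrix m n ℤ) :
    M.rank + Module.finrank ℤ M.mulVecLin.ker = Fintype.card n := by
  rw [Matrix.rank, ← M.mulVecLin.quotKerEquivRange.finrank_eq,
    Submodule.finrank_quotient_add_finrank, Module.finrank_fintype_fun_eq_card]

/-- The Gram matrix of the columns of an integer matrix of full column rank is nonsingular. -/
theorem Matrix.det_transpose_mul_self_ne_zero_of_rank_eq {m n : Type*} [Fintype m] [Fintype n]
    [DecidableEq n] (M : Matrix m n ℤ) (hM : M.rank = Fintype.card n) : (Mᵀ * M).det ≠ 0 := by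
  intro h
  obtain ⟨v, hv, hMv⟩ := exists_mulVec_eq_zero_iff.mpr h
  have hker : M.mulVecLin.ker = ⊥ := by
    rw [← Submodule.finrank_eq_zero (R := ℤ)]
    have := M.rank_add_finrank_ker_int
    lia
  have hMv_zero : M *ᵥ v = 0 := by
    rw [← dotProduct_self_eq_zero, dotProduct_mulVec, ← mulVec_transpose, mulVec_mulVec, hMv,
      zero_dotProduct]
  exact hv (LinearMap.ker_eq_bot'.mp hker v (by simpa using hMv_zero))

/-- The Gram matrix of the rows of an integer matrix of full row rank is nonsingular. -/
theorem Matrix.det_self_mul_transpose_ne_zero_of_rank_eq {m n : Type*} [Fintype m] [Fintype n]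
    [DecidableEq m] (M : Matrix m n ℤ) (hM : M.rank = Fintype.card m) : (M * Mᵀ).det ≠ 0 := by
  intro h
  obtain ⟨v, hv, hMv⟩ := exists_mulVec_eq_zero_iff.mpr h
  have hMv_zero : v ᵥ* M = 0 := by
    rw [← dotProduct_self_eq_zero, ← dotProduct_mulVec, ← mulVec_transpose, mulVec_mulVec, hMv,
      dotProduct_zero]
  have hle : M.mulVecLin.range ≤ (replicateRow Unit v).mulVecLin.ker := by
    rintro _ ⟨x, rfl⟩
    ext
    simp [mulVec, replicateRow, dotProduct_mulVec, hMv_zero]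
  have hrank : (replicateRow Unit v).rank ≠ 0 := by
    rw [Matrix.rank, Ne, Submodule.finrank_eq_zero, LinearMap.range_eq_bot]
    intro h0
    have := congrFun (LinearMap.congr_fun h0 v) ()
    exact hv (dotProduct_self_eq_zero.mp this)
  have h1 := Submodule.finrank_mono hle
  have h2 := (replicateRow Unit v).rank_add_finrank_ker_int
  rw [Matrix.rank] at hM
  lia

/-- Splitting the inner index of a matrix product along a bijection with a sum type. -/
theorem Matrix.submatrix_inl_mul_add_submatrix_inr_mul {R l m n k o : Type*}
    [NonUnitalNonAssocSemiring R] [Fintype m] [Fintype n] [Fintype k]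
    (B : Matrix l n R) (W : Matrix n o R) (e : m ⊕ k ≃ n) :
    B.submatrix id (e ∘ Sum.inl) * W.submatrix (e ∘ Sum.inl) id +
      B.submatrix id (e ∘ Sum.inr) * W.submatrix (e ∘ Sum.inr) id = B * W := by
  ext i j
  simp [mul_apply, ← e.sum_comp]

/-- If `A * W = 0`, stacking `A` on `Wᵀ` relates complementary minors of `A` and `W`. -/
theorem Matrix.det_fromRows_mul_det_complementary_minor {R m n k : Type*} [CommRing R] [Fintype m]
    [Fintype n] [Fintype k] [DecidableEq m] [DecidableEq k]
    (A : Matrix m n R) (W : Matrix n k R) (hAW : A * W = 0) (e : m ⊕ k ≃ n) :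
    ((fromRows A Wᵀ).submatrix id e).det * (W.submatrix (e ∘ Sum.inr) id).det =
      (A.submatrix id (e ∘ Sum.inl)).det * (Wᵀ * W).det := by
  have hN : (fromRows A Wᵀ).submatrix id e =
      fromBlocks (A.submatrix id (e ∘ Sum.inl)) (A.submatrix id (e ∘ Sum.inr))
        (Wᵀ.submatrix id (e ∘ Sum.inl)) (Wᵀ.submatrix id (e ∘ Sum.inr)) := by
    ext (i | i) (j | j) <;> rfl
  have hmul := congrArg det (fromBlocks_multiply (A.submatrix id (e ∘ Sum.inl))
    (A.submatrix id (e ∘ Sum.inr)) (Wᵀ.submatrix id (e ∘ Sum.inl))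
    (Wᵀ.submatrix id (e ∘ Sum.inr)) 1 (W.submatrix (e ∘ Sum.inl) id) 0
    (W.submatrix (e ∘ Sum.inr) id))
  rw [submatrix_inl_mul_add_submatrix_inr_mul, submatrix_inl_mul_add_submatrix_inr_mul,
    hAW, Matrix.mul_one, Matrix.mul_zero, add_zero, det_fromBlocks_zero₁₂, det_mul,
    det_fromBlocks_zero₂₁, det_one, one_mul, ← hN] at hmul
  exact hmul

/-- If `A * W = 0`, the square matrix stacking `A` on `Wᵀ` is nonsingular as soon as both Gram
matrices are. -/
theorem Matrix.det_fromRows_submatrix_ne_zero {R m n k : Type*} [CommRing R] [IsDomain R]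
    [Fintype m] [Fintype n] [Fintype k] [DecidableEq m] [DecidableEq k]
    (A : Matrix m n R) (W : Matrix n k R) (hAW : A * W = 0)
    (hA : (A * Aᵀ).det ≠ 0) (hW : (Wᵀ * W).det ≠ 0) (e : m ⊕ k ≃ n) :
    ((fromRows A Wᵀ).submatrix id e).det ≠ 0 := by
  intro h
  have hWA : Wᵀ * Aᵀ = 0 := by rw [← transpose_mul, hAW, transpose_zero]
  have hmul : (fromRows A Wᵀ).submatrix id e * ((fromRows A Wᵀ).submatrix id e)ᵀ =
      fromBlocks (A * Aᵀ) 0 0 (Wᵀ * W) := by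
    rw [transpose_submatrix, submatrix_mul_equiv, submatrix_id_id, transpose_fromRows,
      transpose_transpose, fromRows_mul_fromCols, hAW, hWA]
  have hdet := congrArg det hmul
  rw [det_mul, h, zero_mul, det_fromBlocks_zero₂₁] at hdet
  exact mul_ne_zero hA hW hdet.symm

/-- The absolute values of complementary maximal minors of `A` and `W` are proportional. -/
theorem Matrix.exists_mul_abs_minor_eq {m n k : Type*} [Fintype m]
    [Fintype n] [Fintype k] [DecidableEq m] [DecidableEq k]
    (A : Matrix m n ℤ) (W : Matrix n k ℤ) (hA : A.rank = Fintype.card m)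
    (hW : W.rank = Fintype.card k) (hAW : A * W = 0) (e₀ : m ⊕ k ≃ n) :
    ∃ c d : ℤ, 0 < c ∧ 0 < d ∧ ∀ e : m ⊕ k ≃ n,
      c * |(A.submatrix id (e ∘ Sum.inl)).det| = d * |(W.submatrix (e ∘ Sum.inr) id).det| := by
  have hc := W.det_transpose_mul_self_ne_zero_of_rank_eq hW
  have hd := det_fromRows_submatrix_ne_zero A W hAW
    (A.det_self_mul_transpose_ne_zero_of_rank_eq hA) hc e₀
  refine ⟨_, _, abs_pos.mpr hc, abs_pos.mpr hd, fun e => ?_⟩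
  have hperm : |((fromRows A Wᵀ).submatrix id e).det| =
      |((fromRows A Wᵀ).submatrix id e₀).det| := by
    rw [← abs_det_submatrix_equiv_equiv (Equiv.refl _) (e.trans e₀.symm)
      ((fromRows A Wᵀ).submatrix id e₀)]
    congr 2
    ext
    simp
  rw [← hperm, ← abs_mul, ← abs_mul, det_fromRows_mul_det_complementary_minor A W hAW, mul_comm]

/-- An embedding extends to a bijection from the sum with any type of complementary size. -/
theorem Function.Embedding.exists_sum_equiv {m n k : Type*} [Fintype m] [Fintype n] [Fintype k]
    (h : Fintype.card m + Fintype.card k = Fintype.card n) (g : m ↪ n) :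
    ∃ e : m ⊕ k ≃ n, e ∘ Sum.inl = g := by
  classical
  have hcard : Fintype.card k = Fintype.card ((Set.range g)ᶜ : Set n) := by
    rw [Fintype.card_compl_set, Set.card_range_of_injective g.injective]
    lia
  refine ⟨((Equiv.ofInjective g g.injective).sumCongr (Fintype.equivOfCardEq hcard)).trans
    (Equiv.Set.sumCompl _), ?_⟩
  ext
  simp

/-- Two families of integers whose absolute values are proportional in both directions have
proportional greatest common divisors. -/
theorem Finset.mul_gcd_eq_mul_gcd {ι κ : Type*} {s : Finset ι} {t : Finset κ} {f : ι → ℤ}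
    {g : κ → ℤ} {c d : ℤ} (hc : 0 ≤ c) (hd : 0 ≤ d)
    (hst : ∀ i ∈ s, ∃ j ∈ t, c * |f i| = d * |g j|)
    (hts : ∀ j ∈ t, ∃ i ∈ s, c * |f i| = d * |g j|) :
    c * s.gcd f = d * t.gcd g := by
  rw [← Int.normalize_of_nonneg hc, ← Int.normalize_of_nonneg hd, ← Finset.gcd_mul_left,
    ← Finset.gcd_mul_left]
  have key {x y : ℤ} (h : c * |x| = d * |y|) : |c * x| = |d * y| := by
    rwa [abs_mul, abs_mul, abs_of_nonneg hc, abs_of_nonneg hd]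
  refine dvd_antisymm_of_normalize_eq Finset.normalize_gcd Finset.normalize_gcd
    (Finset.dvd_gcd fun j hj => ?_) (Finset.dvd_gcd fun i hi => ?_)
  · obtain ⟨i, hi, h⟩ := hts j hj
    rw [← dvd_abs, ← key h, dvd_abs]
    exact Finset.gcd_dvd hi
  · obtain ⟨j, hj, h⟩ := hst i hi
    rw [← dvd_abs, key h, dvd_abs]
    exact Finset.gcd_dvd hj


/-- Let `A ∈ ℤ^{m×n}` have full row rank and `W ∈ ℤ^{n×(n−m)}` have
full column rank with `A·W = 0`. Then for every `I ⊆ [n]` with `|I| = m`,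
`(1/gcd(A))·|det A_{·,I}| = (1/gcd(W))·|det W_{Ī,·}|`, where `gcd(M)` is the gcd of
all full-rank subdeterminants of `M`. -/
theorem orthogonal_lattices (m n : ℕ) (hmn : m ≤ n)
    (A : Matrix (Fin m) (Fin n) ℤ) (hA : A.rank = m)
    (W : Matrix (Fin n) (Fin (n - m)) ℤ) (hW : W.rank = n - m)
    (hAW : A * W = 0)
    (I : Finset (Fin n)) (hI : I.card = m) :
    (|((A.submatrix id (fun j : Fin m => ((I.orderIsoOfFin hI j : Fin n)))).det : ℚ)|) /
        ((Finset.univ.gcd (fun g : Fin m ↪ Fin n => (A.submatrix id g).det) : ℤ) : ℚ) =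
    (|((W.submatrix (fun i : Fin (n - m) =>
          ((Iᶜ.orderIsoOfFin (by simp [Finset.card_compl, hI]) i : Fin n))) id).det : ℚ)|) /
        ((Finset.univ.gcd (fun g : Fin (n - m) ↪ Fin n => (W.submatrix g id).det) : ℤ) : ℚ) := by
  have hIc : Iᶜ.card = n - m := by simp [Finset.card_compl, hI]
  obtain ⟨c, d, hc, hd, hcd⟩ := exists_mul_abs_minor_eq A W (by simpa using hA)
    (by simpa using hW) hAW (finSumEquivOfFinset hI hIc)
  have hminor : c * |(A.submatrix id (fun j : Fin m => ((I.orderIsoOfFin hI j : Fin n)))).det| =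
      d * |(W.submatrix (fun i : Fin (n - m) =>
        ((Iᶜ.orderIsoOfFin hIc i : Fin n))) id).det| := by
    convert hcd (finSumEquivOfFinset hI hIc) using 5 <;> ext <;> simp
  have hgcd : c * Finset.univ.gcd (fun g : Fin m ↪ Fin n => (A.submatrix id g).det) =
      d * Finset.univ.gcd (fun g : Fin (n - m) ↪ Fin n => (W.submatrix g id).det) := by
    refine Finset.mul_gcd_eq_mul_gcd hc.le hd.le (fun g _ => ?_) (fun g _ => ?_)
    · obtain ⟨e, he⟩ := g.exists_sum_equiv (k := Fin (n - m)) (by simpa using by lia)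
      exact ⟨Function.Embedding.inr.trans e.toEmbedding, Finset.mem_univ _, he ▸ hcd e⟩
    · obtain ⟨e, he⟩ := g.exists_sum_equiv (k := Fin m) (by simpa using by lia)
      exact ⟨Function.Embedding.inr.trans e.toEmbedding, Finset.mem_univ _,
        he ▸ hcd ((Equiv.sumComm _ _).trans e)⟩
  have hc_ne : (c : ℚ) ≠ 0 := by exact_mod_cast hc.ne'
  have hd_ne : (d : ℚ) ≠ 0 := by exact_mod_cast hd.ne'
  refine (mul_div_mul_left _ _ hc_ne).symm.trans (Eq.trans ?_ (mul_div_mul_left _ _ hd_ne))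
  congr 1 <;> exact_mod_cast ‹_›
end

section
/- Let A ∈ ℤ^{m×n} have full row rank, let L ⊆ ℝ^n be the row space of A, and let W ∈ ℤ^{n×(n−m)} be a matrix whose columns form a basis of the lattice L^⊥ ∩ ℤ^n (the integer vectors orthogonal to all rows of A). Then gcd(W) = 1, and consequently, if every m×m submatrix of A has determinant of absolute value at most Δ and some m×m submatrix attains Δ in absolute value, then every (n−m)×(n−m) submatrix of W has determinant of absolute value at most Δ/gcd(A), and this value is attained; i.e., W is (Δ/gcd(A))-modular. -/
open Matrix

namespace Matrix

section CommRing

variable {R : Type*} [CommRing R]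

/-- The determinant of a product, expanded along the rows of the first factor. -/
theorem det_mul_eq_sum_det_submatrix {k n : Type*} [Fintype k] [DecidableEq k] [Fintype n]
    [DecidableEq n] (Q : Matrix k n R) (W : Matrix n k R) :
    (Q * W).det = ∑ f : k → n, (∏ i, Q i (f i)) * (W.submatrix f id).det := by
  have h : (Q * W) = fun i => ∑ j, Q i j • W j := by
    ext i l
    simp [Matrix.mul_apply, Finset.sum_apply]
  rw [h]
  change detRowAlternating.toMultilinearMap (fun i => ∑ j, Q i j • W j) = _
  rw [MultilinearMap.map_sum]
  refine Finset.sum_congr rfl fun f _ => ?_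
  rw [MultilinearMap.map_smul_univ]
  rfl

/-- The maximal minors of a left invertible matrix have no common nonunit divisor. -/
theorem isUnit_of_dvd_det_submatrix {k n : Type*} [Fintype k] [DecidableEq k] [Fintype n]
    [DecidableEq n] {Q : Matrix k n R} {W : Matrix n k R} (hQW : Q * W = 1) {d : R}
    (hd : ∀ g : k ↪ n, d ∣ (W.submatrix g id).det) : IsUnit d := by
  rw [isUnit_iff_dvd_one, ← det_one (n := k), ← hQW, det_mul_eq_sum_det_submatrix]
  refine Finset.dvd_sum fun f _ => Dvd.dvd.mul_left ?_ _
  by_cases hf : Function.Injective f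
  · exact hd ⟨f, hf⟩
  · obtain ⟨i, j, hij, hne⟩ := Function.not_injective_iff.mp hf
    rw [det_zero_of_row_eq hne (by ext; simp [hij])]
    exact dvd_zero d

/-- Splitting the inner index of a matrix product into two parts. -/
theorem mul_eq_submatrix_mul_add {a b k l n : Type*} [Fintype k] [Fintype l] [Fintype n]
    (e : k ⊕ l ≃ n) (X : Matrix a n R) (Y : Matrix n b R) :
    X * Y = X.submatrix id (e ∘ Sum.inl) * Y.submatrix (e ∘ Sum.inl) id +
      X.submatrix id (e ∘ Sum.inr) * Y.submatrix (e ∘ Sum.inr) id := by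
  ext i j
  simp [Matrix.mul_apply, ← e.sum_comp]

/-- Complementary maximal minors of `W` and `P` agree up to a unit when `[V | W]` is inverse to
the matrix with row blocks `P` and `Q`. -/
theorem associated_det_submatrix_compl {k l n : Type*} [Fintype k] [DecidableEq k] [Fintype l]
    [DecidableEq l] [Fintype n] (e : k ⊕ l ≃ n) {P : Matrix k n R} {Q : Matrix l n R}
    {V : Matrix n k R} {W : Matrix n l R} (hPV : P * V = 1) (hPW : P * W = 0)
    (hQV : Q * V = 0) (hQW : Q * W = 1) :
    Associated (P.submatrix id (e ∘ Sum.inl)).det (W.submatrix (e ∘ Sum.inr) id).det := by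
  rw [mul_eq_submatrix_mul_add e] at hPV hPW hQV hQW
  set U := fromBlocks (V.submatrix (e ∘ Sum.inl) id) (W.submatrix (e ∘ Sum.inl) id)
    (V.submatrix (e ∘ Sum.inr) id) (W.submatrix (e ∘ Sum.inr) id) with hU
  have hinv : fromBlocks (P.submatrix id (e ∘ Sum.inl)) (P.submatrix id (e ∘ Sum.inr))
      (Q.submatrix id (e ∘ Sum.inl)) (Q.submatrix id (e ∘ Sum.inr)) * U = 1 := by
    rw [hU, fromBlocks_multiply, hPV, hPW, hQV, hQW, fromBlocks_one]
  have hunit : IsUnit U.det := isUnit_det_of_left_inverse hinv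
  have hmul : fromBlocks (P.submatrix id (e ∘ Sum.inl)) (P.submatrix id (e ∘ Sum.inr)) 0 1 * U =
      fromBlocks 1 0 (V.submatrix (e ∘ Sum.inr) id) (W.submatrix (e ∘ Sum.inr) id) := by
    rw [hU, fromBlocks_multiply, hPV, hPW]
    simp
  have hdet := congrArg det hmul
  rw [det_mul, det_fromBlocks_zero₂₁, det_fromBlocks_zero₁₂, det_one, det_one, mul_one,
    one_mul] at hdet
  exact ⟨hunit.unit, hdet⟩

end CommRing

/-- An integer matrix of full row rank factors as a nonsingular square matrix times a right
invertible one. -/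
theorem exists_eq_mul_of_rank_eq {m n : ℕ} (A : Matrix (Fin m) (Fin n) ℤ) (hA : A.rank = m) :
    ∃ (B : Matrix (Fin m) (Fin m) ℤ) (P : Matrix (Fin m) (Fin n) ℤ)
      (V : Matrix (Fin n) (Fin m) ℤ), A = B * P ∧ B.det ≠ 0 ∧ P * V = 1 := by
  let b : Module.Basis (Fin m) ℤ (LinearMap.range A.mulVecLin) :=
    Module.finBasisOfFinrankEq ℤ _ hA
  let p : (Fin n → ℤ) →ₗ[ℤ] (Fin m → ℤ) :=
    b.equivFun.toLinearMap ∘ₗ A.mulVecLin.rangeRestrict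
  let c : (Fin m → ℤ) →ₗ[ℤ] (Fin m → ℤ) :=
    (LinearMap.range A.mulVecLin).subtype ∘ₗ b.equivFun.symm.toLinearMap
  have hp : Function.Surjective p :=
    b.equivFun.surjective.comp A.mulVecLin.surjective_rangeRestrict
  have hc : Function.Injective c :=
    (Submodule.subtype_injective _).comp b.equivFun.symm.injective
  obtain ⟨s, hs⟩ := p.exists_rightInverse_of_surjective (LinearMap.range_eq_top.mpr hp)
  refine ⟨LinearMap.toMatrix' c, LinearMap.toMatrix' p, LinearMap.toMatrix' s, ?_, ?_, ?_⟩
  · rw [← LinearMap.toMatrix'_comp]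
    have hcp : c ∘ₗ p = A.mulVecLin := by
      ext x i
      simp [c, p]
    rw [hcp]
    exact (LinearMap.toMatrix'_toLin' A).symm
  · intro h
    obtain ⟨v, hv, hv0⟩ := exists_mulVec_eq_zero_iff.mpr h
    rw [LinearMap.toMatrix'_mulVec] at hv0
    exact hv (hc (hv0.trans (map_zero c).symm))
  · rw [← LinearMap.toMatrix'_comp, hs, LinearMap.toMatrix'_id]

end Matrix

/-- An injection into a finite type extends to a bijection from a sum. -/
theorem Function.Embedding.exists_sumEquiv_extension {k l n : Type*} [Fintype k] [Fintype l]
    [Fintype n] (hcard : Fintype.card k + Fintype.card l = Fintype.card n) (g : k ↪ n) :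
    ∃ e : k ⊕ l ≃ n, e ∘ Sum.inl = g := by
  classical
  have hc : Fintype.card l = Fintype.card ((Set.range g)ᶜ : Set n) := by
    rw [Fintype.card_compl_set, Set.card_range_of_injective g.injective]
    omega
  refine ⟨((Equiv.ofInjective g g.injective).sumCongr (Fintype.equivOfCardEq hc)).trans
    (Equiv.Set.sumCompl (Set.range g)), ?_⟩
  ext i
  simp

/-- Let `A ∈ ℤ^{m×n}` have full row rank and let the columns of
`W ∈ ℤ^{n×(n−m)}` form a basis of the lattice of integer vectors in the kernel of `A`
(i.e. orthogonal to all rows of `A`). Then `gcd(W) = 1`, and consequently if every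
`m×m` submatrix of `A` has `|det| ≤ Δ` and some `m×m` submatrix attains `Δ`, then
every `(n−m)×(n−m)` submatrix of `W` has `|det| ≤ Δ/gcd(A)` and this value is
attained, i.e. `W` is `(Δ/gcd(A))`-modular. -/
theorem kernel_basis_modular (m n Δ : ℕ) (hmn : m ≤ n)
    (A : Matrix (Fin m) (Fin n) ℤ) (hA : A.rank = m)
    (W : Matrix (Fin n) (Fin (n - m)) ℤ)
    (hWinj : ∀ y : Fin (n - m) → ℤ, W.mulVec y = 0 → y = 0)
    (hWspan : ∀ z : Fin n → ℤ, A.mulVec z = 0 ↔ ∃ y : Fin (n - m) → ℤ, W.mulVec y = z) :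
    Finset.univ.gcd (fun g : Fin (n - m) ↪ Fin n => (W.submatrix g id).det) = 1 ∧
    ((∀ g : Fin m ↪ Fin n, |(A.submatrix id g).det| ≤ (Δ : ℤ)) →
      (∃ g : Fin m ↪ Fin n, |(A.submatrix id g).det| = (Δ : ℤ)) →
      (∀ g : Fin (n - m) ↪ Fin n, (|(W.submatrix g id).det| : ℚ) ≤
        (Δ : ℚ) / ((Finset.univ.gcd (fun g' : Fin m ↪ Fin n => (A.submatrix id g').det) : ℤ) : ℚ)) ∧
      (∃ g : Fin (n - m) ↪ Fin n, (|(W.submatrix g id).det| : ℚ) =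
        (Δ : ℚ) / ((Finset.univ.gcd (fun g' : Fin m ↪ Fin n => (A.submatrix id g').det) : ℤ) : ℚ))) := by
  obtain ⟨B, P, V, rfl, hB, hPV⟩ := exists_eq_mul_of_rank_eq A hA
  have hker : ∀ z, (B * P) *ᵥ z = 0 ↔ P *ᵥ z = 0 := by
    intro z
    rw [← mulVec_mulVec]
    exact ⟨eq_zero_of_mulVec_eq_zero hB, fun h => by rw [h, mulVec_zero]⟩
  have hcancel : ∀ {k : Type} (X Y : Matrix (Fin (n - m)) k ℤ), W * X = W * Y → X = Y := by
    intro k X Y h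
    ext i j
    have hj : W *ᵥ (X.col j - Y.col j) = 0 := by
      rw [mulVec_sub, sub_eq_zero]
      exact congrArg (fun M => M.col j) h
    exact sub_eq_zero.mp (congrFun (hWinj _ hj) i)
  have hPW : P * W = 0 := by
    ext i j
    have hj := (hker _).mp ((hWspan (W *ᵥ Pi.single j 1)).mpr ⟨_, rfl⟩)
    rw [mulVec_single_one] at hj
    exact congrFun hj i
  obtain ⟨Q, hQ⟩ : ∃ Q : Matrix (Fin (n - m)) (Fin n) ℤ, W * Q = 1 - V * P := by
    have hcol : ∀ j, ∃ y, W *ᵥ y = (1 - V * P).col j := by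
      intro j
      rw [← hWspan, hker]
      have hP : P * (1 - V * P) = 0 := by
        rw [Matrix.mul_sub, ← Matrix.mul_assoc, hPV, Matrix.mul_one, Matrix.one_mul, sub_self]
      exact congrArg (fun M => M.col j) hP
    choose y hy using hcol
    refine ⟨(Matrix.of y)ᵀ, ?_⟩
    ext i j
    exact congrFun (hy j) i
  have hQW : Q * W = 1 := hcancel _ _ <| by
    rw [← Matrix.mul_assoc, hQ, Matrix.sub_mul, Matrix.mul_assoc, hPW]
    simp
  have hQV : Q * V = 0 := hcancel _ _ <| by
    rw [← Matrix.mul_assoc, hQ, Matrix.sub_mul, Matrix.mul_assoc, hPV]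
    simp
  have hgcdW : Finset.univ.gcd (fun g : Fin (n - m) ↪ Fin n => (W.submatrix g id).det) = 1 := by
    rw [← Finset.normalize_gcd, normalize_eq_one]
    exact isUnit_of_dvd_det_submatrix hQW fun g => Finset.gcd_dvd (Finset.mem_univ g)
  have hgcdP : Finset.univ.gcd (fun g : Fin m ↪ Fin n => (P.submatrix id g).det) = 1 := by
    rw [← Finset.normalize_gcd, normalize_eq_one]
    refine isUnit_of_dvd_det_submatrix (Q := Vᵀ) (W := Pᵀ)
      (by rw [← transpose_mul, hPV, transpose_one]) fun g => ?_
    rw [← transpose_submatrix, det_transpose]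
    exact Finset.gcd_dvd (Finset.mem_univ g)
  have hminor : ∀ g : Fin m → Fin n,
      ((B * P).submatrix id g).det = B.det * (P.submatrix id g).det := fun g => by
    rw [← det_mul]
    rfl
  have hgcdA : Finset.univ.gcd (fun g : Fin m ↪ Fin n => ((B * P).submatrix id g).det) =
      |B.det| := by
    simp_rw [hminor]
    rw [Finset.gcd_mul_left, hgcdP, mul_one, Int.abs_eq_normalize]
  have hcompl : ∀ e : Fin m ⊕ Fin (n - m) ≃ Fin n, |B.det| * |(W.submatrix (e ∘ Sum.inr) id).det| =
      |((B * P).submatrix id (e ∘ Sum.inl)).det| := by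
    intro e
    have hPe := Int.natAbs_eq_iff_associated.mpr
      (associated_det_submatrix_compl e hPV hPW hQV hQW)
    have hPe' : |(P.submatrix id (e ∘ Sum.inl)).det| = |(W.submatrix (e ∘ Sum.inr) id).det| := by
      rw [Int.abs_eq_natAbs, Int.abs_eq_natAbs, hPe]
    rw [hminor, abs_mul, hPe']
  have hBpos : (0 : ℚ) < ((|B.det| : ℤ) : ℚ) := by exact_mod_cast abs_pos.mpr hB
  refine ⟨hgcdW, fun hle ⟨g₀, hg₀⟩ => ⟨fun g => ?_, ?_⟩⟩
  · obtain ⟨e, he⟩ := g.exists_sumEquiv_extension (l := Fin m) (by simp; omega)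
    have h := hcompl ((Equiv.sumComm _ _).trans e)
    have hinr : ((Equiv.sumComm (Fin m) (Fin (n - m))).trans e) ∘ Sum.inr = g := he
    rw [hinr] at h
    rw [hgcdA, le_div_iff₀' hBpos]
    have hΔ := hle ⟨_, ((Equiv.sumComm _ _).trans e).injective.comp Sum.inl_injective⟩
    exact_mod_cast h.trans_le hΔ
  · obtain ⟨e, he⟩ := g₀.exists_sumEquiv_extension (l := Fin (n - m)) (by simp; omega)
    have h := hcompl e
    rw [he, hg₀] at h
    refine ⟨⟨e ∘ Sum.inr, e.injective.comp Sum.inr_injective⟩, ?_⟩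
    rw [hgcdA, eq_div_iff hBpos.ne', mul_comm]
    exact_mod_cast h
end

section
/- Let Δ ≥ 1 and let A ∈ ℤ^{m×n} have full column rank with n ≥ ⌈(Δ−1)/2⌉·(Δ−1) + 1. Then at least one of the following holds: (i) there exists a nonzero integer vector z ∈ ℤ^n with ‖Az‖_∞ ≤ 1, or (ii) A has an n×n submatrix B with |det B| > Δ. -/
open Finset in
/-- Among sufficiently many elements of a finite abelian group one finds elements that agree up to
sign, in such a number that their signed sum vanishes. -/
theorem exists_signed_zero_sum_family {G : Type*} [AddCommGroup G] [Finite G] {n Δ : ℕ}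
    (hG : Nat.card G ≤ Δ) (hn : Δ / 2 * (Δ - 1) + 1 ≤ n) (g : Fin n → G) :
    ∃ (S : Finset (Fin n)) (s : Fin n → ℤ) (h : G), S.Nonempty ∧ (∀ i, s i = 1 ∨ s i = -1) ∧
      (∀ i ∈ S, s i • g i = h) ∧ S.card • h = 0 := by
  classical
  have := Fintype.ofFinite G
  rw [Nat.card_eq_fintype_card] at hG
  by_contra! hcon
  have hne : ∀ i, g i ≠ 0 := fun i hi ↦
    hcon {i} 1 0 (by simp) (by simp) (by simp [hi]) (by simp)
  let N : G → ℕ := fun h ↦ #{i | g i = h}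
  have hN : ∀ h ∈ univ.erase (0 : G), N h + N (-h) ≤ 2 * (Δ / 2) := by
    intro h hh
    have h0 : h ≠ 0 := by simpa using hh
    have h2 : 2 ≤ Fintype.card G := Fintype.one_lt_card_iff.2 ⟨h, 0, h0⟩
    by_cases hinv : -h = h
    · have : N h ≤ 1 := by
        by_contra! hlt
        obtain ⟨S, hS, hc⟩ := exists_subset_card_eq (Nat.succ_le_of_lt hlt)
        refine hcon S 1 h (card_pos.1 (by omega)) (by simp) (fun i hi ↦ ?_) ?_
        · simpa using hS hi
        · rw [hc, two_nsmul]
          nth_rewrite 1 [← hinv]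
          simp
      rw [hinv]
      omega
    · have hd : Disjoint (univ.filter (g · = h)) (univ.filter (g · = -h)) := by
        rw [disjoint_filter]
        intro i _ h1 h2
        exact hinv (h2.symm.trans h1)
      have : N h + N (-h) < Fintype.card G := by
        by_contra! hle
        rw [← card_union_of_disjoint hd] at hle
        obtain ⟨S, hS, hc⟩ := exists_subset_card_eq hle
        refine hcon S (fun i ↦ if g i = h then 1 else -1) h (card_pos.1 (by omega))
          (fun i ↦ by split_ifs <;> simp) (fun i hi ↦ ?_) ?_
        · have := hS hi
          simp only [mem_union, mem_filter, mem_univ, true_and] at this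
          split_ifs with h1
          · simp [h1]
          · simp [this.resolve_left h1]
        · rw [hc, card_nsmul_eq_zero]
      omega
  have hsum : ∑ h ∈ univ.erase (0 : G), N h = n := by
    have := card_eq_sum_card_fiberwise (s := (univ : Finset (Fin n))) (f := g)
      (t := univ.erase (0 : G)) (fun i _ ↦ by simp [hne i])
    simpa using this.symm
  have hsum' : ∑ h ∈ univ.erase (0 : G), N (-h) = n := by
    rw [← hsum]
    exact sum_nbij' (fun h ↦ -h) (fun h ↦ -h) (by simp) (by simp) (by simp) (by simp) (by simp)
  have hle := sum_le_card_nsmul _ _ _ hN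
  rw [sum_add_distrib, hsum, hsum', card_erase_of_mem (mem_univ _), card_univ, smul_eq_mul] at hle
  have := Nat.mul_le_mul_right (2 * (Δ / 2)) (Nat.sub_le_sub_right hG 1)
  nlinarith

open Finset in
/-- If all square matrices with rows in `V` have determinant at most one in absolute value, and `V`
contains the unit vectors and vectors restricting to a star `e_k - e_{k₀}` on `S`, then
the coordinates in `S` of every member of `V` have sum at most one in absolute value. -/
theorem abs_sum_le_one_of_star_s9 {ι : Type*} [Fintype ι] [DecidableEq ι] {V : Set (ι → ℚ)}
    (hdet : ∀ M : Matrix ι ι ℚ, (∀ i, M i ∈ V) → |M.det| ≤ 1)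
    (hone : ∀ k, Pi.single k 1 ∈ V) {S : Finset ι} {k₀ : ι} (hk₀ : k₀ ∈ S)
    (hstar : ∀ k ∈ S, k ≠ k₀ → ∃ v ∈ V, v k = 1 ∧ v k₀ = -1 ∧ ∀ l ∈ S, l ≠ k → l ≠ k₀ → v l = 0)
    {c : ι → ℚ} (hc : c ∈ V) : |∑ i ∈ S, c i| ≤ 1 := by
  have hrow : ∀ k, ∃ v ∈ V, k ≠ k₀ → v k = 1 ∧ ∑ i ∈ S, v i = 0 ∧
      ∀ l, l ≠ k → l ≠ k₀ → (l ∈ S ∨ k ∉ S) → v l = 0 := by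
    intro k
    by_cases hk : k = k₀
    · exact ⟨_, hone k, fun h ↦ absurd hk h⟩
    by_cases hkS : k ∈ S
    · obtain ⟨v, hv, h1, h2, h3⟩ := hstar k hkS hk
      refine ⟨v, hv, fun _ ↦ ⟨h1, ?_, fun l hlk hl hlS ↦ h3 l (by tauto) hlk hl⟩⟩
      rw [← add_sum_erase _ _ hkS, ← add_sum_erase _ _ (mem_erase.2 ⟨Ne.symm hk, hk₀⟩),
        sum_eq_zero, h1, h2]
      · norm_num
      · intro l hl
        simp only [mem_erase] at hl
        exact h3 l hl.2.2 hl.2.1 hl.1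
    · refine ⟨_, hone k, fun _ ↦ ⟨by simp, ?_, fun l hlk _ _ ↦ by simp [hlk]⟩⟩
      exact sum_eq_zero fun i hi ↦ Pi.single_eq_of_ne (fun h : i = k ↦ hkS (h ▸ hi)) _
  choose R hRV hR using hrow
  let M : Matrix ι ι ℚ := Matrix.updateRow (Matrix.of R) k₀ c
  have hM : |M.det| ≤ 1 := hdet M fun i ↦ by
    by_cases hi : i = k₀
    · subst hi; simpa [M] using hc
    · rw [show M i = R i from Matrix.updateRow_ne hi]
      exact hRV i
  let σ := ∑ i ∈ S, c i
  let y : ι → ℚ := fun i ↦ if i ∈ S then 1 else 0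
  have hMy : M.mulVec y = σ • Pi.single k₀ 1 := by
    ext i
    by_cases hi : i = k₀
    · subst hi; simp [M, Matrix.mulVec, dotProduct, y, σ]
    · simpa [M, Matrix.mulVec, dotProduct, y, hi] using (hR i hi).2.1
  have hcr : M.det = σ * (M.updateCol k₀ (Pi.single k₀ 1)).det := by
    rw [← Matrix.det_updateCol_smul, ← hMy, ← Matrix.cramer_apply,
      Matrix.cramer_eq_adjugate_mulVec, Matrix.mulVec_mulVec, Matrix.adjugate_mul,
      Matrix.smul_mulVec]
    simp [y, hk₀]
  let b : ι → ℕ := fun k ↦ if k = k₀ then 0 else if k ∈ S then 1 else 2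
  let N := M.updateCol k₀ (Pi.single k₀ 1)
  have hdiag : ∀ i, N i i = 1 := by
    intro i
    by_cases hi : i = k₀
    · subst hi; simp [N]
    · simpa [N, M, hi] using (hR i hi).1
  have hoff : ∀ i j, i ≠ j → b j ≤ b i → N i j = 0 := by
    intro i j hij hb
    by_cases hj : j = k₀
    · subst hj; simp [N, hij]
    · have hi : i ≠ k₀ := by
        rintro rfl
        simp only [b, hj, if_true, if_false] at hb
        split_ifs at hb <;> omega
      have hS : j ∈ S ∨ i ∉ S := by
        by_contra! hS
        simp [b, hi, hj, hS] at hb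
      simpa [N, M, hi, hj] using (hR i hi).2.2 j hij.symm hj hS
  have hN : N.det = 1 := by
    rw [Matrix.BlockTriangular.det (b := b) fun i j hij ↦
      hoff i j (fun h ↦ by simp [h] at hij) hij.le]
    refine prod_eq_one fun a _ ↦ ?_
    have : N.toSquareBlock b a = 1 := by
      ext ⟨i, hi⟩ ⟨j, hj⟩
      by_cases hij : i = j
      · subst hij
        simpa [Matrix.toSquareBlock_def] using hdiag i
      · simpa [Matrix.toSquareBlock_def, Matrix.one_apply, hij] using
          hoff i j hij (hj.trans hi.symm).le
    rw [this, Matrix.det_one]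
  rw [hcr, hN, mul_one] at hM
  exact hM

open Finset in
/-- If `V` is symmetric, contains the unit vectors, and has all determinants with rows in `V` at
most one in absolute value, and all members of `V` have coordinates in `S` congruent modulo `ℤ`,
then `V` is bounded by one either on some `e_i - e_j` with `i, j ∈ S` or on `∑ i ∈ S, e_i`. -/
theorem abs_sub_le_one_or_abs_sum_le_one {ι : Type*} [Fintype ι] [DecidableEq ι]
    {V : Set (ι → ℚ)} (hdet : ∀ M : Matrix ι ι ℚ, (∀ i, M i ∈ V) → |M.det| ≤ 1)
    (hone : ∀ k, Pi.single k 1 ∈ V) (hneg : ∀ v ∈ V, -v ∈ V) {S : Finset ι} (hS : S.Nonempty)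
    (hint : ∀ v ∈ V, ∀ i ∈ S, ∀ j ∈ S, ∃ t : ℤ, v i - v j = t) :
    (∃ i ∈ S, ∃ j ∈ S, i ≠ j ∧ ∀ v ∈ V, |v i - v j| ≤ 1) ∨ ∀ v ∈ V, |∑ i ∈ S, v i| ≤ 1 := by
  rw [or_iff_not_imp_left]
  intro hcon
  push Not at hcon
  have hbound : ∀ v ∈ V, ∀ i, |v i| ≤ 1 := by
    intro v hv i
    simpa using abs_sum_le_one_of_star_s9 hdet hone (mem_singleton_self i)
      (fun k hk hki ↦ absurd (mem_singleton.1 hk) hki) hv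
  have hpair : ∀ i ∈ S, ∀ j ∈ S, i ≠ j → ∃ v ∈ V, v i = 1 ∧ v j = -1 := by
    intro i hi j hj hij
    obtain ⟨v, hv, hlt⟩ := hcon i hi j hj hij
    obtain ⟨t, ht⟩ := hint v hv i hi j hj
    have h1 := abs_le.1 (hbound v hv i)
    have h2 := abs_le.1 (hbound v hv j)
    rw [ht] at hlt
    have ht2 : 2 ≤ |t| := by exact_mod_cast hlt
    rcases le_abs.1 ht2 with h | h
    · have : (2 : ℚ) ≤ t := by exact_mod_cast h
      exact ⟨v, hv, by linarith, by linarith⟩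
    · have : (2 : ℚ) ≤ -t := by exact_mod_cast h
      refine ⟨-v, hneg v hv, ?_, ?_⟩ <;> simp only [Pi.neg_apply] <;> linarith
  have hadd : ∀ i ∈ S, ∀ j ∈ S, i ≠ j → ∀ v ∈ V, |v i + v j| ≤ 1 := by
    intro i hi j hj hij v hv
    rw [← sum_pair hij]
    refine abs_sum_le_one_of_star_s9 hdet hone (k₀ := j) (by simp) (fun k hk hkj ↦ ?_) hv
    obtain rfl : k = i := by simpa [hkj] using hk
    obtain ⟨w, hw, h1, h2⟩ := hpair k hi j hj hij
    exact ⟨w, hw, h1, h2, fun l hl hlk hlj ↦ by simp [hlk, hlj] at hl⟩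
  obtain ⟨k₀, hk₀⟩ := hS
  intro c hc
  refine abs_sum_le_one_of_star_s9 hdet hone hk₀ (fun k hk hkk ↦ ?_) hc
  obtain ⟨v, hv, h1, h2⟩ := hpair k hk k₀ hk₀ hkk
  refine ⟨v, hv, h1, h2, fun l hl hlk hlk₀ ↦ ?_⟩
  have h3 := abs_le.1 (hadd l hl k hk hlk v hv)
  have h4 := abs_le.1 (hadd l hl k₀ hk₀ hlk₀ v hv)
  linarith

/-- An integer matrix with trivial kernel has a nonsingular maximal square submatrix. -/
theorem Matrix.exists_submatrix_det_ne_zero {m n : ℕ} (A : Matrix (Fin m) (Fin n) ℤ)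
    (hA : Function.Injective A.mulVec) : ∃ f : Fin n → Fin m, (A.submatrix f id).det ≠ 0 := by
  let Q : Matrix (Fin m) (Fin n) ℚ := A.map (Int.castRingHom ℚ)
  have hcol : LinearIndependent ℚ Q.col := by
    rw [← LinearIndependent.iff_fractionRing ℤ ℚ]
    rw [Matrix.mulVec_injective_iff] at hA
    let φ : (Fin m → ℤ) →ₗ[ℤ] (Fin m → ℚ) := (Algebra.linearMap ℤ ℚ).compLeft (Fin m)
    refine hA.map' φ (LinearMap.ker_eq_bot.2 fun x y hxy ↦ ?_)
    ext i
    simpa [φ] using congrFun hxy i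
  have hrank : Q.rank = n := by
    rw [Matrix.rank_eq_finrank_span_cols, finrank_span_eq_card hcol, Fintype.card_fin]
  obtain ⟨κ, a, ha, hspan, hli⟩ := exists_linearIndependent' ℚ Q.row
  have := Finite.of_injective a ha
  have := Fintype.ofFinite κ
  have hcard : Fintype.card (Fin n) = Fintype.card κ := by
    rw [← finrank_span_eq_card hli, hspan, ← Matrix.rank_eq_finrank_span_row, hrank,
      Fintype.card_fin]
  let e := Fintype.equivOfCardEq hcard
  refine ⟨a ∘ e, fun h0 ↦ ?_⟩
  have hu : IsUnit (Q.submatrix (a ∘ e) id) :=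
    Matrix.linearIndependent_rows_iff_isUnit.1 (hli.comp e e.injective)
  rw [Matrix.isUnit_iff_isUnit_det] at hu
  refine hu.ne_zero ?_
  rw [show Q.submatrix (a ∘ e) id = (A.submatrix (a ∘ e) id).map (Int.castRingHom ℚ) from rfl,
    ← RingHom.mapMatrix_apply, ← RingHom.map_det, h0, map_zero]

/-- The lattice generated by the columns of a nonsingular integer matrix has index `|det B|`. -/
theorem Matrix.natCard_quotient_range_mulVecLin {n : Type*} [Fintype n] [DecidableEq n]
    (B : Matrix n n ℤ) (hB : B.det ≠ 0) :
    Nat.card ((n → ℤ) ⧸ LinearMap.range B.mulVecLin) = B.det.natAbs := by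
  have hinj : Function.Injective B.mulVecLin := Matrix.mulVec_injective_of_det_ne_zero hB
  rw [← Submodule.natAbs_det_equiv _ (LinearEquiv.ofInjective B.mulVecLin hinj),
    ← LinearMap.det_toLin']
  rfl

/-- Let `Δ ≥ 1` and let `A ∈ ℤ^{m×n}` have full column rank with
`n ≥ ⌈(Δ−1)/2⌉·(Δ−1) + 1`. Then either there is a nonzero integer `z` with
`‖Az‖_∞ ≤ 1`, or `A` has an `n×n` submatrix `B` with `|det B| > Δ`. -/
theorem svp_or_large_subdeterminant (Δ m n : ℕ) (hΔ : 1 ≤ Δ)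
    (A : Matrix (Fin m) (Fin n) ℤ) (hrank : A.rank = n)
    (hn : ((Δ - 1) + 1) / 2 * (Δ - 1) + 1 ≤ n) :
    (∃ z : Fin n → ℤ, z ≠ 0 ∧ ∀ i, |A.mulVec z i| ≤ 1) ∨
    (∃ f : Fin n → Fin m, Function.Injective f ∧ (Δ : ℤ) < |(A.submatrix f id).det|) := by
  by_cases hA : Function.Injective A.mulVec
  swap
  · left
    simp only [Function.Injective, not_forall] at hA
    obtain ⟨x, y, hxy, hne⟩ := hA
    refine ⟨x - y, sub_ne_zero.2 hne, fun i ↦ ?_⟩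
    simp [Matrix.mulVec_sub, hxy]
  rw [or_iff_not_imp_right]
  intro hsmall
  push Not at hsmall
  obtain ⟨f₀, hf₀⟩ := A.exists_submatrix_det_ne_zero hA
  have : Nonempty (Fin n → Fin m) := ⟨f₀⟩
  obtain ⟨f, hf⟩ := Finite.exists_max fun f : Fin n → Fin m ↦ |(A.submatrix f id).det|
  set B := A.submatrix f id
  have hB : B.det ≠ 0 := abs_pos.1 ((abs_pos.2 hf₀).trans_le (hf f₀))
  have hinj : Function.Injective f := by
    intro i j hij
    by_contra hne
    exact hB (Matrix.det_zero_of_row_eq hne (by ext k; simp [B, hij]))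
  have hBΔ : B.det.natAbs ≤ Δ := by
    have := hsmall f hinj
    rw [Int.abs_eq_natAbs] at this
    exact_mod_cast this
  let Λ := LinearMap.range B.mulVecLin
  have hcard : Nat.card ((Fin n → ℤ) ⧸ Λ) = B.det.natAbs :=
    B.natCard_quotient_range_mulVecLin hB
  have : Finite ((Fin n → ℤ) ⧸ Λ) :=
    Nat.finite_of_card_ne_zero (by rw [hcard]; exact Int.natAbs_ne_zero.2 hB)
  obtain ⟨S, s, h, hS, hs, hSh, hcS⟩ := exists_signed_zero_sum_family (hcard.trans_le hBΔ)
    (by rwa [Nat.sub_add_cancel hΔ] at hn) fun i ↦ Λ.mkQ (Pi.single i 1)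
  -- Coordinates of the rows of `A` with respect to the rows of `B`.
  let φ := Int.castRingHom ℚ
  have hBu : IsUnit (B.map φ).det := by
    rw [← RingHom.mapMatrix_apply, ← RingHom.map_det, isUnit_iff_ne_zero]
    simpa [φ] using hB
  let C : Matrix (Fin m) (Fin n) ℚ := A.map φ * (B.map φ)⁻¹
  have hCB : C * B.map φ = A.map φ := by
    rw [Matrix.mul_assoc, Matrix.nonsing_inv_mul _ hBu, Matrix.mul_one]
  have hCf : C.submatrix f id = 1 := by
    have : C.submatrix f id = (A.map φ).submatrix f id * (B.map φ)⁻¹ := rfl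
    rw [this]
    exact Matrix.mul_nonsing_inv _ hBu
  have hCdet (r : Fin n → Fin m) : |(C.submatrix r id).det| ≤ 1 := by
    have h1 : C.submatrix r id * B.map φ = (A.submatrix r id).map φ :=
      congrArg (fun X : Matrix (Fin m) (Fin n) ℚ ↦ X.submatrix r id) hCB
    have h2 := congrArg (fun X : Matrix (Fin n) (Fin n) ℚ ↦ |X.det|) h1
    simp only [Matrix.det_mul, abs_mul, ← RingHom.mapMatrix_apply, ← RingHom.map_det] at h2
    have h3 : |φ (A.submatrix r id).det| ≤ |φ B.det| := by
      simpa [φ, ← Int.cast_abs] using hf r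
    have h4 : 0 < |φ B.det| := abs_pos.2 (by simpa [φ] using hB)
    rw [← h2] at h3
    exact le_of_mul_le_mul_right (by simpa using h3) h4
  have hCz (z : Fin n → ℤ) (r : Fin m) :
      ∑ k, C r k * ((B.mulVec z k : ℤ) : ℚ) = ((A.mulVec z r : ℤ) : ℚ) := by
    have h1 := RingHom.map_mulVec φ B z
    have h2 := RingHom.map_mulVec φ A z r
    have h3 : C.mulVec ((B.map φ).mulVec (φ ∘ z)) = (A.map φ).mulVec (φ ∘ z) := by
      rw [Matrix.mulVec_mulVec, hCB]
    have h4 := congrFun h3 r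
    rw [← h2] at h4
    rw [show (B.map φ).mulVec (φ ∘ z) = fun k ↦ φ (B.mulVec z k) from funext fun k ↦ (h1 k).symm]
      at h4
    exact h4
  have hss (k) : (s k : ℚ) * s k = 1 := by rcases hs k with h | h <;> simp [h]
  have hsabs (k) : |(s k : ℚ)| = 1 := by rcases hs k with h | h <;> simp [h]
  let V : Set (Fin n → ℚ) :=
    {v | ∃ (r : Fin m) (ε : ℚ), |ε| = 1 ∧ ∀ k, v k = ε * C r k * s k}
  have hCV (r : Fin m) : (fun k ↦ C r k * s k) ∈ V := ⟨r, 1, by simp, by simp⟩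
  have hVdet : ∀ M : Matrix (Fin n) (Fin n) ℚ, (∀ i, M i ∈ V) → |M.det| ≤ 1 := by
    intro M hM
    choose r ε hε hM using hM
    have : M = Matrix.diagonal ε * C.submatrix r id * Matrix.diagonal fun k ↦ (s k : ℚ) := by
      ext i k
      simp [hM]
    rw [this, Matrix.det_mul, Matrix.det_mul, abs_mul, abs_mul, Matrix.det_diagonal,
      Matrix.det_diagonal, Finset.abs_prod, Finset.abs_prod]
    simpa [hε, hsabs] using hCdet r
  have hVone : ∀ k, Pi.single k 1 ∈ V := by
    intro k
    refine ⟨f k, s k, hsabs k, fun l ↦ ?_⟩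
    rw [show C (f k) l = (1 : Matrix (Fin n) (Fin n) ℚ) k l from congrFun (congrFun hCf k) l]
    by_cases hkl : l = k
    · subst hkl; simp [hss]
    · simp [hkl, Matrix.one_apply_ne (Ne.symm hkl)]
  have hVneg : ∀ v ∈ V, -v ∈ V := by
    rintro v ⟨r, ε, hε, hv⟩
    exact ⟨r, -ε, by simpa using hε, fun k ↦ by simp [hv k]⟩
  have hdiff : ∀ i ∈ S, ∀ j ∈ S,
      ∃ z, B.mulVec z = s i • Pi.single i 1 - s j • Pi.single j 1 := by
    intro i hi j hj
    have : s i • Pi.single i 1 - s j • Pi.single j 1 ∈ Λ := by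
      rw [← Submodule.Quotient.mk_eq_zero, ← Submodule.mkQ_apply, map_sub, map_smul, map_smul,
        hSh i hi, hSh j hj, sub_self]
    exact this
  have hdiffC (i j : Fin n) (z : Fin n → ℤ)
      (hz : B.mulVec z = s i • Pi.single i 1 - s j • Pi.single j 1) (r : Fin m) :
      C r i * s i - C r j * s j = ((A.mulVec z r : ℤ) : ℚ) := by
    rw [← hCz, hz]
    simp [mul_sub, Finset.sum_sub_distrib, Pi.single_apply]
  have hVint : ∀ v ∈ V, ∀ i ∈ S, ∀ j ∈ S, ∃ t : ℤ, v i - v j = t := by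
    rintro v ⟨r, ε, hε, hv⟩ i hi j hj
    obtain ⟨z, hz⟩ := hdiff i hi j hj
    have h1 : v i - v j = ε * ((A.mulVec z r : ℤ) : ℚ) := by
      rw [← hdiffC i j z hz r, hv, hv]; ring
    rcases eq_or_eq_neg_of_abs_eq hε with rfl | rfl
    · exact ⟨A.mulVec z r, by simpa using h1⟩
    · exact ⟨-A.mulVec z r, by simpa using h1⟩
  have hsne (k) : s k ≠ 0 := by rcases hs k with h | h <;> simp [h]
  rcases abs_sub_le_one_or_abs_sum_le_one hVdet hVone hVneg hS hVint with
    ⟨i, hi, j, hj, hij, hle⟩ | hle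
  · obtain ⟨z, hz⟩ := hdiff i hi j hj
    refine ⟨z, ?_, fun r ↦ ?_⟩
    · rintro rfl
      have := congrFun hz i
      simp [hij, (hsne i).symm] at this
    · have := hle _ (hCV r)
      rw [hdiffC i j z hz r] at this
      exact_mod_cast this
  · have hsum : ∑ i ∈ S, s i • Pi.single i 1 ∈ Λ := by
      rw [← Submodule.Quotient.mk_eq_zero, ← Submodule.mkQ_apply, map_sum, ← hcS,
        ← Finset.sum_const]
      exact Finset.sum_congr rfl fun i hi ↦ by rw [map_smul, hSh i hi]
    obtain ⟨z, hz⟩ := hsum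
    have hz' (k) : B.mulVec z k = if k ∈ S then s k else 0 := by
      rw [← Matrix.mulVecLin_apply, hz]
      simp [Finset.sum_apply, Pi.single_apply]
    refine ⟨z, ?_, fun r ↦ ?_⟩
    · rintro rfl
      obtain ⟨k, hk⟩ := hS
      have := hz' k
      simp [hk, (hsne k).symm] at this
    · have h1 := hle _ (hCV r)
      have h2 := hCz z r
      simp only [hz', Int.cast_ite, Int.cast_zero, mul_ite, mul_zero, Finset.sum_ite_mem,
        Finset.univ_inter] at h2
      rw [h2] at h1
      exact_mod_cast h1
end

section
/- Let A ∈ ℤ^{m×n} be a Δ-modular matrix of full column rank and let B be an n×n submatrix of A with |det B| = Δ. Let r_1, …, r_Δ be vectors such that each r_k equals a column of B^{−1} or the negative of a column of B^{−1}, coming from Δ pairwise distinct columns, and such that r_1 + … + r_Δ ∈ ℤ^n. Suppose that for each k ∈ [Δ−1] there is a row a_k of A with a_k^T r_k = 1, a_k^T r_{k+1} = −1, and a_k^T r_j = 0 for all j ∈ [Δ] \ {k, k+1}. Then ‖A(r_1 + … + r_Δ)‖_∞ ≤ 1. -/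
/-- A square matrix whose rows other than the last are `e_i - e_{i+1}` has determinant
equal to the sum of the entries of its last row. -/
theorem det_of_consecutive_difference_rows {K : Type*} [CommRing K] {N : ℕ}
    (M : Matrix (Fin (N + 1)) (Fin (N + 1)) K)
    (hM : ∀ (i : Fin N) j, M i.castSucc j =
      (if j = i.castSucc then 1 else 0) - (if j = i.succ then 1 else 0)) :
    M.det = ∑ j, M (Fin.last N) j := by
  let U : Matrix (Fin (N + 1)) (Fin (N + 1)) K :=
    Matrix.of fun j k => if j ≤ k then 1 else 0
  have hU : U.det = 1 := by
    rw [Matrix.det_of_isUpperTriangular]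
    · simp [U]
    · intro i j hij
      have : ¬ i ≤ j := not_le.mpr hij
      simp [U, this]
  have hrow : ∀ (i : Fin N) k, (M * U) i.castSucc k = if k = i.castSucc then 1 else 0 := by
    intro i k
    have : (M * U) i.castSucc k = U i.castSucc k - U i.succ k := by
      simp [Matrix.mul_apply, hM, sub_mul, Finset.sum_sub_distrib]
    rw [this]
    simp only [U, Matrix.of_apply, Fin.le_def, Fin.ext_iff, Fin.val_castSucc, Fin.val_succ]
    split_ifs <;> first | omega | simp
  have hlower : (M * U).BlockTriangular OrderDual.toDual := by
    intro i j hij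
    have hij : i < j := hij
    induction i using Fin.lastCases with
    | last => exact absurd hij (not_lt.mpr (Fin.le_last j))
    | cast i => rw [hrow, if_neg hij.ne']
  have hdet : (M * U).det = ∑ j, M (Fin.last N) j := by
    rw [Matrix.det_of_isLowerTriangular _ hlower, Fin.prod_univ_castSucc]
    simp only [hrow, if_true, Finset.prod_const_one, one_mul]
    simp [Matrix.mul_apply, U, Fin.le_last]
  rw [← hdet, Matrix.det_mul, hU, mul_one]

/-- If the rows of `G` indexed outside the range of `σ` are unit vectors, then `G` has the
same determinant as its principal submatrix indexed by `σ`. -/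
theorem det_eq_det_submatrix_of_unit_rows {K ι κ : Type*} [CommRing K]
    [Fintype ι] [DecidableEq ι] [Fintype κ] [DecidableEq κ]
    (G : Matrix ι ι K) (σ : κ → ι) (hσ : Function.Injective σ)
    (hG : ∀ i, i ∉ Set.range σ → ∀ j, G i j = if i = j then 1 else 0) :
    G.det = (G.submatrix σ σ).det := by
  classical
  rw [Matrix.twoBlockTriangular_det G (fun i => i ∈ Set.range σ)]
  · have hone : G.toSquareBlockProp (fun i => ¬ i ∈ Set.range σ) = 1 := by
      ext i j
      simp only [Matrix.toSquareBlockProp_def, Matrix.of_apply, Matrix.one_apply, hG i i.2,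
        Subtype.ext_iff]
    rw [hone, Matrix.det_one, mul_one]
    convert (Matrix.det_submatrix_equiv_self (Equiv.ofInjective σ hσ)
      (G.toSquareBlockProp fun i => i ∈ Set.range σ)).symm
    rfl
  · intro i hi j hj
    rw [hG i hi, if_neg]
    rintro rfl
    exact hi hj

/-- Let `A ∈ ℤ^{m×n}` be `Δ`-modular of full column rank and let
`B = A_R` be an `n×n` submatrix with `|det B| = Δ`. Let `r_1, …, r_Δ` be signed,
pairwise distinct columns of `B⁻¹` with `r_1 + … + r_Δ ∈ ℤ^n`. Suppose for each
`k ∈ [Δ−1]` there is a row `a_k` of `A` with `a_kᵀ r_k = 1`, `a_kᵀ r_{k+1} = −1` and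
`a_kᵀ r_j = 0` for all other `j`. Then `‖A(r_1 + … + r_Δ)‖_∞ ≤ 1`. -/
theorem sum_vector_short (Δ m n : ℕ)
    (A : Matrix (Fin m) (Fin n) ℤ) (hrank : A.rank = n)
    (hub : ∀ f : Fin n → Fin m, Function.Injective f →
      |(A.submatrix f id).det| ≤ (Δ : ℤ))
    (hattain : ∃ f : Fin n → Fin m, Function.Injective f ∧
      |(A.submatrix f id).det| = (Δ : ℤ))
    (R : Fin n → Fin m) (hR : Function.Injective R)
    (hBdet : |(A.submatrix R id).det| = (Δ : ℤ))
    (r : Fin Δ → Fin n → ℚ)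
    (σ : Fin Δ → Fin n) (hσ : Function.Injective σ)
    (ε : Fin Δ → ℚ) (hε : ∀ k, ε k = 1 ∨ ε k = -1)
    (hr : ∀ (k : Fin Δ) (l : Fin n),
      r k l = ε k * (((A.submatrix R id).map (Int.cast : ℤ → ℚ))⁻¹) l (σ k))
    (hsum : ∀ l : Fin n, ∃ a : ℤ, (∑ k, r k l) = (a : ℚ))
    (hrows : ∀ (k : ℕ) (hk : k + 1 < Δ), ∃ i0 : Fin m,
      (∑ l, (A i0 l : ℚ) * r ⟨k, by omega⟩ l) = 1 ∧
      (∑ l, (A i0 l : ℚ) * r ⟨k + 1, hk⟩ l) = -1 ∧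
      (∀ j : Fin Δ, (j : ℕ) ≠ k → (j : ℕ) ≠ k + 1 →
        (∑ l, (A i0 l : ℚ) * r j l) = 0)) :
    ∀ i0 : Fin m, |∑ l, (A i0 l : ℚ) * (∑ k, r k l)| ≤ 1 := by
  intro i0
  obtain _ | N := Δ
  · simp
  set B := (A.submatrix R id).map (Int.cast : ℤ → ℚ) with hB
  have hcast : ∀ f : Fin n → Fin m,
      ((A.submatrix f id).map (Int.cast : ℤ → ℚ)).det = ((A.submatrix f id).det : ℚ) :=
    fun f => (Int.cast_det _).symm
  have hBabs : |B.det| = ((N + 1 : ℕ) : ℚ) := by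
    rw [hB, hcast]
    exact_mod_cast hBdet
  have hpos : (0 : ℚ) < ((N + 1 : ℕ) : ℚ) := by positivity
  have hBunit : IsUnit B.det := by
    rw [isUnit_iff_ne_zero, ← abs_pos, hBabs]
    exact hpos
  have hex : ∀ k : Fin N, ∃ i : Fin m, ∀ j : Fin (N + 1), (∑ l, (A i l : ℚ) * r j l) =
      (if j = k.castSucc then 1 else 0) - (if j = k.succ then 1 else 0) := by
    intro k
    obtain ⟨i, h1, h2, h3⟩ := hrows k (by omega)
    refine ⟨i, fun j => ?_⟩
    by_cases hj : j = k.castSucc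
    · subst hj
      rw [if_pos rfl, if_neg (Fin.castSucc_lt_succ).ne, sub_zero]
      exact h1
    by_cases hj' : j = k.succ
    · subst hj'
      rw [if_neg hj, if_pos rfl, zero_sub]
      exact h2
    · rw [if_neg hj, if_neg hj', sub_zero]
      exact h3 j (fun h => hj (Fin.ext h)) (fun h => hj' (Fin.ext h))
  choose g hg using hex
  let a : Fin (N + 1) → Fin m := Fin.snoc g i0
  let f : Fin n → Fin m := Function.extend σ a R
  let D := (A.submatrix f id).map (Int.cast : ℤ → ℚ)
  let M : Matrix (Fin (N + 1)) (Fin (N + 1)) ℚ :=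
    Matrix.of fun k j => ∑ l, (A (a k) l : ℚ) * r j l
  have hM : M.det = ∑ l, (A i0 l : ℚ) * (∑ k, r k l) := by
    rw [det_of_consecutive_difference_rows M]
    · simp only [M, a, Matrix.of_apply, Fin.snoc_last, Finset.mul_sum]
      exact Finset.sum_comm
    · intro i j
      simp only [M, a, Matrix.of_apply, Fin.snoc_castSucc]
      exact hg i j
  have hεsq : ∀ k, ε k * ε k = 1 := fun k => by rcases hε k with h | h <;> simp [h]
  have hsub : (D * B⁻¹).submatrix σ σ = Matrix.of fun k j => ε j * M k j := by
    ext k j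
    simp only [Matrix.submatrix_apply, Matrix.mul_apply, Matrix.of_apply, M, D, f,
      Matrix.map_apply, hσ.extend_apply, id, Finset.mul_sum, hr]
    refine Finset.sum_congr rfl fun l _ => ?_
    linear_combination (-(A (a k) l : ℚ) * B⁻¹ l (σ j)) * hεsq j
  have hunit : ∀ i, i ∉ Set.range σ → ∀ j, (D * B⁻¹) i j = if i = j then 1 else 0 := by
    intro i hi j
    have hrow : (D * B⁻¹) i j = (B * B⁻¹) i j := by
      simp only [Matrix.mul_apply, D, f, hB, Matrix.map_apply, Matrix.submatrix_apply,
        Function.extend_apply' _ _ _ hi]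
    rw [hrow, Matrix.mul_nonsing_inv _ hBunit, Matrix.one_apply]
  have hεabs : |∏ k, ε k| = 1 := by
    rw [Finset.abs_prod]
    exact Finset.prod_eq_one fun k _ => by rcases hε k with h | h <;> simp [h]
  have habs : |D.det| = |M.det| * ((N + 1 : ℕ) : ℚ) := by
    have hD : D = D * B⁻¹ * B := by
      rw [Matrix.mul_assoc, Matrix.nonsing_inv_mul _ hBunit, Matrix.mul_one]
    rw [hD, Matrix.det_mul, det_eq_det_submatrix_of_unit_rows _ σ hσ hunit, hsub,
      Matrix.det_mul_row, abs_mul, abs_mul, hεabs, hBabs, one_mul]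
  have hDle : |D.det| ≤ ((N + 1 : ℕ) : ℚ) := by
    rw [show D.det = ((A.submatrix f id).det : ℚ) from hcast f]
    by_cases hf : Function.Injective f
    · exact_mod_cast hub f hf
    · obtain ⟨i, j, hij, hne⟩ : ∃ i j, f i = f j ∧ i ≠ j := by
        simpa [Function.Injective] using hf
      rw [Matrix.det_zero_of_row_eq hne (by ext l; simp [hij])]
      simpa using hpos.le
  rw [← hM]
  rw [habs] at hDle
  exact le_of_mul_le_mul_right (by rwa [one_mul]) hpos
end

section
/- Let Δ ≥ 2, m = (Δ−1)² + 1, n = (Δ−1)² + Δ, and let T ∈ ℤ^{(m−Δ)×(Δ−1)} be the arc-node incidence matrix of the complete directed graph on Δ−1 nodes (one row ±(e_i − e_j) for each ordered pair of distinct nodes, with m − Δ = (Δ−1)(Δ−2) rows). Define A ∈ ℤ^{m×n} as the block matrix with rows: [I_{Δ−1} | I_{Δ−1} | 0 | 0], [T | 0 | I_{m−Δ} | 0], [−1_{Δ−1}^T | 0 | 0 | Δ], and define b = (2·1_{Δ−1}, 1_{m−Δ}, 1) ∈ ℤ^m. Then the only vector z ∈ ℤ^n with Az = b and z ≥ 0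 is the all-ones vector 1 ∈ ℤ^n. -/
/-- The arcs of the complete directed graph on `ν` nodes: ordered pairs of distinct nodes. -/
abbrev CompleteArc (ν : ℕ) := {p : Fin ν × Fin ν // p.1 ≠ p.2}

/-- Row index type for the matrix `A` of Proposition `prop_lower_bound_sparsity`:
`Δ−1` rows for the block `[I | I | 0 | 0]`, one row per arc for `[T | 0 | I | 0]`,
and one final row `[−1ᵀ | 0 | 0 | Δ]`.  Its cardinality is `m = (Δ−1)² + 1`. -/
abbrev SparsityRow (ν : ℕ) := Fin ν ⊕ CompleteArc ν ⊕ Unit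

/-- Column index type; its cardinality is `n = (Δ−1)² + Δ`. -/
abbrev SparsityCol (ν : ℕ) := Fin ν ⊕ Fin ν ⊕ CompleteArc ν ⊕ Unit

/-- The block matrix `A` with rows `[I_{Δ−1} | I_{Δ−1} | 0 | 0]`,
`[T | 0 | I_{m−Δ} | 0]` (`T` the arc-node incidence matrix of the complete directed
graph on `Δ−1` nodes), and `[−1ᵀ_{Δ−1} | 0 | 0 | Δ]`. -/
def sparsityMatrix (Δ : ℕ) : Matrix (SparsityRow (Δ - 1)) (SparsityCol (Δ - 1)) ℤ :=
  fun i j =>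
    match i, j with
    | Sum.inl i, Sum.inl j => if i = j then 1 else 0
    | Sum.inl i, Sum.inr (Sum.inl j) => if i = j then 1 else 0
    | Sum.inl _, _ => 0
    | Sum.inr (Sum.inl p), Sum.inl j =>
        (if p.1.1 = j then 1 else 0) - (if p.1.2 = j then 1 else 0)
    | Sum.inr (Sum.inl p), Sum.inr (Sum.inr (Sum.inl q)) => if p = q then 1 else 0
    | Sum.inr (Sum.inl _), _ => 0
    | Sum.inr (Sum.inr _), Sum.inl _ => -1
    | Sum.inr (Sum.inr _), Sum.inr (Sum.inr (Sum.inr _)) => (Δ : ℤ)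
    | Sum.inr (Sum.inr _), _ => 0

/-- The right-hand side `b = (2·1_{Δ−1}, 1_{m−Δ}, 1)`. -/
def sparsityRhs (Δ : ℕ) : SparsityRow (Δ - 1) → ℤ :=
  Sum.elim (fun _ => 2) (Sum.elim (fun _ => 1) (fun _ => 1))

/-- The complete directed graph on `ν` nodes has `ν² - ν` arcs. -/
theorem card_completeArc_add (ν : ℕ) : Fintype.card (CompleteArc ν) + ν = ν ^ 2 := by
  have hcard : Fintype.card (CompleteArc ν) = ν * ν - ν := by
    rw [Fintype.card_of_subtype (Finset.univ : Finset (Fin ν)).offDiag (by simp),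
      Finset.offDiag_card]
    simp
  rw [hcard, pow_two, Nat.sub_add_cancel (Nat.le_mul_self ν)]

/-- Integers that pairwise differ by at most one and whose average is one
are all equal to one. -/
theorem eq_one_of_sum_eq_card {ι : Type*} [Fintype ι] {x : ι → ℤ}
    (hdiff : ∀ i j, i ≠ j → x i - x j ≤ 1) (hsum : ∑ i, x i = Fintype.card ι) (i : ι) :
    x i = 1 := by
  have hones : ∑ i, x i = ∑ _i : ι, (1 : ℤ) := by simp [hsum]
  have hle : ∀ i, x i ≤ 1 := by
    intro i
    by_contra! hi
    have hlt : ∑ _i : ι, (1 : ℤ) < ∑ i, x i := by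
      refine Finset.sum_lt_sum (fun j _ => ?_) ⟨i, Finset.mem_univ i, hi⟩
      rcases eq_or_ne i j with rfl | hij
      · exact hi.le
      · have := hdiff i j hij
        lia
    exact hlt.ne hones.symm
  exact (Finset.sum_eq_sum_iff_of_le fun i _ => hle i).mp hones i (Finset.mem_univ i)

theorem sparsityMatrix_mulVec_node (Δ : ℕ) (z : SparsityCol (Δ - 1) → ℤ) (i : Fin (Δ - 1)) :
    (sparsityMatrix Δ).mulVec z (Sum.inl i) = z (Sum.inl i) + z (Sum.inr (Sum.inl i)) := by
  simp [Matrix.mulVec, dotProduct, sparsityMatrix]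

theorem sparsityMatrix_mulVec_arc (Δ : ℕ) (z : SparsityCol (Δ - 1) → ℤ)
    (p : CompleteArc (Δ - 1)) :
    (sparsityMatrix Δ).mulVec z (Sum.inr (Sum.inl p)) =
      z (Sum.inl p.1.1) - z (Sum.inl p.1.2) + z (Sum.inr (Sum.inr (Sum.inl p))) := by
  simp [Matrix.mulVec, dotProduct, sparsityMatrix, sub_mul, Finset.sum_sub_distrib]

theorem sparsityMatrix_mulVec_last (Δ : ℕ) (z : SparsityCol (Δ - 1) → ℤ) :
    (sparsityMatrix Δ).mulVec z (Sum.inr (Sum.inr ())) =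
      Δ * z (Sum.inr (Sum.inr (Sum.inr ()))) - ∑ i, z (Sum.inl i) := by
  simp [Matrix.mulVec, dotProduct, sparsityMatrix]
  ring

/-- For `Δ ≥ 2`, with `m = (Δ−1)² + 1` and `n = (Δ−1)² + Δ`, the only
`z ∈ ℤ^n` with `Az = b` and `z ≥ 0` (for the block matrix `A` and right-hand side `b`
above) is the all-ones vector. -/
theorem unique_nonneg_solution (Δ : ℕ) (hΔ : 2 ≤ Δ) :
    Fintype.card (SparsityRow (Δ - 1)) = (Δ - 1) ^ 2 + 1 ∧
    Fintype.card (SparsityCol (Δ - 1)) = (Δ - 1) ^ 2 + Δ ∧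
    ∀ z : SparsityCol (Δ - 1) → ℤ,
      (sparsityMatrix Δ).mulVec z = sparsityRhs Δ → (∀ i, 0 ≤ z i) →
      z = fun _ => 1 := by
  have harcs := card_completeArc_add (Δ - 1)
  refine ⟨?_, ?_, fun z hz hpos => ?_⟩
  · simp only [Fintype.card_sum, Fintype.card_fin, Fintype.card_unit]
    lia
  · simp only [Fintype.card_sum, Fintype.card_fin, Fintype.card_unit]
    lia
  have hnode (i : Fin (Δ - 1)) : z (Sum.inl i) + z (Sum.inr (Sum.inl i)) = 2 :=
    (sparsityMatrix_mulVec_node Δ z i).symm.trans (congrFun hz _)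
  have harc (p : CompleteArc (Δ - 1)) :
      z (Sum.inl p.1.1) - z (Sum.inl p.1.2) + z (Sum.inr (Sum.inr (Sum.inl p))) = 1 :=
    (sparsityMatrix_mulVec_arc Δ z p).symm.trans (congrFun hz _)
  have hlast : Δ * z (Sum.inr (Sum.inr (Sum.inr ()))) - ∑ i, z (Sum.inl i) = 1 :=
    (sparsityMatrix_mulVec_last Δ z).symm.trans (congrFun hz _)
  have hle (i : Fin (Δ - 1)) : z (Sum.inl i) ≤ 2 := by
    linarith [hnode i, hpos (Sum.inr (Sum.inl i))]
  have hcast : ((Δ - 1 : ℕ) : ℤ) = Δ - 1 := by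
    push_cast [show 1 ≤ Δ by lia]
    rfl
  have hsum_nonneg : 0 ≤ ∑ i : Fin (Δ - 1), z (Sum.inl i) :=
    Finset.sum_nonneg fun i _ => hpos _
  have hsum_le : ∑ i : Fin (Δ - 1), z (Sum.inl i) ≤ 2 * (Δ - 1) := by
    calc ∑ i : Fin (Δ - 1), z (Sum.inl i) ≤ ∑ _i : Fin (Δ - 1), (2 : ℤ) :=
          Finset.sum_le_sum fun i _ => hle i
      _ = 2 * (Δ - 1) := by simp [hcast, mul_comm]
  -- `Δ` times the last coordinate lies in `[1, 2Δ - 1]`.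
  have hw : z (Sum.inr (Sum.inr (Sum.inr ()))) = 1 := by
    have hΔ' : (2 : ℤ) ≤ Δ := by exact_mod_cast hΔ
    apply le_antisymm
    · by_contra! h
      nlinarith
    · by_contra! h
      nlinarith
  have hx : ∀ i : Fin (Δ - 1), z (Sum.inl i) = 1 := by
    refine eq_one_of_sum_eq_card (fun i j hij => ?_) ?_
    · linarith [harc ⟨(i, j), hij⟩, hpos (Sum.inr (Sum.inr (Sum.inl ⟨(i, j), hij⟩)))]
    · rw [Fintype.card_fin, hcast]
      rw [hw] at hlast
      linarith
  funext c
  rcases c with i | i | p | _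
  · exact hx i
  · linarith [hnode i, hx i]
  · linarith [harc p, hx p.1.1, hx p.1.2]
  · exact hw
end
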